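/- Let d ≥ 3 be an integer. There exist constants C > 0 and C' > 0 such that for every μ ≥ 2, | 𝒩_B(μ) − 𝒲(μ) | ≤ 𝒲(μ + C μ^{−3/7}) − 𝒲(μ − C μ^{−3/7}) + C' μ^{d−2+4/7}, where 𝒩_B(μ) = Σ_{n=0}^∞ m_n^d · #{x ∈ (0, μ] : J_{n+d/2−1}(x) = 0} (a finite sum). -/

import Mathlib

open Real MeasureTheory Set

/-- The Bessel function of the first kind of order `ν ≥ 0`, for `x > 0`, via the
integral representation. -/
noncomputable def besselJ (ν x : ℝ) : ℝ :=
  (1 / π) * (∫ θ in (0:ℝ)..π, Real.cos (x * Real.sin θ - ν * θ)) -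
    (Real.sin (ν * π) / π) * ∫ t in Set.Ioi (0:ℝ), Real.exp (-x * Real.sinh t - ν * t)

/-- The function `g(t) = (√(1-t²) - t arccos t)/π`. -/
noncomputable def gfun (t : ℝ) : ℝ := (Real.sqrt (1 - t ^ 2) - t * Real.arccos t) / π

/-- The lattice count `𝒲_l(μ) = #{(n,k) ∈ ℤ×ℤ : n ≥ l, k ≥ 1, n + d/2 - 1 ≤ μ,
k - 1/4 ≤ μ g((n + d/2 - 1)/μ)}`. -/
noncomputable def latticeW (d l : ℕ) (μ : ℝ) : ℕ :=
  {p : ℤ × ℤ | (l : ℤ) ≤ p.1 ∧ 1 ≤ p.2 ∧ (p.1 : ℝ) + (d : ℝ) / 2 - 1 ≤ μ ∧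
    (p.2 : ℝ) - 1 / 4 ≤ μ * gfun (((p.1 : ℝ) + (d : ℝ) / 2 - 1) / μ)}.ncard

/-- The multiplicity `m_n^d = C(n+d-1, d-1) - C(n+d-3, d-1)`. -/
def multB (d n : ℕ) : ℕ := Nat.choose (n + d - 1) (d - 1) - Nat.choose (n + d - 3) (d - 1)

/-- The difference `m_l^d - m_{l-1}^d` (with `m_{-1}^d = 0`). -/
def multBdiff (d l : ℕ) : ℤ := (multB d l : ℤ) - if l = 0 then 0 else (multB d (l - 1) : ℤ)

/-- The number of zeros of `J_ν` in `(0, μ]`. -/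
noncomputable def zcount (ν μ : ℝ) : ℕ := {x : ℝ | 0 < x ∧ x ≤ μ ∧ besselJ ν x = 0}.ncard

/-- The weighted lattice count `𝒲(μ) = Σ_l (m_l^d - m_{l-1}^d) 𝒲_l(μ)`. -/
noncomputable def latticeWtot (d : ℕ) (μ : ℝ) : ℝ :=
  ∑' l : ℕ, (multBdiff d l : ℝ) * (latticeW d l μ : ℝ)

noncomputable def bE1 (ν x : ℝ) : ℝ := ∫ θ in (0:ℝ)..π, Real.cos (x * Real.sin θ - ν * θ)
noncomputable def bE2 (ν x : ℝ) : ℝ := ∫ t in Set.Ioi (0:ℝ), Real.exp (-x * Real.sinh t - ν * t)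

lemma besselJ_eq (ν x : ℝ) :
    besselJ ν x = (1 / π) * bE1 ν x - (Real.sin (ν * π) / π) * bE2 ν x := rfl

lemma bessel_exp_bound (ν x t : ℝ) (hx : 0 < x) (ht : 0 ≤ t) :
    Real.exp (-x * Real.sinh t - ν * t) ≤
      Real.exp ((|ν| + 1) ^ 2 / x) * Real.exp (-1 * t) := by
  rw [← Real.exp_add]
  apply Real.exp_le_exp.mpr
  have h1 : t ^ 2 / 4 ≤ Real.sinh t := by
    rw [Real.sinh_eq]
    have h2 := Real.quadratic_le_exp_of_nonneg ht
    have h3 : Real.exp (-t) ≤ 1 := Real.exp_le_one_iff.mpr (by linarith)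
    nlinarith [sq_nonneg t]
  have h4 : -ν * t ≤ |ν| * t := mul_le_mul_of_nonneg_right (neg_le_abs ν) ht
  have h5 : x * (t ^ 2 / 4) ≤ x * Real.sinh t := mul_le_mul_of_nonneg_left h1 hx.le
  have h6 : (|ν| + 1) * t ≤ (|ν| + 1) ^ 2 / x + x * (t ^ 2 / 4) := by
    rw [← sub_nonneg]
    have : (|ν| + 1) ^ 2 / x + x * (t ^ 2 / 4) - (|ν| + 1) * t =
        ((|ν| + 1) - x * t / 2) ^ 2 / x := by field_simp; ring
    rw [this]; positivity
  linarith

lemma bessel_exp_integrable (ν x : ℝ) (hx : 0 < x) :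
    IntegrableOn (fun t => Real.exp (-x * Real.sinh t - ν * t)) (Ioi 0) := by
  have h := (integrableOn_exp_mul_Ioi (a := -1) (by norm_num) 0).const_mul
    (Real.exp ((|ν| + 1) ^ 2 / x))
  refine Integrable.mono' h ?_ ?_
  · apply Continuous.aestronglyMeasurable
    fun_prop
  · refine (ae_restrict_iff' measurableSet_Ioi).mpr (Filter.Eventually.of_forall ?_)
    intro t ht
    rw [Real.norm_eq_abs, abs_of_pos (Real.exp_pos _)]
    exact bessel_exp_bound ν x t hx (le_of_lt ht)

lemma bE2_hasDerivAt (ν x : ℝ) (hx : 0 < x) :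
    HasDerivAt (bE2 ν) (-(bE2 (ν - 1) x - bE2 (ν + 1) x) / 2) x := by
  have key := (hasDerivAt_integral_of_dominated_loc_of_deriv_le (μ := volume.restrict (Ioi (0:ℝ)))
    (F := fun x t => Real.exp (-x * Real.sinh t - ν * t))
    (F' := fun x t => -Real.sinh t * Real.exp (-x * Real.sinh t - ν * t))
    (bound := fun t => Real.exp (-(x/2) * Real.sinh t - (ν - 1) * t)) (x₀ := x)
    (s := Ioi (x/2)) (Ioi_mem_nhds (by linarith)) ?_ ?_ ?_ ?_ ?_ ?_).2
  · refine HasDerivAt.congr_deriv (key) (Eq.symm ?_)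
    have i1 := bessel_exp_integrable (ν - 1) x hx
    have i2 := bessel_exp_integrable (ν + 1) x hx
    unfold bE2
    rw [← integral_sub i1 i2, ← integral_neg, ← integral_div]
    congr 1
    ext t
    rw [Real.sinh_eq,
      show -x * ((Real.exp t - Real.exp (-t)) / 2) - (ν - 1) * t
        = (-x * ((Real.exp t - Real.exp (-t)) / 2) - ν * t) + t by ring,
      show -x * ((Real.exp t - Real.exp (-t)) / 2) - (ν + 1) * t
        = (-x * ((Real.exp t - Real.exp (-t)) / 2) - ν * t) + (-t) by ring,
      Real.exp_add, Real.exp_add _ (-t)]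
    ring
  · refine Filter.Eventually.of_forall fun y => ?_
    apply Continuous.aestronglyMeasurable
    fun_prop
  · exact bessel_exp_integrable ν x hx
  · apply Continuous.aestronglyMeasurable
    fun_prop
  · refine (ae_restrict_iff' measurableSet_Ioi).mpr (Filter.Eventually.of_forall ?_)
    intro t ht y hy
    have ht' : (0:ℝ) < t := ht
    have hy' : x / 2 < y := hy
    have hs : 0 ≤ Real.sinh t := Real.sinh_nonneg_iff.mpr ht'.le
    rw [norm_mul, norm_neg, Real.norm_eq_abs, Real.norm_eq_abs, abs_of_pos (Real.exp_pos _),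
      abs_of_nonneg hs]
    have h1 : Real.sinh t ≤ Real.exp t := by
      rw [Real.sinh_eq]; linarith [Real.exp_pos t, Real.exp_pos (-t)]
    calc Real.sinh t * Real.exp (-y * Real.sinh t - ν * t)
        ≤ Real.exp t * Real.exp (-(x/2) * Real.sinh t - ν * t) := by
          apply mul_le_mul h1 _ (Real.exp_pos _).le (Real.exp_pos _).le
          apply Real.exp_le_exp.mpr
          nlinarith
      _ = _ := by rw [← Real.exp_add]; congr 1; ring
  · exact bessel_exp_integrable (ν - 1) (x/2) (by linarith)
  · refine Filter.Eventually.of_forall fun t y _ => ?_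
    have : HasDerivAt (fun y => -y * Real.sinh t - ν * t) (-Real.sinh t) y := by
      have := (((hasDerivAt_id y).neg.mul_const (Real.sinh t)).sub_const (ν * t))
      simpa using this
    refine HasDerivAt.congr_deriv (this.exp) ?_
    ring

lemma bE1_hasDerivAt (ν x : ℝ) :
    HasDerivAt (bE1 ν) ((bE1 (ν - 1) x - bE1 (ν + 1) x) / 2) x := by
  have key := (intervalIntegral.hasDerivAt_integral_of_dominated_loc_of_deriv_le (μ := volume)
    (a := 0) (b := π)
    (F := fun x θ => Real.cos (x * Real.sin θ - ν * θ))
    (F' := fun x θ => -Real.sin θ * Real.sin (x * Real.sin θ - ν * θ))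
    (bound := fun _ => 1) (x₀ := x)
    (s := univ) Filter.univ_mem ?_ ?_ ?_ ?_ ?_ ?_).2
  · refine HasDerivAt.congr_deriv (key) (Eq.symm ?_)
    unfold bE1
    rw [← intervalIntegral.integral_sub, ← intervalIntegral.integral_div]
    · congr 1
      ext θ
      rw [show x * Real.sin θ - (ν - 1) * θ = (x * Real.sin θ - ν * θ) + θ by ring,
        show x * Real.sin θ - (ν + 1) * θ = (x * Real.sin θ - ν * θ) - θ by ring,
        Real.cos_add _ θ, Real.cos_sub _ θ]
      ring
    all_goals
      apply Continuous.intervalIntegrable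
      fun_prop
  · refine Filter.Eventually.of_forall fun y => ?_
    apply Continuous.aestronglyMeasurable
    fun_prop
  · apply Continuous.intervalIntegrable
    fun_prop
  · apply Continuous.aestronglyMeasurable
    fun_prop
  · refine Filter.Eventually.of_forall fun t _ y _ => ?_
    rw [norm_mul, norm_neg, Real.norm_eq_abs, Real.norm_eq_abs]
    exact mul_le_one₀ (Real.abs_sin_le_one _) (abs_nonneg _) (Real.abs_sin_le_one _)
  · exact intervalIntegrable_const
  · refine Filter.Eventually.of_forall fun t _ y _ => ?_
    have : HasDerivAt (fun y => y * Real.sin t - ν * t) (Real.sin t) y := by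
      have := (((hasDerivAt_id y).mul_const (Real.sin t)).sub_const (ν * t))
      simpa using this
    refine HasDerivAt.congr_deriv (this.cos) ?_
    ring

lemma sin_sub_one_pi (ν : ℝ) : Real.sin ((ν - 1) * π) = -Real.sin (ν * π) := by
  rw [sub_mul, one_mul, Real.sin_sub_pi]
lemma sin_add_one_pi (ν : ℝ) : Real.sin ((ν + 1) * π) = -Real.sin (ν * π) := by
  rw [add_mul, one_mul, Real.sin_add_pi]

lemma besselJ_hasDerivAt' (ν x : ℝ) (hx : 0 < x) :
    HasDerivAt (besselJ ν) ((besselJ (ν - 1) x - besselJ (ν + 1) x) / 2) x := by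
  have h := ((bE1_hasDerivAt ν x).const_mul (1 / π)).sub
    ((bE2_hasDerivAt ν x hx).const_mul (Real.sin (ν * π) / π))
  refine HasDerivAt.congr_deriv (h) ?_
  rw [besselJ_eq, besselJ_eq, sin_sub_one_pi, sin_add_one_pi]
  ring

lemma bE2_rec (ν x : ℝ) (hx : 0 < x) :
    x * ((bE2 (ν - 1) x + bE2 (ν + 1) x) / 2) + ν * bE2 ν x = 1 := by
  have i0 := bessel_exp_integrable ν x hx
  have i1 := bessel_exp_integrable (ν - 1) x hx
  have i2 := bessel_exp_integrable (ν + 1) x hx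
  have hd : ∀ t ∈ Ioi (0:ℝ), HasDerivAt (fun t => -Real.exp (-x * Real.sinh t - ν * t))
      ((x * Real.cosh t + ν) * Real.exp (-x * Real.sinh t - ν * t)) t := by
    intro t _
    have h1 : HasDerivAt (fun t => -x * Real.sinh t - ν * t) (-x * Real.cosh t - ν) t := by
      exact (((Real.hasDerivAt_sinh t).const_mul (-x)).sub ((hasDerivAt_id t).const_mul ν)).congr_deriv (by simp)
    refine HasDerivAt.congr_deriv (h1.exp.neg) ?_
    ring
  have hcont : ContinuousWithinAt (fun t => -Real.exp (-x * Real.sinh t - ν * t)) (Ici 0) 0 := by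
    apply Continuous.continuousWithinAt
    fun_prop
  have heq : ∀ t, (x * Real.cosh t + ν) * Real.exp (-x * Real.sinh t - ν * t) =
      x / 2 * (Real.exp (-x * Real.sinh t - (ν - 1) * t) +
        Real.exp (-x * Real.sinh t - (ν + 1) * t)) + ν * Real.exp (-x * Real.sinh t - ν * t) := by
    intro t
    rw [show -x * Real.sinh t - (ν - 1) * t = (-x * Real.sinh t - ν * t) + t by ring,
      show -x * Real.sinh t - (ν + 1) * t = (-x * Real.sinh t - ν * t) + (-t) by ring,
      Real.exp_add, Real.exp_add _ (-t), Real.cosh_eq]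
    ring
  have hInt0 : IntegrableOn (fun t => (x * Real.cosh t + ν) *
      Real.exp (-x * Real.sinh t - ν * t)) (Ioi 0) := by
    simp_rw [heq]
    exact ((i1.add i2).const_mul (x/2)).add (i0.const_mul ν)
  have hlim : Filter.Tendsto (fun t => -Real.exp (-x * Real.sinh t - ν * t)) Filter.atTop (nhds 0) := by
    have h0 : Filter.Tendsto (fun t : ℝ => Real.exp ((|ν| + 1) ^ 2 / x) * Real.exp (-1 * t))
        Filter.atTop (nhds 0) := by
      have : Filter.Tendsto (fun t : ℝ => Real.exp (-1 * t)) Filter.atTop (nhds 0) := by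
        simpa using Real.tendsto_exp_neg_atTop_nhds_zero
      simpa using this.const_mul (Real.exp ((|ν| + 1) ^ 2 / x))
    have h1 : Filter.Tendsto (fun t => Real.exp (-x * Real.sinh t - ν * t)) Filter.atTop (nhds 0) := by
      refine squeeze_zero' (Filter.Eventually.of_forall fun t => (Real.exp_pos _).le) ?_ h0
      filter_upwards [Filter.eventually_ge_atTop 0] with t ht
      exact bessel_exp_bound ν x t hx ht
    simpa using h1.neg
  have := integral_Ioi_of_hasDerivAt_of_tendsto hcont hd hInt0 hlim
  simp_rw [heq] at this
  rw [integral_add, integral_const_mul, integral_const_mul, integral_add] at this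
  · unfold bE2
    simp at this ⊢
    linarith
  · exact i1
  · exact i2
  · exact (i1.add i2).const_mul (x/2)
  · exact i0.const_mul ν

lemma bE1_rec (ν x : ℝ) :
    x * ((bE1 (ν - 1) x + bE1 (ν + 1) x) / 2) - ν * bE1 ν x = -Real.sin (ν * π) := by
  have hd : ∀ t ∈ uIcc (0:ℝ) π, HasDerivAt (fun t => Real.sin (x * Real.sin t - ν * t))
      ((x * Real.cos t - ν) * Real.cos (x * Real.sin t - ν * t)) t := by
    intro t _
    have h1 : HasDerivAt (fun t => x * Real.sin t - ν * t) (x * Real.cos t - ν) t := by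
      exact (((Real.hasDerivAt_sin t).const_mul x).sub ((hasDerivAt_id t).const_mul ν)).congr_deriv (by simp)
    refine HasDerivAt.congr_deriv (h1.sin) ?_
    ring
  have := intervalIntegral.integral_eq_sub_of_hasDerivAt hd (by
    apply Continuous.intervalIntegrable
    fun_prop)
  have heq : ∀ t, (x * Real.cos t - ν) * Real.cos (x * Real.sin t - ν * t) =
      x / 2 * (Real.cos (x * Real.sin t - (ν - 1) * t) +
        Real.cos (x * Real.sin t - (ν + 1) * t)) - ν * Real.cos (x * Real.sin t - ν * t) := by
    intro t
    rw [show x * Real.sin t - (ν - 1) * t = (x * Real.sin t - ν * t) + t by ring,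
      show x * Real.sin t - (ν + 1) * t = (x * Real.sin t - ν * t) - t by ring,
      Real.cos_add _ t, Real.cos_sub _ t]
    ring
  simp_rw [heq] at this
  rw [intervalIntegral.integral_sub, intervalIntegral.integral_const_mul,
    intervalIntegral.integral_const_mul, intervalIntegral.integral_add] at this
  · unfold bE1
    simp at this ⊢
    linarith
  all_goals
    apply Continuous.intervalIntegrable
    fun_prop

lemma besselJ_rec (ν x : ℝ) (hx : 0 < x) :
    x * (besselJ (ν - 1) x + besselJ (ν + 1) x) = 2 * ν * besselJ ν x := by
  rw [besselJ_eq, besselJ_eq, besselJ_eq, sin_sub_one_pi, sin_add_one_pi]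
  have h1 := bE1_rec ν x
  have h2 := bE2_rec ν x hx
  have h3 : x * (bE1 (ν - 1) x + bE1 (ν + 1) x) = 2 * (ν * bE1 ν x - Real.sin (ν * π)) := by
    linarith
  have h4 : x * (bE2 (ν - 1) x + bE2 (ν + 1) x) = 2 * (1 - ν * bE2 ν x) := by linarith
  calc _ = (1 / π) * (x * (bE1 (ν - 1) x + bE1 (ν + 1) x)) +
      Real.sin (ν * π) / π * (x * (bE2 (ν - 1) x + bE2 (ν + 1) x)) := by ring
    _ = _ := by rw [h3, h4]; ring

lemma besselJ_deriv_up (ν x : ℝ) (hx : 0 < x) :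
    HasDerivAt (besselJ ν) (ν / x * besselJ ν x - besselJ (ν + 1) x) x := by
  refine HasDerivAt.congr_deriv (besselJ_hasDerivAt' ν x hx) ?_
  have h := besselJ_rec ν x hx
  field_simp
  linarith

lemma besselJ_deriv_down (ν x : ℝ) (hx : 0 < x) :
    HasDerivAt (besselJ ν) (besselJ (ν - 1) x - ν / x * besselJ ν x) x := by
  refine HasDerivAt.congr_deriv (besselJ_hasDerivAt' ν x hx) ?_
  have h := besselJ_rec ν x hx
  field_simp
  linarith

/-- The derivative of the Bessel function times the argument. -/
noncomputable def besselV (ν x : ℝ) : ℝ := ν * besselJ ν x - x * besselJ (ν + 1) x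

lemma besselJ_hasDerivAt (ν x : ℝ) (hx : 0 < x) :
    HasDerivAt (besselJ ν) (besselV ν x / x) x := by
  refine HasDerivAt.congr_deriv (besselJ_deriv_up ν x hx) ?_
  unfold besselV
  field_simp

lemma besselV_hasDerivAt (ν x : ℝ) (hx : 0 < x) :
    HasDerivAt (besselV ν) (-(x ^ 2 - ν ^ 2) / x * besselJ ν x) x := by
  have h1 := (besselJ_deriv_up ν x hx).const_mul ν
  have h2 := (hasDerivAt_id x).mul (besselJ_deriv_down (ν + 1) x hx)
  refine HasDerivAt.congr_deriv (h1.sub h2) ?_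
  simp only [add_sub_cancel_right, id]
  field_simp
  ring

lemma besselJ_bounded (ν : ℝ) (hν : 0 ≤ ν) : ∃ C : ℝ, 0 < C ∧ ∀ x, 0 < x → |besselJ ν x| ≤ C := by
  have h1 : ∀ x, |bE1 ν x| ≤ π := by
    intro x
    unfold bE1
    have := intervalIntegral.norm_integral_le_of_norm_le_const (a := 0) (b := π) (C := 1)
      (f := fun θ => Real.cos (x * Real.sin θ - ν * θ))
      (fun θ _ => by rw [Real.norm_eq_abs]; exact Real.abs_cos_le_one _)
    rw [Real.norm_eq_abs] at this
    simpa [abs_of_pos Real.pi_pos] using this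
  have h1' : ∀ x, |1 / π * bE1 ν x| ≤ 1 := by
    intro x
    rw [abs_mul, abs_of_pos (by positivity)]
    have := h1 x
    have hp := Real.pi_pos
    rw [one_div, inv_mul_le_iff₀ hp]
    linarith
  rcases hν.eq_or_lt with h0 | h0
  · refine ⟨1, one_pos, fun x hx => ?_⟩
    rw [besselJ_eq, ← h0]
    have := h1' x
    rw [← h0] at this
    simpa using this
  · refine ⟨1 + 1 / (π * ν), by positivity, fun x hx => ?_⟩
    have h2 : |bE2 ν x| ≤ 1 / ν := by
      have i0 := bessel_exp_integrable ν x hx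
      have hnn : 0 ≤ bE2 ν x := integral_nonneg fun t => (Real.exp_pos _).le
      rw [abs_of_nonneg hnn]
      have h3 : ∫ t in Ioi (0:ℝ), Real.exp (-ν * t) = 1 / ν := by
        rw [integral_exp_mul_Ioi (by linarith)]
        simp
      rw [← h3]
      refine setIntegral_mono_on i0 (integrableOn_exp_mul_Ioi (by linarith) 0) measurableSet_Ioi ?_
      intro t ht
      apply Real.exp_le_exp.mpr
      have hs : 0 ≤ Real.sinh t := Real.sinh_nonneg_iff.mpr (le_of_lt ht)
      nlinarith [mul_nonneg hx.le hs]
    rw [besselJ_eq]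
    refine (abs_sub _ _).trans ?_
    gcongr
    · exact h1' x
    · rw [abs_mul, abs_div, abs_of_pos Real.pi_pos]
      calc |Real.sin (ν * π)| / π * |bE2 ν x| ≤ 1 / π * (1 / ν) := by
            gcongr
            exact Real.abs_sin_le_one _
        _ = 1 / (π * ν) := by field_simp

lemma fresnel_tail (b : ℂ) (hb : 0 ≤ b.re) (hb0 : b ≠ 0) (T T' : ℝ) (hT : 0 < T) (hTT : T ≤ T') :
    ‖∫ w in T..T', Complex.exp (-b * (w:ℂ) ^ 2)‖ ≤ 1 / (‖b‖ * T) := by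
  have hbn : 0 < ‖b‖ := norm_pos_iff.mpr hb0
  have hT' : 0 < T' := hT.trans_le hTT
  have hexp : ∀ w : ℝ, ‖Complex.exp (-b * (w:ℂ) ^ 2)‖ ≤ 1 := by
    intro w
    rw [Complex.norm_exp, Real.exp_le_one_iff]
    have : (-b * (w:ℂ) ^ 2).re = -(b.re * w ^ 2) := by
      rw [← Complex.ofReal_pow, neg_mul, Complex.neg_re, Complex.re_mul_ofReal]
    rw [this]
    have := mul_nonneg hb (sq_nonneg w)
    linarith
  have hpos : ∀ w ∈ uIcc T T', 0 < w := by
    intro w hw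
    rw [uIcc_of_le hTT] at hw
    exact hT.trans_le hw.1
  have hd : ∀ w ∈ uIcc T T', HasDerivAt (fun w : ℝ => -Complex.exp (-b * (w:ℂ) ^ 2) / (2 * b * w))
      (Complex.exp (-b * (w:ℂ) ^ 2) + Complex.exp (-b * (w:ℂ) ^ 2) / (2 * b * (w:ℂ) ^ 2)) w := by
    intro w hw
    have hw0 : (w:ℂ) ≠ 0 := by exact_mod_cast (hpos w hw).ne'
    have h1 : HasDerivAt (fun w : ℂ => -Complex.exp (-b * w ^ 2) / (2 * b * w))
        ((-(Complex.exp (-b * (w:ℂ) ^ 2) * (-b * (2 * (w:ℂ)))) * (2 * b * (w:ℂ)) -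
          -Complex.exp (-b * (w:ℂ) ^ 2) * (2 * b)) / (2 * b * (w:ℂ)) ^ 2) (w:ℂ) := by
      have h2 : HasDerivAt (fun w : ℂ => -b * w ^ 2) (-b * (2 * (w:ℂ))) (w:ℂ) :=
        ((hasDerivAt_pow 2 (w:ℂ)).const_mul (-b)).congr_deriv (by simp)
      have h3 : HasDerivAt (fun w : ℂ => 2 * b * w) (2 * b) (w:ℂ) :=
        ((hasDerivAt_id (w:ℂ)).const_mul (2 * b)).congr_deriv (by simp)
      exact h2.cexp.neg.div h3 (by simp [hb0, hw0])
    refine HasDerivAt.congr_deriv h1.comp_ofReal ?_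
    field_simp
    ring
  have hInt0 : ContinuousOn (fun w : ℝ => Complex.exp (-b * (w:ℂ) ^ 2) / (2 * b * (w:ℂ) ^ 2))
      (uIcc T T') := by
    apply ContinuousOn.div
    · fun_prop
    · fun_prop
    · intro w hw
      have hw0 : (w:ℂ) ≠ 0 := by exact_mod_cast (hpos w hw).ne'
      simp [hb0, hw0]
  have hi1 : IntervalIntegrable (fun w : ℝ => Complex.exp (-b * (w:ℂ) ^ 2)) volume T T' := by
    apply Continuous.intervalIntegrable; fun_prop
  have key := intervalIntegral.integral_eq_sub_of_hasDerivAt hd (hi1.add hInt0.intervalIntegrable)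
  rw [intervalIntegral.integral_add hi1 hInt0.intervalIntegrable] at key
  have hR : ‖∫ w in T..T', Complex.exp (-b * (w:ℂ) ^ 2) / (2 * b * (w:ℂ) ^ 2)‖ ≤
      1 / (2 * ‖b‖) * (1 / T - 1 / T') := by
    have hfi : ∫ w in T..T', 1 / (2 * ‖b‖) * (w ^ 2)⁻¹ = 1 / (2 * ‖b‖) * (1 / T - 1 / T') := by
      rw [intervalIntegral.integral_const_mul]
      congr 1
      have hd2 : ∀ w ∈ uIcc T T', HasDerivAt (fun w : ℝ => -w⁻¹) ((w^2)⁻¹) w := by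
        intro w hw
        refine HasDerivAt.congr_deriv (hasDerivAt_inv (hpos w hw).ne').neg ?_
        simp
      rw [intervalIntegral.integral_eq_sub_of_hasDerivAt hd2]
      · simp; ring
      · apply ContinuousOn.intervalIntegrable
        apply ContinuousOn.inv₀ (by fun_prop)
        intro w hw
        have := hpos w hw
        positivity
    rw [← hfi]
    apply intervalIntegral.norm_integral_le_of_norm_le hTT
    · refine Filter.Eventually.of_forall fun w hw => ?_
      have hw0 : 0 < w := hT.trans hw.1
      rw [norm_div, norm_mul, norm_mul, norm_pow, Complex.norm_real, Real.norm_eq_abs,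
        abs_of_pos hw0]
      simp only [Complex.norm_ofNat]
      rw [div_eq_mul_inv, mul_inv, ← mul_assoc]
      rw [one_div]
      have := hexp w
      gcongr
      calc _ ≤ 1 * (2 * ‖b‖)⁻¹ := by gcongr
        _ = _ := one_mul _
    · apply ContinuousOn.intervalIntegrable
      apply ContinuousOn.mul (by fun_prop)
      apply ContinuousOn.inv₀ (by fun_prop)
      intro w hw
      have := hpos w hw
      positivity
  have hG : ∀ w : ℝ, 0 < w → ‖-Complex.exp (-b * (w:ℂ) ^ 2) / (2 * b * w)‖ ≤ 1 / (2 * ‖b‖) * (1 / w) := by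
    intro w hw
    rw [norm_div, norm_neg, norm_mul, norm_mul, Complex.norm_real, Real.norm_eq_abs, abs_of_pos hw]
    simp only [Complex.norm_ofNat]
    calc _ ≤ 1 / (2 * ‖b‖ * w) := by gcongr; exact hexp w
      _ = _ := by field_simp
  have e1 : ∫ w in T..T', Complex.exp (-b * (w:ℂ) ^ 2) =
      -Complex.exp (-b * (T':ℂ) ^ 2) / (2 * b * T') - -Complex.exp (-b * (T:ℂ) ^ 2) / (2 * b * T) -
      ∫ w in T..T', Complex.exp (-b * (w:ℂ) ^ 2) / (2 * b * (w:ℂ) ^ 2) := by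
    rw [← key]; ring
  rw [e1]
  calc _ ≤ 1 / (2 * ‖b‖) * (1 / T') + 1 / (2 * ‖b‖) * (1 / T) + 1 / (2 * ‖b‖) * (1 / T - 1 / T') := by
        refine (norm_sub_le _ _).trans (add_le_add ((norm_sub_le _ _).trans (add_le_add ?_ ?_)) hR)
        · exact hG T' hT'
        · exact hG T hT
    _ = 1 / (‖b‖ * T) := by field_simp; ring

noncomputable def fresnelA (T : ℝ) : ℂ := ∫ w in (0:ℝ)..T, Complex.exp (-(Complex.I / 2) * (w:ℂ) ^ 2)
noncomputable def fresnelL : ℂ := (√(π / 2) : ℝ) * Complex.exp (-(π / 4 : ℝ) * Complex.I)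

lemma fresnel_val : ((π:ℂ) / (Complex.I / 2)) ^ (1 / 2 : ℂ) / 2 = fresnelL := by
  have h1 : (π:ℂ) / (Complex.I / 2) = (2 * fresnelL) ^ 2 := by
    unfold fresnelL
    rw [mul_pow, mul_pow, ← Complex.exp_nat_mul, ← Complex.ofReal_pow, Real.sq_sqrt (by positivity)]
    have : Complex.exp (((2:ℕ):ℂ) * (-(π / 4 : ℝ) * Complex.I)) = -Complex.I := by
      have : ((2:ℕ):ℂ) * (-(π / 4 : ℝ) * Complex.I) = -(π / 2 * Complex.I) := by push_cast; ring
      rw [this, Complex.exp_neg, Complex.exp_pi_div_two_mul_I]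
      simp
    rw [this]
    have hI : Complex.I ≠ 0 := Complex.I_ne_zero
    field_simp
    push_cast
    ring_nf
    simp
  have h2 : 0 < (2 * fresnelL).re := by
    unfold fresnelL
    have : (2 * ((√(π / 2) : ℝ) * Complex.exp (-(π / 4 : ℝ) * Complex.I))).re =
        2 * (√(π/2) * Real.cos (π/4)) := by
      rw [show (-(π / 4 : ℝ) * Complex.I : ℂ) = ((-(π/4) : ℝ) : ℂ) * Complex.I by push_cast; ring]
      rw [show (2:ℂ) = ((2:ℝ):ℂ) by norm_cast, Complex.re_ofReal_mul, Complex.re_ofReal_mul,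
        Complex.exp_ofReal_mul_I_re, Real.cos_neg]
    rw [this]
    have : 0 < Real.cos (π/4) := by rw [Real.cos_pi_div_four]; positivity
    positivity
  rw [h1, one_div, Complex.sq_cpow_two_inv h2]
  ring

lemma fresnelA_bound (T : ℝ) (hT : 0 < T) : ‖fresnelA T - fresnelL‖ ≤ 2 / T := by
  let b : ℝ → ℂ := fun ε => (ε:ℂ) + Complex.I / 2
  have hbre : ∀ ε, (b ε).re = ε := by intro ε; simp [b]
  have hbim : ∀ ε, (b ε).im = 1 / 2 := by intro ε; simp [b]
  have hb1 : ∀ ε, 1 / 2 ≤ ‖b ε‖ := by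
    intro ε
    have := Complex.abs_im_le_norm (b ε)
    rw [hbim] at this
    norm_num at this ⊢
    linarith
  have hb0 : ∀ ε, b ε ≠ 0 := by
    intro ε h
    have := hb1 ε
    rw [h] at this
    norm_num at this
  have h1 : ∀ ε > 0, ‖(∫ w in (0:ℝ)..T, Complex.exp (-(b ε) * (w:ℂ) ^ 2)) -
      ((π:ℂ) / (b ε)) ^ (1 / 2 : ℂ) / 2‖ ≤ 2 / T := by
    intro ε hε
    have hre : 0 < (b ε).re := by rw [hbre]; exact hε
    have hi := integrable_cexp_neg_mul_sq hre
    have ht := intervalIntegral_tendsto_integral_Ioi (f := fun w : ℝ => Complex.exp (-(b ε) * (w:ℂ) ^ 2))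
      0 hi.integrableOn Filter.tendsto_id
    rw [integral_gaussian_complex_Ioi hre] at ht
    have ht2 := (tendsto_const_nhds (x := ∫ w in (0:ℝ)..T, Complex.exp (-(b ε) * (w:ℂ) ^ 2))).sub ht
    refine le_of_tendsto ht2.norm ?_
    filter_upwards [Filter.eventually_ge_atTop T] with T' hT'
    have ii : ∀ p q, IntervalIntegrable (fun w : ℝ => Complex.exp (-(b ε) * (w:ℂ) ^ 2)) volume p q :=
      fun p q => by apply Continuous.intervalIntegrable; fun_prop
    simp only [id]
    rw [intervalIntegral.integral_interval_sub_left (ii _ _) (ii _ _), intervalIntegral.integral_symm,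
      norm_neg]
    refine (fresnel_tail (b ε) hre.le (hb0 ε) T T' hT hT').trans ?_
    have := hb1 ε
    rw [div_le_div_iff₀ (by positivity) hT]
    nlinarith
  have hc1 : Filter.Tendsto (fun ε : ℝ => ∫ w in (0:ℝ)..T, Complex.exp (-(b ε) * (w:ℂ) ^ 2))
      (nhdsWithin 0 (Ioi 0)) (nhds (fresnelA T)) := by
    have : Continuous (fun ε : ℝ => ∫ w in (0:ℝ)..T, Complex.exp (-(b ε) * (w:ℂ) ^ 2)) := by
      apply intervalIntegral.continuous_parametric_intervalIntegral_of_continuous'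
      simp only [b]
      fun_prop
    have h := (this.tendsto 0).mono_left (nhdsWithin_le_nhds (s := Ioi 0))
    simpa [fresnelA, b] using h
  have hc2 : Filter.Tendsto (fun ε : ℝ => ((π:ℂ) / (b ε)) ^ (1 / 2 : ℂ) / 2)
      (nhdsWithin 0 (Ioi 0)) (nhds fresnelL) := by
    rw [← fresnel_val]
    have hcont : ContinuousAt (fun ε : ℝ => ((π:ℂ) / (b ε)) ^ (1 / 2 : ℂ) / 2) 0 := by
      apply ContinuousAt.div_const
      have hq : ContinuousAt (fun ε : ℝ => (π:ℂ) / (b ε)) 0 := by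
        apply ContinuousAt.div continuousAt_const
        · apply Continuous.continuousAt; simp only [b]; fun_prop
        · exact hb0 0
      refine ContinuousAt.comp (f := fun ε : ℝ => (π:ℂ) / (b ε)) (g := fun z : ℂ => z ^ (1/2:ℂ)) ?_ hq
      apply continuousAt_cpow_const
      right
      simp [b, Complex.div_im, Real.pi_ne_zero]
    have h := hcont.tendsto.mono_left (nhdsWithin_le_nhds (s := Ioi 0))
    simpa [b] using h
  refine le_of_tendsto (hc1.sub hc2).norm ?_
  filter_upwards [self_mem_nhdsWithin] with ε hε
  exact h1 ε hε

lemma fresnelA_tendsto : Filter.Tendsto fresnelA Filter.atTop (nhds fresnelL) := by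
  rw [tendsto_iff_norm_sub_tendsto_zero]
  refine squeeze_zero' (Filter.Eventually.of_forall fun _ => norm_nonneg _) ?_
    (Filter.Tendsto.const_div_atTop Filter.tendsto_id (2:ℝ))
  filter_upwards [Filter.eventually_gt_atTop 0] with T hT using fresnelA_bound T hT

noncomputable def statE (x s : ℝ) : ℂ := Complex.exp (((-(x * (1 - Real.cos s)) : ℝ) : ℂ) * Complex.I)

noncomputable def statK (ν x : ℝ) : ℂ :=
  ∫ s in (0:ℝ)..(π/2), statE x s * ((Real.cos (ν * s) : ℝ) : ℂ)

lemma statE_cont (x : ℝ) : Continuous (statE x) := by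
  unfold statE; fun_prop

lemma statE_norm (x s : ℝ) : ‖statE x s‖ = 1 := Complex.norm_exp_ofReal_mul_I _

lemma statK_half (x : ℝ) (hx : 0 < x) : ((√x : ℝ) : ℂ) * statK (1/2) x = fresnelA (√x * √2) := by
  have h := intervalIntegral.integral_deriv_smul_comp (a := 0) (b := π/2)
    (f := fun s => 2 * √x * Real.sin (s/2)) (f' := fun s => √x * Real.cos (s/2))
    (g := fun w : ℝ => Complex.exp (-(Complex.I / 2) * (w:ℂ) ^ 2)) ?_ ?_ ?_
  · unfold statK fresnelA
    rw [← intervalIntegral.integral_const_mul]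
    have e1 : 2 * √x * Real.sin (π / 2 / 2) = √x * √2 := by
      rw [show π / 2 / 2 = π / 4 by ring, Real.sin_pi_div_four]; ring
    simp only [e1, zero_div, Real.sin_zero, mul_zero] at h
    rw [← h]
    apply intervalIntegral.integral_congr
    intro s _
    simp only [Function.comp, statE, Complex.real_smul]
    have e2 : -(Complex.I / 2) * ((2 * √x * Real.sin (s/2) : ℝ) : ℂ) ^ 2 =
        ((-(x * (1 - Real.cos s)) : ℝ) : ℂ) * Complex.I := by
      have e3 : (2 * √x * Real.sin (s/2)) ^ 2 = 2 * (x * (1 - Real.cos s)) := by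
        have hc : Real.cos s = 1 - 2 * Real.sin (s/2) ^ 2 := by
          have := Real.cos_sq' (s/2)
          have h2 := Real.cos_two_mul (s/2)
          rw [show 2 * (s/2) = s by ring] at h2
          linarith
        rw [mul_pow, mul_pow, Real.sq_sqrt hx.le, hc]; ring
      rw [← Complex.ofReal_pow, e3]
      push_cast
      ring
    rw [e2, show (1:ℝ)/2 * s = s/2 by ring]
    push_cast
    ring
  · intro s _
    have h1 : HasDerivAt (fun s : ℝ => s / 2) (1/2) s := (hasDerivAt_id s).div_const 2
    exact (h1.sin.const_mul (2 * √x)).congr_deriv (by ring)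
  · fun_prop
  · fun_prop

lemma statE_hasDerivAt (x s : ℝ) :
    HasDerivAt (statE x) (statE x s * (((-(x * Real.sin s)) : ℝ) * Complex.I)) s := by
  have h1 : HasDerivAt (fun s : ℝ => -(x * (1 - Real.cos s))) (-(x * Real.sin s)) s := by
    have := (((Real.hasDerivAt_cos s).const_sub 1).const_mul x).neg
    exact this.congr_deriv (by ring)
  have h2 := (h1.ofReal_comp.mul_const Complex.I).cexp
  exact h2

lemma statK_diff (ν x : ℝ) (hx : 1 < x) :
    ‖statK ν x - statK (1/2) x‖ ≤ (24 * (ν ^ 2 + 1) + 2) / x := by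
  have hx0 : 0 < x := by linarith
  set C := ν ^ 2 + 1 with hC
  have hC1 : 1 ≤ C := by nlinarith [sq_nonneg ν]
  let n : ℝ → ℝ := fun s => Real.cos (ν * s) - Real.cos (1/2 * s)
  let n' : ℝ → ℝ := fun s => -ν * Real.sin (ν * s) + 1/2 * Real.sin (1/2 * s)
  have hn : ∀ s, |n s| ≤ C * s ^ 2 := by
    intro s
    have h1 := Real.one_sub_sq_div_two_le_cos (x := ν * s)
    have h2 := Real.one_sub_sq_div_two_le_cos (x := 1/2 * s)
    have h3 := Real.cos_le_one (ν * s)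
    have h4 := Real.cos_le_one (1/2 * s)
    have := mul_nonneg (sq_nonneg ν) (sq_nonneg s)
    simp only [n]
    rw [abs_le]
    constructor <;> nlinarith [sq_nonneg s]
  have hn' : ∀ s, 0 ≤ s → |n' s| ≤ C * s := by
    intro s hs
    have h1 : |Real.sin (ν * s)| ≤ |ν| * s := by
      have := Real.abs_sin_le_abs (x := ν * s)
      rwa [abs_mul, abs_of_nonneg hs] at this
    have h2 : |Real.sin (1/2 * s)| ≤ 1/2 * s := by
      have := Real.abs_sin_le_abs (x := 1/2 * s)
      rwa [abs_mul, abs_of_nonneg hs, abs_of_pos (by norm_num : (0:ℝ) < 1/2)] at this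
    simp only [n']
    refine (abs_add_le _ _).trans ?_
    rw [abs_mul, abs_mul, abs_neg, abs_of_pos (by norm_num : (0:ℝ) < 1/2)]
    have h3 : |ν| * |Real.sin (ν * s)| ≤ |ν| * (|ν| * s) := by gcongr
    have h4 : |ν| * (|ν| * s) = ν ^ 2 * s := by rw [← mul_assoc, ← sq, sq_abs]
    rw [hC]
    nlinarith
  have hnd : ∀ s, HasDerivAt n (n' s) s := by
    intro s
    have h1 : HasDerivAt (fun s : ℝ => ν * s) ν s := by simpa using (hasDerivAt_id s).const_mul ν
    have h2 : HasDerivAt (fun s : ℝ => 1/2 * s) (1/2) s := by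
      simpa using (hasDerivAt_id s).const_mul (1/2:ℝ)
    exact (h1.cos.sub h2.cos).congr_deriv (by simp only [n']; ring)
  have ncont : Continuous n := by simp only [n]; fun_prop
  have n'cont : Continuous n' := by simp only [n']; fun_prop
  have hpi := Real.pi_gt_three
  have hpi4 := Real.pi_lt_four
  have hsin : ∀ s, 0 ≤ s → s ≤ π/2 → s / 2 ≤ Real.sin s := by
    intro s h0 h1
    have := Real.mul_le_sin h0 h1
    have h2 : 1 / 2 ≤ 2 / π := by rw [div_le_div_iff₀ (by norm_num) (by linarith)]; linarith
    nlinarith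
  set δ := 1 / x with hδ
  have hδ0 : 0 < δ := by positivity
  have hδ1 : δ < 1 := by rw [hδ, div_lt_one hx0]; exact hx
  have hδ2 : δ ≤ π / 2 := by linarith
  have hmem : ∀ s ∈ uIcc δ (π/2), 0 < s ∧ s ≤ π/2 := by
    intro s hs
    rw [uIcc_of_le hδ2] at hs
    exact ⟨hδ0.trans_le hs.1, hs.2⟩
  let q : ℝ → ℝ := fun s => n s / Real.sin s
  let q' : ℝ → ℝ := fun s => (n' s * Real.sin s - n s * Real.cos s) / Real.sin s ^ 2
  have hsp : ∀ s ∈ uIcc δ (π/2), 0 < Real.sin s := by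
    intro s hs
    obtain ⟨h1, h2⟩ := hmem s hs
    linarith [hsin s h1.le h2]
  have hqd : ∀ s ∈ uIcc δ (π/2), HasDerivAt q (q' s) s := by
    intro s hs
    exact (hnd s).div (Real.hasDerivAt_sin s) (hsp s hs).ne'
  have hq : ∀ s ∈ uIcc δ (π/2), |q s| ≤ 4 * C := by
    intro s hs
    obtain ⟨h1, h2⟩ := hmem s hs
    have h3 := hsin s h1.le h2
    have h4 := hsp s hs
    simp only [q]
    rw [abs_div, abs_of_pos h4, div_le_iff₀ h4]
    have := hn s
    nlinarith [mul_nonneg (by linarith : (0:ℝ) ≤ C) h1.le]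
  have hq' : ∀ s ∈ uIcc δ (π/2), |q' s| ≤ 6 * C := by
    intro s hs
    obtain ⟨h1, h2⟩ := hmem s hs
    have h3 := hsin s h1.le h2
    have h4 := hsp s hs
    simp only [q']
    rw [abs_div, abs_of_pos (pow_pos h4 2), div_le_iff₀ (pow_pos h4 2)]
    refine (abs_sub _ _).trans ?_
    rw [abs_mul, abs_mul, abs_of_pos h4]
    have h5 := hn s
    have h6 := hn' s h1.le
    have h7 := Real.abs_cos_le_one s
    have h8 : |n s| * |Real.cos s| ≤ C * s ^ 2 * 1 := by gcongr
    have h9 : |n' s| * Real.sin s ≤ C * s * Real.sin s := by gcongr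
    have h10 : s ^ 2 ≤ (2 * Real.sin s) ^ 2 := by gcongr; linarith
    have h11 : C * s * Real.sin s ≤ C * (2 * Real.sin s) * Real.sin s := by gcongr; linarith
    nlinarith
  have q'cont : ContinuousOn q' (uIcc δ (π/2)) := by
    apply ContinuousOn.div
    · fun_prop
    · fun_prop
    · intro s hs; exact pow_ne_zero 2 (hsp s hs).ne'
  have hEc := statE_cont x
  -- FTC
  have hΦ : ∀ s ∈ uIcc δ (π/2), HasDerivAt (fun s => statE x s * ((q s : ℝ) : ℂ))
      (-(x * Complex.I) * (statE x s * ((n s : ℝ) : ℂ)) + statE x s * ((q' s : ℝ) : ℂ)) s := by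
    intro s hs
    refine HasDerivAt.congr_deriv ((statE_hasDerivAt x s).mul (hqd s hs).ofReal_comp) ?_
    congr 1
    have : ((n s : ℝ) : ℂ) = Real.sin s * ((q s : ℝ) : ℂ) := by
      rw [← Complex.ofReal_mul]
      congr 1
      simp only [q]
      field_simp [(hsp s hs).ne']
    rw [this]
    push_cast
    ring
  have i1 : IntervalIntegrable (fun s => -(x * Complex.I) * (statE x s * ((n s : ℝ) : ℂ))) volume δ (π/2) := by
    apply Continuous.intervalIntegrable
    fun_prop
  have q'cont2 : ContinuousOn (fun s => ((q' s : ℝ) : ℂ)) (uIcc δ (π/2)) :=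
    Complex.continuous_ofReal.comp_continuousOn q'cont
  have i2 : IntervalIntegrable (fun s => statE x s * ((q' s : ℝ) : ℂ)) volume δ (π/2) := by
    apply ContinuousOn.intervalIntegrable
    exact hEc.continuousOn.mul q'cont2
  have key := intervalIntegral.integral_eq_sub_of_hasDerivAt hΦ (i1.add i2)
  rw [intervalIntegral.integral_add i1 i2, intervalIntegral.integral_const_mul] at key
  have b2 : ‖∫ s in δ..(π/2), statE x s * ((q' s : ℝ) : ℂ)‖ ≤ 6 * C * 2 := by
    have := intervalIntegral.norm_integral_le_of_norm_le_const (a := δ) (b := π/2) (C := 6 * C)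
      (f := fun s => statE x s * ((q' s : ℝ) : ℂ)) (fun s hs => by
        rw [norm_mul, statE_norm, one_mul, Complex.norm_real, Real.norm_eq_abs]
        exact hq' s (uIoc_subset_uIcc hs))
    refine this.trans ?_
    rw [abs_of_nonneg (by linarith)]
    gcongr
    linarith
  have bq : ∀ s ∈ uIcc δ (π/2), ‖statE x s * ((q s : ℝ) : ℂ)‖ ≤ 4 * C := by
    intro s hs
    rw [norm_mul, statE_norm, one_mul, Complex.norm_real, Real.norm_eq_abs]
    exact hq s hs
  have b3 : ‖∫ s in δ..(π/2), statE x s * ((n s : ℝ) : ℂ)‖ ≤ 20 * C / x := by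
    have : ‖-(x * Complex.I) * ∫ s in δ..(π/2), statE x s * ((n s : ℝ) : ℂ)‖ ≤ 20 * C := by
      rw [eq_sub_of_add_eq key]
      refine (norm_sub_le _ _).trans ?_
      have := norm_sub_le (statE x (π/2) * ((q (π/2) : ℝ) : ℂ)) (statE x δ * ((q δ : ℝ) : ℂ))
      have h1 := bq (π/2) right_mem_uIcc
      have h2 := bq δ left_mem_uIcc
      linarith
    rw [norm_mul, norm_neg, norm_mul, Complex.norm_I, mul_one, Complex.norm_real, Real.norm_eq_abs,
      abs_of_pos hx0] at this
    rw [le_div_iff₀ hx0]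
    linarith
  have b1 : ‖∫ s in (0:ℝ)..δ, statE x s * ((n s : ℝ) : ℂ)‖ ≤ 2 / x := by
    have := intervalIntegral.norm_integral_le_of_norm_le_const (a := 0) (b := δ) (C := 2)
      (f := fun s => statE x s * ((n s : ℝ) : ℂ)) (fun s hs => by
        rw [norm_mul, statE_norm, one_mul, Complex.norm_real, Real.norm_eq_abs]
        simp only [n]
        refine (abs_sub _ _).trans ?_
        linarith [Real.abs_cos_le_one (ν * s), Real.abs_cos_le_one (1/2 * s)])
    refine this.trans ?_
    rw [sub_zero, abs_of_pos hδ0, hδ]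
    apply le_of_eq; ring
  have e : statK ν x - statK (1/2) x = (∫ s in (0:ℝ)..δ, statE x s * ((n s : ℝ) : ℂ)) +
      ∫ s in δ..(π/2), statE x s * ((n s : ℝ) : ℂ) := by
    rw [intervalIntegral.integral_add_adjacent_intervals]
    · unfold statK
      rw [← intervalIntegral.integral_sub]
      · congr 1
        ext s
        simp only [n]
        push_cast
        ring
      all_goals
        apply Continuous.intervalIntegrable
        fun_prop
    all_goals
      apply Continuous.intervalIntegrable
      fun_prop
  rw [e]
  refine (norm_add_le _ _).trans ?_
  calc _ ≤ 2 / x + 20 * C / x := add_le_add b1 b3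
    _ = (20 * C + 2) / x := by ring
    _ ≤ _ := by gcongr; linarith

lemma statK_tendsto (ν : ℝ) :
    Filter.Tendsto (fun x : ℝ => ((√x : ℝ) : ℂ) * statK ν x) Filter.atTop (nhds fresnelL) := by
  have hs : Filter.Tendsto (fun x : ℝ => √x) Filter.atTop Filter.atTop := Real.tendsto_sqrt_atTop
  have h1 : Filter.Tendsto (fun x : ℝ => fresnelA (√x * √2)) Filter.atTop (nhds fresnelL) :=
    fresnelA_tendsto.comp (hs.atTop_mul_const (by positivity))
  have h2 : Filter.Tendsto (fun x : ℝ => ((√x : ℝ) : ℂ) * (statK ν x - statK (1/2) x))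
      Filter.atTop (nhds 0) := by
    apply squeeze_zero_norm' (a := fun x => (24 * (ν ^ 2 + 1) + 2) / √x)
    · filter_upwards [Filter.eventually_gt_atTop 1] with x hx
      rw [norm_mul, Complex.norm_real, Real.norm_eq_abs, abs_of_nonneg (Real.sqrt_nonneg _)]
      have hx0 : 0 < x := by linarith
      have hq : 0 < √x := Real.sqrt_pos.mpr hx0
      calc _ ≤ √x * ((24 * (ν ^ 2 + 1) + 2) / x) := by gcongr; exact statK_diff ν x hx
        _ = _ := by
          have : x = √x * √x := (Real.mul_self_sqrt hx0.le).symm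
          conv_lhs => rw [this]
          have hq2 : √(√x * √x) = √x := by rw [← this]
          rw [hq2]
          field_simp
    · exact hs.const_div_atTop _
  have h3 := h1.add h2
  rw [add_zero] at h3
  refine h3.congr' ?_
  filter_upwards [Filter.eventually_gt_atTop 0] with x hx
  rw [← statK_half x hx]
  ring

lemma bE1_eq_statK (ν x : ℝ) : bE1 ν x =
    2 * (Complex.exp (((x - ν * π / 2 : ℝ) : ℂ) * Complex.I) * statK ν x).re := by
  have hcont : Continuous (fun θ => Real.cos (x * Real.sin θ - ν * θ)) := by fun_prop
  unfold bE1 statK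
  have e1 : ∫ θ in (0:ℝ)..π, Real.cos (x * Real.sin θ - ν * θ) =
      (∫ θ in (0:ℝ)..(π/2), Real.cos (x * Real.sin θ - ν * θ)) +
      ∫ θ in (π/2)..π, Real.cos (x * Real.sin θ - ν * θ) :=
    (intervalIntegral.integral_add_adjacent_intervals (hcont.intervalIntegrable _ _)
      (hcont.intervalIntegrable _ _)).symm
  have e2 : ∫ θ in (0:ℝ)..(π/2), Real.cos (x * Real.sin θ - ν * θ) =
      ∫ s in (0:ℝ)..(π/2), Real.cos (x * Real.sin (π/2 - s) - ν * (π/2 - s)) := by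
    rw [intervalIntegral.integral_comp_sub_left (fun θ => Real.cos (x * Real.sin θ - ν * θ))]
    simp
  have e3 : ∫ θ in (π/2)..π, Real.cos (x * Real.sin θ - ν * θ) =
      ∫ s in (0:ℝ)..(π/2), Real.cos (x * Real.sin (π/2 + s) - ν * (π/2 + s)) := by
    rw [intervalIntegral.integral_comp_add_left (fun θ => Real.cos (x * Real.sin θ - ν * θ))]
    simp
  have hEc := statE_cont x
  rw [← intervalIntegral.integral_const_mul]
  have e4 := Complex.reCLM.intervalIntegral_comp_comm (a := 0) (b := π/2) (μ := volume)
    (f := fun s => Complex.exp (((x - ν * π / 2 : ℝ) : ℂ) * Complex.I) *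
      (statE x s * ((Real.cos (ν * s) : ℝ) : ℂ))) (by
      apply Continuous.intervalIntegrable; fun_prop)
  simp only [Complex.reCLM_apply] at e4
  rw [← e4, ← intervalIntegral.integral_const_mul, e1, e2, e3, ← intervalIntegral.integral_add]
  · apply intervalIntegral.integral_congr
    intro s _
    simp only
    unfold statE
    rw [← mul_assoc, ← Complex.exp_add, ← add_mul, ← Complex.ofReal_add, Complex.re_mul_ofReal,
      Complex.exp_ofReal_mul_I_re, Real.sin_pi_div_two_sub,
      show π/2 + s = π/2 - (-s) by ring, Real.sin_pi_div_two_sub, Real.cos_neg,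
      show x * Real.cos s - ν * (π/2 - s) = (x * Real.cos s - ν * π/2) + ν * s by ring,
      show x * Real.cos s - ν * (π/2 - -s) = (x * Real.cos s - ν * π/2) - ν * s by ring,
      show x - ν * π/2 + -(x * (1 - Real.cos s)) = x * Real.cos s - ν * π/2 by ring,
      Real.cos_add (x * Real.cos s - ν * π/2) (ν * s), Real.cos_sub (x * Real.cos s - ν * π/2) (ν * s)]
    ring
  all_goals
    apply Continuous.intervalIntegrable
    fun_prop

noncomputable def besselκ : ℝ := 2 / π * √(π/2)

lemma besselκ_pos : 0 < besselκ := by unfold besselκ; positivity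

lemma bE2_le (ν x : ℝ) (hν : 0 ≤ ν) (hx : 0 < x) : |bE2 ν x| ≤ 1 / x := by
  have i0 := bessel_exp_integrable ν x hx
  have hnn : 0 ≤ bE2 ν x := integral_nonneg fun t => (Real.exp_pos _).le
  rw [abs_of_nonneg hnn]
  have h3 : ∫ t in Ioi (0:ℝ), Real.exp (-x * t) = 1 / x := by
    rw [integral_exp_mul_Ioi (by linarith)]
    simp
  rw [← h3]
  refine setIntegral_mono_on i0 (integrableOn_exp_mul_Ioi (by linarith) 0) measurableSet_Ioi ?_
  intro t ht
  apply Real.exp_le_exp.mpr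
  have ht0 : (0:ℝ) < t := ht
  have hs : t ≤ Real.sinh t := Real.self_le_sinh_iff.mpr ht0.le
  nlinarith [mul_le_mul_of_nonneg_left hs hx.le, mul_nonneg hν ht0.le]

lemma besselJ_asymp (ν : ℝ) (hν : 0 ≤ ν) :
    Filter.Tendsto (fun x => √x * besselJ ν x - besselκ * Real.cos (x - ν * π / 2 - π / 4))
      Filter.atTop (nhds 0) := by
  have hs : Filter.Tendsto (fun x : ℝ => √x) Filter.atTop Filter.atTop := Real.tendsto_sqrt_atTop
  have h1 : Filter.Tendsto (fun x : ℝ => (2 / π) * (Complex.exp (((x - ν * π / 2 : ℝ) : ℂ) * Complex.I) *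
      (((√x : ℝ) : ℂ) * statK ν x - fresnelL)).re) Filter.atTop (nhds 0) := by
    have h := (statK_tendsto ν).sub_const fresnelL
    rw [sub_self] at h
    have h' : Filter.Tendsto (fun x : ℝ => (Complex.exp (((x - ν * π / 2 : ℝ) : ℂ) * Complex.I) *
      (((√x : ℝ) : ℂ) * statK ν x - fresnelL)).re) Filter.atTop (nhds 0) := by
      refine squeeze_zero_norm (fun x => ?_) (tendsto_zero_iff_norm_tendsto_zero.mp h)
      rw [Real.norm_eq_abs]
      refine (Complex.abs_re_le_norm _).trans ?_
      rw [norm_mul, Complex.norm_exp_ofReal_mul_I, one_mul]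
    simpa using h'.const_mul (2/π)
  have h2 : Filter.Tendsto (fun x : ℝ => Real.sin (ν * π) / π * (√x * bE2 ν x)) Filter.atTop (nhds 0) := by
    have : Filter.Tendsto (fun x : ℝ => √x * bE2 ν x) Filter.atTop (nhds 0) := by
      apply squeeze_zero_norm' (a := fun x => 1 / √x)
      · filter_upwards [Filter.eventually_gt_atTop 0] with x hx
        rw [norm_mul, Real.norm_eq_abs, Real.norm_eq_abs, abs_of_nonneg (Real.sqrt_nonneg _)]
        have hq : 0 < √x := Real.sqrt_pos.mpr hx
        calc _ ≤ √x * (1 / x) := by gcongr; exact bE2_le ν x hν hx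
          _ = 1 / √x := by
            rw [mul_one_div, Real.sqrt_div_self', one_div]
      · exact hs.const_div_atTop _
    simpa using this.const_mul (Real.sin (ν * π) / π)
  have h3 := h1.sub h2
  rw [sub_zero] at h3
  refine h3.congr fun x => ?_
  rw [besselJ_eq, bE1_eq_statK]
  have e1 : (Complex.exp (((x - ν * π / 2 : ℝ) : ℂ) * Complex.I) * fresnelL).re =
      √(π/2) * Real.cos (x - ν * π / 2 - π / 4) := by
    unfold fresnelL
    rw [show (-(π / 4 : ℝ) * Complex.I : ℂ) = ((-(π/4) : ℝ) : ℂ) * Complex.I by push_cast; ring,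
      mul_left_comm, ← Complex.exp_add, ← add_mul, ← Complex.ofReal_add, Complex.re_ofReal_mul,
      Complex.exp_ofReal_mul_I_re, sub_eq_add_neg _ (π/4)]
  rw [mul_sub, Complex.sub_re, e1, mul_left_comm, Complex.re_ofReal_mul]
  unfold besselκ
  ring

/-- the phase `f(ν,x) = x g(ν/x)` -/
noncomputable def bphase (ν x : ℝ) : ℝ := x * gfun (ν / x)

/-- `P = √(x²-ν²)` -/
noncomputable def bP (ν x : ℝ) : ℝ := √(x ^ 2 - ν ^ 2)

noncomputable def bR (ν x : ℝ) : ℝ := 9 / 4 / bP ν x + 5 / 12 * ν ^ 2 / bP ν x ^ 3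

lemma bP_pos {ν x : ℝ} (hν : 0 ≤ ν) (hx : ν < x) : 0 < bP ν x := by
  unfold bP; apply Real.sqrt_pos.mpr; nlinarith

lemma bP_sq {ν x : ℝ} (hν : 0 ≤ ν) (hx : ν ≤ x) : bP ν x ^ 2 = x ^ 2 - ν ^ 2 := by
  unfold bP; apply Real.sq_sqrt; nlinarith

lemma bphase_eq {ν x : ℝ} (hx : 0 < x) :
    π * bphase ν x = bP ν x - ν * Real.arccos (ν / x) := by
  unfold bphase gfun bP
  have h : √(x ^ 2 - ν ^ 2) = x * √(1 - (ν / x) ^ 2) := by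
    rw [show x ^ 2 - ν ^ 2 = x ^ 2 * (1 - (ν / x) ^ 2) by field_simp,
      Real.sqrt_mul (by positivity), Real.sqrt_sq hx.le]
  rw [h]
  field_simp

lemma bP_hasDerivAt {ν x : ℝ} (hν : 0 ≤ ν) (hx : ν < x) :
    HasDerivAt (bP ν) (x / bP ν x) x := by
  have h0 : x ^ 2 - ν ^ 2 ≠ 0 := by nlinarith
  have h1 : HasDerivAt (fun x : ℝ => x ^ 2 - ν ^ 2) (2 * x) x :=
    ((hasDerivAt_pow 2 x).sub_const (ν ^ 2)).congr_deriv (by norm_num)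
  have h2 := h1.sqrt h0
  refine HasDerivAt.congr_deriv h2 ?_
  have := bP_pos hν hx
  unfold bP at *
  field_simp

lemma bphase_hasDerivAt {ν x : ℝ} (hν : 0 ≤ ν) (hx : ν < x) :
    HasDerivAt (bphase ν) (bP ν x / (π * x)) x := by
  have hx0 : 0 < x := hν.trans_lt hx
  have hP := bP_pos hν hx
  have hq : HasDerivAt (fun x : ℝ => ν / x) (-ν / x ^ 2) x := by
    refine ((hasDerivAt_inv hx0.ne').const_mul ν).congr_deriv ?_
    field_simp
  have hlt : ν / x < 1 := (div_lt_one hx0).mpr hx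
  have hge : 0 ≤ ν / x := by positivity
  have ha := (Real.hasDerivAt_arccos (x := ν / x) (by linarith) hlt.ne).comp x hq
  have h := ((bP_hasDerivAt hν hx).sub (ha.const_mul ν)).const_mul (1 / π)
  have h' : HasDerivAt (fun x => (1 / π) * (bP ν x - ν * Real.arccos (ν / x))) (bP ν x / (π * x)) x := by
    refine HasDerivAt.congr_deriv h ?_
    have hs : √(1 - (ν / x) ^ 2) = bP ν x / x := by
      rw [eq_div_iff hx0.ne']
      unfold bP
      rw [show x ^ 2 - ν ^ 2 = x ^ 2 * (1 - (ν / x) ^ 2) by field_simp,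
        Real.sqrt_mul (by positivity), Real.sqrt_sq hx0.le]
      ring
    rw [hs]
    have := bP_sq hν hx.le
    field_simp
    rw [this]
  refine h'.congr_of_eventuallyEq ?_
  filter_upwards [lt_mem_nhds hx0] with t ht
  rw [← bphase_eq ht]
  field_simp

lemma bphase_hasDerivAt_nu {ν x : ℝ} (hν : 0 ≤ ν) (hx : ν < x) :
    HasDerivAt (fun ν => bphase ν x) (-Real.arccos (ν / x) / π) ν := by
  have hx0 : 0 < x := hν.trans_lt hx
  have hP := bP_pos hν hx
  have hq : HasDerivAt (fun ν : ℝ => ν / x) (1 / x) ν := (hasDerivAt_id ν).div_const x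
  have hlt : ν / x < 1 := (div_lt_one hx0).mpr hx
  have hge : 0 ≤ ν / x := by positivity
  have ha := (Real.hasDerivAt_arccos (x := ν / x) (by linarith) hlt.ne).comp ν hq
  have h0 : x ^ 2 - ν ^ 2 ≠ 0 := by nlinarith
  have h1 : HasDerivAt (fun ν : ℝ => x ^ 2 - ν ^ 2) (-(2 * ν)) ν :=
    ((hasDerivAt_pow 2 ν).const_sub (x ^ 2)).congr_deriv (by norm_num)
  have h2 := h1.sqrt h0
  have h := (h2.sub ((hasDerivAt_id ν).mul ha)).const_mul (1 / π)
  have h' : HasDerivAt (fun ν => (1 / π) * (bP ν x - ν * Real.arccos (ν / x)))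
      (-Real.arccos (ν / x) / π) ν := by
    refine HasDerivAt.congr_deriv h ?_
    have hs : √(1 - (ν / x) ^ 2) = bP ν x / x := by
      rw [eq_div_iff hx0.ne']
      unfold bP
      rw [show x ^ 2 - ν ^ 2 = x ^ 2 * (1 - (ν / x) ^ 2) by field_simp,
        Real.sqrt_mul (by positivity), Real.sqrt_sq hx0.le]
      ring
    simp only [Function.comp, id]
    rw [hs, show √(x ^ 2 - ν ^ 2) = bP ν x from rfl]
    field_simp
    ring
  refine h'.congr_of_eventuallyEq ?_
  filter_upwards with t
  rw [← bphase_eq hx0]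
  field_simp

lemma bR_hasDerivAt {ν x : ℝ} (hν : 0 ≤ ν) (hx : ν < x) :
    HasDerivAt (bR ν) (-(x / bP ν x ^ 3 + 5 / 4 * x ^ 3 / bP ν x ^ 5)) x := by
  have hP := bP_pos hν hx
  have hd := bP_hasDerivAt hν hx
  have h1 := (hd.inv hP.ne').const_mul (9 / 4)
  have h2 := ((hd.pow 3).inv (pow_pos hP 3).ne').const_mul (5 / 12 * ν ^ 2)
  have h := h1.add h2
  have h' : HasDerivAt (bR ν) _ x := h
  refine h'.congr_deriv ?_
  have e := bP_sq hν hx.le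
  have e' : ν ^ 2 = x ^ 2 - bP ν x ^ 2 := by linarith
  rw [e']
  simp only [Pi.pow_apply]
  field_simp
  ring

lemma bR_pos {ν x : ℝ} (hν : 0 ≤ ν) (hx : ν < x) : 0 < bR ν x := by
  have hP := bP_pos hν hx
  unfold bR; positivity

lemma bP_mono {ν x x' : ℝ} (hν : 0 ≤ ν) (hx : ν < x) (h : x ≤ x') : bP ν x ≤ bP ν x' := by
  unfold bP; apply Real.sqrt_le_sqrt; nlinarith

lemma bR_anti {ν x x' : ℝ} (hν : 0 ≤ ν) (hx : ν < x) (h : x ≤ x') : bR ν x' ≤ bR ν x := by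
  have hP := bP_pos hν hx
  have := bP_mono hν hx h
  unfold bR; gcongr

noncomputable def bz (ν x : ℝ) : ℝ := √(bP ν x) * besselJ ν x
noncomputable def bw (ν x : ℝ) : ℝ :=
  besselV ν x / √(bP ν x) + x ^ 2 * besselJ ν x / (2 * √(bP ν x) ^ 5)
noncomputable def bpsi (ν x : ℝ) : ℝ := x / bP ν x ^ 3 - 5 / 4 * x ^ 3 / bP ν x ^ 5

lemma bz_hasDerivAt {ν x : ℝ} (hν : 0 ≤ ν) (hx : ν < x) :
    HasDerivAt (bz ν) (bP ν x / x * bw ν x) x := by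
  have hx0 : 0 < x := hν.trans_lt hx
  have hP := bP_pos hν hx
  have hS : 0 < √(bP ν x) := Real.sqrt_pos.mpr hP
  have hSd := (bP_hasDerivAt hν hx).sqrt hP.ne'
  have h : HasDerivAt (bz ν) _ x := hSd.mul (besselJ_hasDerivAt ν x hx0)
  refine h.congr_deriv ?_
  unfold bw
  have e : bP ν x = √(bP ν x) ^ 2 := (Real.sq_sqrt hP.le).symm
  set S := √(bP ν x)
  rw [e]
  field_simp
  ring

lemma bw_hasDerivAt {ν x : ℝ} (hν : 0 ≤ ν) (hx : ν < x) :
    HasDerivAt (bw ν) (-(bP ν x / x) * bz ν x + bpsi ν x * bz ν x) x := by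
  have hx0 : 0 < x := hν.trans_lt hx
  have hP := bP_pos hν hx
  have hS : 0 < √(bP ν x) := Real.sqrt_pos.mpr hP
  have hSd := (bP_hasDerivAt hν hx).sqrt hP.ne'
  have h : HasDerivAt (bw ν) _ x := ((besselV_hasDerivAt ν x hx0).div hSd hS.ne').add
    (((hasDerivAt_pow 2 x).mul (besselJ_hasDerivAt ν x hx0)).div
      ((hSd.pow 5).const_mul 2) (by positivity))
  refine h.congr_deriv ?_
  unfold bpsi bz
  have e : bP ν x = √(bP ν x) ^ 2 := (Real.sq_sqrt hP.le).symm
  have e2 := bP_sq hν hx.le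
  simp only [Pi.mul_apply]
  set S := √(bP ν x)
  rw [← e2, e]
  field_simp
  ring

lemma bpsi_abs {ν x : ℝ} (hν : 0 ≤ ν) (hx : ν < x) :
    |bpsi ν x| ≤ x / bP ν x ^ 3 + 5 / 4 * x ^ 3 / bP ν x ^ 5 := by
  have hx0 : 0 < x := hν.trans_lt hx
  have hP := bP_pos hν hx
  unfold bpsi
  have h1 : 0 < x / bP ν x ^ 3 := by positivity
  have h2 : 0 < 5 / 4 * x ^ 3 / bP ν x ^ 5 := by positivity
  rw [abs_le]; constructor <;> linarith

noncomputable def bG (ν x : ℝ) : ℝ := bz ν x ^ 2 + bw ν x ^ 2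

lemma bG_nonneg (ν x : ℝ) : 0 ≤ bG ν x := by unfold bG; positivity

lemma bG_hasDerivAt {ν x : ℝ} (hν : 0 ≤ ν) (hx : ν < x) :
    HasDerivAt (bG ν) (2 * bpsi ν x * bz ν x * bw ν x) x := by
  have h : HasDerivAt (bG ν) _ x := ((bz_hasDerivAt hν hx).pow 2).add ((bw_hasDerivAt hν hx).pow 2)
  refine h.congr_deriv ?_
  norm_num
  ring

/-- antitone on `Ici x` from derivative sign, in a convenient form -/
lemma le_of_deriv_nonpos {f f' : ℝ → ℝ} {a b : ℝ} (hab : a ≤ b)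
    (hf : ∀ x ∈ Icc a b, HasDerivAt f (f' x) x) (h0 : ∀ x ∈ Icc a b, f' x ≤ 0) : f b ≤ f a := by
  have : AntitoneOn f (Icc a b) := by
    apply antitoneOn_of_hasDerivWithinAt_nonpos (convex_Icc a b) (f' := f')
    · exact fun x hx => (hf x hx).continuousAt.continuousWithinAt
    · exact fun x hx => (hf x (interior_subset hx)).hasDerivWithinAt
    · exact fun x hx => h0 x (interior_subset hx)
  exact this (left_mem_Icc.mpr hab) (right_mem_Icc.mpr hab) hab

lemma bG_le {ν x x' : ℝ} (hν : 0 ≤ ν) (hx : ν < x) (hxx : x ≤ x') :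
    bG ν x' ≤ Real.exp (bR ν x) * bG ν x := by
  have h : bG ν x' * Real.exp (bR ν x') ≤ bG ν x * Real.exp (bR ν x) := by
    refine le_of_deriv_nonpos (f := fun t => bG ν t * Real.exp (bR ν t)) hxx
      (fun t ht => (bG_hasDerivAt hν (hx.trans_le ht.1)).mul
        (bR_hasDerivAt hν (hx.trans_le ht.1)).exp) ?_
    intro t ht
    have hp := bpsi_abs hν (hx.trans_le ht.1)
    set ρ := t / bP ν t ^ 3 + 5 / 4 * t ^ 3 / bP ν t ^ 5
    have h1 : 2 * bpsi ν t * bz ν t * bw ν t ≤ ρ * bG ν t := by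
      have : 2 * |bz ν t * bw ν t| ≤ bG ν t := by
        rw [abs_mul]; unfold bG
        nlinarith [sq_nonneg (|bz ν t| - |bw ν t|), sq_abs (bz ν t), sq_abs (bw ν t)]
      calc 2 * bpsi ν t * bz ν t * bw ν t ≤ |2 * bpsi ν t * bz ν t * bw ν t| := le_abs_self _
        _ = |bpsi ν t| * (2 * |bz ν t * bw ν t|) := by
          rw [abs_mul, abs_mul, abs_mul, abs_mul]; norm_num; ring
        _ ≤ _ := by gcongr; exact (abs_nonneg _).trans hp
    have h2 := Real.exp_pos (bR ν t)
    nlinarith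
  have h3 := bR_pos hν (hx.trans_le hxx)
  have h4 : 1 ≤ Real.exp (bR ν x') := Real.one_le_exp h3.le
  have h5 := bG_nonneg ν x'
  nlinarith

noncomputable def bh (φ ν x : ℝ) : ℝ :=
  bz ν x * Real.cos (π * bphase ν x - φ) - bw ν x * Real.sin (π * bphase ν x - φ)

lemma bh_hasDerivAt (φ : ℝ) {ν x : ℝ} (hν : 0 ≤ ν) (hx : ν < x) :
    HasDerivAt (bh φ ν) (-(bpsi ν x * bz ν x * Real.sin (π * bphase ν x - φ))) x := by
  have hx0 : 0 < x := hν.trans_lt hx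
  have ht := ((bphase_hasDerivAt hν hx).const_mul π).sub_const φ
  have h : HasDerivAt (bh φ ν) _ x :=
    ((bz_hasDerivAt hν hx).mul ht.cos).sub ((bw_hasDerivAt hν hx).mul ht.sin)
  refine h.congr_deriv ?_
  field_simp
  ring

lemma bh_diff (φ : ℝ) {ν x x' : ℝ} (hν : 0 ≤ ν) (hx : ν < x) (hxx : x ≤ x') (hR : bR ν x ≤ 1) :
    |bh φ ν x' - bh φ ν x| ≤ 2 * √(bG ν x) * bR ν x := by
  set A := 2 * √(bG ν x) with hA
  have hA0 : 0 ≤ A := by positivity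
  have key : ∀ t ∈ Icc x x', |bpsi ν t * bz ν t * Real.sin (π * bphase ν t - φ)| ≤
      A * (t / bP ν t ^ 3 + 5 / 4 * t ^ 3 / bP ν t ^ 5) := by
    intro t ht
    have hp := bpsi_abs hν (hx.trans_le ht.1)
    have hz : |bz ν t| ≤ A := by
      apply abs_le_of_sq_le_sq _ hA0
      have h1 := bG_le hν hx ht.1
      have h2 : Real.exp (bR ν x) ≤ 4 :=
        (Real.exp_le_exp.mpr hR).trans (by linarith [Real.exp_one_lt_d9])
      have h3 : bz ν t ^ 2 ≤ bG ν t := by unfold bG; nlinarith [sq_nonneg (bw ν t)]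
      rw [hA, mul_pow, Real.sq_sqrt (bG_nonneg _ _)]
      nlinarith [bG_nonneg ν x]
    rw [abs_mul, abs_mul]
    calc _ ≤ |bpsi ν t| * |bz ν t| * 1 := by gcongr; exact Real.abs_sin_le_one _
      _ = |bz ν t| * |bpsi ν t| := by ring
      _ ≤ _ := by gcongr
  have hR' := bR_pos hν (hx.trans_le hxx)
  have h1 := le_of_deriv_nonpos (f := fun t => bh φ ν t + A * bR ν t) hxx
      (fun t ht => (bh_hasDerivAt φ hν (hx.trans_le ht.1)).add
        ((bR_hasDerivAt hν (hx.trans_le ht.1)).const_mul A)) (by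
      intro t ht
      have := (abs_le.mp (key t ht)).1
      linarith)
  have h2 := le_of_deriv_nonpos (f := fun t => -bh φ ν t + A * bR ν t) hxx
      (fun t ht => (bh_hasDerivAt φ hν (hx.trans_le ht.1)).neg.add
        ((bR_hasDerivAt hν (hx.trans_le ht.1)).const_mul A)) (by
      intro t ht
      have := (abs_le.mp (key t ht)).2
      linarith)
  have h3 : 0 ≤ A * bR ν x' := by positivity
  rw [abs_le]; constructor <;> linarith

lemma bphase_asymp (ν : ℝ) :
    Filter.Tendsto (fun x => π * bphase ν x - (x - ν * π / 2)) Filter.atTop (nhds 0) := by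
  have h1 : Filter.Tendsto (fun x : ℝ => ν * (Real.arccos (ν / x) - π / 2)) Filter.atTop (nhds 0) := by
    have : Filter.Tendsto (fun x : ℝ => Real.arccos (ν / x)) Filter.atTop (nhds (Real.arccos 0)) :=
      (Real.continuous_arccos.tendsto 0).comp (Filter.tendsto_id.const_div_atTop ν)
    rw [Real.arccos_zero] at this
    simpa using (this.sub_const (π / 2)).const_mul ν
  have h2 : Filter.Tendsto (fun x : ℝ => bP ν x - x) Filter.atTop (nhds 0) := by
    apply squeeze_zero_norm' (a := fun x => ν ^ 2 / x)
    · filter_upwards [Filter.eventually_gt_atTop |ν|, Filter.eventually_gt_atTop 0] with x hx hx0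
      have hs : ν ^ 2 ≤ x ^ 2 := by rw [← sq_abs]; gcongr
      have hp : bP ν x ^ 2 = x ^ 2 - ν ^ 2 := Real.sq_sqrt (by linarith)
      have hp0 : 0 ≤ bP ν x := Real.sqrt_nonneg _
      have : bP ν x ≤ x := by apply abs_le_of_sq_le_sq' _ hx0.le |>.2; nlinarith
      rw [Real.norm_eq_abs, abs_of_nonpos (by linarith), le_div_iff₀ hx0]
      nlinarith
    · exact Filter.tendsto_id.const_div_atTop _
  have h3 := h2.sub h1
  rw [sub_zero] at h3
  refine h3.congr' ?_
  filter_upwards [Filter.eventually_gt_atTop 0] with x hx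
  rw [bphase_eq hx]
  ring

lemma bphase_atTop (ν : ℝ) : Filter.Tendsto (fun x => π * bphase ν x) Filter.atTop Filter.atTop := by
  have h := (bphase_asymp ν).add_atTop (Filter.tendsto_atTop_add_const_right Filter.atTop (-(ν * π / 2)) Filter.tendsto_id)
  refine h.congr fun x => ?_
  simp only [id]; ring

lemma bz_asymp {ν : ℝ} (hν : 0 ≤ ν) :
    Filter.Tendsto (fun x => bz ν x - besselκ * Real.cos (π * bphase ν x - π / 4))
      Filter.atTop (nhds 0) := by
  have h1 := besselJ_asymp ν hν
  have h2 : Filter.Tendsto (fun x => Real.cos (x - ν * π / 2 - π / 4) - Real.cos (π * bphase ν x - π / 4))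
      Filter.atTop (nhds 0) := by
    refine squeeze_zero_norm (fun x => ?_) (tendsto_zero_iff_norm_tendsto_zero.mp (bphase_asymp ν))
    have := Real.abs_cos_sub_cos_le (x - ν * π / 2 - π / 4) (π * bphase ν x - π / 4)
    rw [Real.norm_eq_abs, Real.norm_eq_abs]
    refine this.trans (le_of_eq ?_)
    rw [← abs_neg]; congr 1; ring
  have h3 : Filter.Tendsto (fun x => √(bP ν x / x)) Filter.atTop (nhds 1) := by
    have : Filter.Tendsto (fun x => bP ν x / x) Filter.atTop (nhds 1) := by
      have h : Filter.Tendsto (fun x : ℝ => √(1 - (ν / x) ^ 2)) Filter.atTop (nhds (√(1 - 0 ^ 2))) :=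
        (((Filter.tendsto_id.const_div_atTop ν).pow 2).const_sub 1).sqrt
      simp only [ne_eq, OfNat.ofNat_ne_zero, not_false_eq_true, zero_pow, sub_zero, Real.sqrt_one] at h
      refine h.congr' ?_
      filter_upwards [Filter.eventually_gt_atTop 0] with x hx
      unfold bP
      rw [eq_div_iff hx.ne', show x ^ 2 - ν ^ 2 = x ^ 2 * (1 - (ν / x) ^ 2) by field_simp,
        Real.sqrt_mul (by positivity), Real.sqrt_sq hx.le]
      ring
    simpa using this.sqrt
  have hb : Filter.Tendsto (fun x => (√(bP ν x / x) - 1) * (besselκ * Real.cos (x - ν * π / 2 - π / 4)))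
      Filter.atTop (nhds 0) := by
    have h4 : Filter.Tendsto (fun x => |√(bP ν x / x) - 1| * besselκ) Filter.atTop (nhds 0) := by
      have := ((h3.sub_const 1).abs).mul_const besselκ
      simpa using this
    refine squeeze_zero_norm (fun x => ?_) h4
    rw [Real.norm_eq_abs, abs_mul, abs_mul, abs_of_pos besselκ_pos]
    have := Real.abs_cos_le_one (x - ν * π / 2 - π / 4)
    have hk := besselκ_pos
    gcongr
    nlinarith
  have h5 := ((h3.mul h1).add hb).add (h2.const_mul besselκ)
  simp only [mul_zero, add_zero] at h5
  refine h5.congr' ?_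
  filter_upwards [Filter.eventually_gt_atTop 0] with x hx
  have : √(bP ν x) = √(bP ν x / x) * √x := by
    rw [← Real.sqrt_mul (div_nonneg (show 0 ≤ bP ν x from Real.sqrt_nonneg _) hx.le), div_mul_cancel₀ _ hx.ne']
  unfold bz
  rw [this]
  ring

lemma bphase_reach {ν : ℝ} (hν : 0 ≤ ν) (φ X : ℝ) (hX : ν < X) :
    ∃ x, X ≤ x ∧ ∃ m : ℕ, π * bphase ν x = φ + m * (2 * π) := by
  obtain ⟨m, hm⟩ := exists_nat_ge ((π * bphase ν X - φ) / (2 * π))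
  have hm' : π * bphase ν X ≤ φ + m * (2 * π) := by
    rw [div_le_iff₀ (by positivity)] at hm; linarith
  obtain ⟨Y, hY1, hY2⟩ := ((Filter.eventually_ge_atTop X).and
    ((bphase_atTop ν).eventually_ge_atTop (φ + m * (2 * π)))).exists
  have hc : ContinuousOn (fun x => π * bphase ν x) (Icc X Y) := fun t ht =>
    ((bphase_hasDerivAt hν (hX.trans_le ht.1)).const_mul π).continuousAt.continuousWithinAt
  obtain ⟨x, hx, hx2⟩ := intermediate_value_Icc hY1 hc ⟨hm', hY2⟩
  exact ⟨x, hx.1, m, hx2⟩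

lemma bh_limit (φ : ℝ) {ν x : ℝ} (hν : 0 ≤ ν) (hx : ν < x) (hR : bR ν x ≤ 1) :
    |bh φ ν x - besselκ * Real.cos (φ - π / 4)| ≤ 2 * √(bG ν x) * bR ν x := by
  apply le_of_forall_pos_le_add
  intro ε hε
  have h := (Metric.tendsto_atTop.mp (bz_asymp hν)) ε hε
  obtain ⟨N, hN⟩ := h
  obtain ⟨y, hy, m, hm⟩ := bphase_reach hν φ (max N x) (hx.trans_le (le_max_right _ _))
  have h1 := hN y ((le_max_left _ _).trans hy)
  have h2 := bh_diff φ hν hx ((le_max_right _ _).trans hy) hR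
  have h3 : bh φ ν y = bz ν y := by
    unfold bh
    rw [hm, add_sub_cancel_left, Real.cos_nat_mul_two_pi, show Real.sin (m * (2 * π)) = 0 by
      rw [← zero_add ((m:ℝ) * (2 * π)), Real.sin_add_nat_mul_two_pi, Real.sin_zero]]
    ring
  rw [Real.dist_eq, sub_zero, hm, show φ + m * (2 * π) - π / 4 = (φ - π / 4) + m * (2 * π) by ring,
    Real.cos_add_nat_mul_two_pi] at h1
  rw [h3] at h2
  rw [abs_le] at h2 ⊢
  rw [abs_lt] at h1
  constructor <;> linarith [h1.1, h1.2, h2.1, h2.2]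

/-- phase–amplitude representation -/
lemma bessel_phase {ν x : ℝ} (hν : 0 ≤ ν) (hx : ν < x) (hR : bR ν x ≤ 1 / 16) :
    ∃ a b : ℝ, 0 < a ∧ |b| ≤ 4 * bR ν x * a ∧
      bz ν x = a * Real.sin (π * (bphase ν x + 1 / 4)) - b * Real.cos (π * (bphase ν x + 1 / 4)) ∧
      bw ν x = a * Real.cos (π * (bphase ν x + 1 / 4)) + b * Real.sin (π * (bphase ν x + 1 / 4)) := by
  have hRp := bR_pos hν hx
  have h1 := bh_limit (π / 4) hν hx (by linarith)
  have h2 := bh_limit (3 * π / 4) hν hx (by linarith)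
  rw [sub_self, Real.cos_zero, mul_one] at h1
  rw [show 3 * π / 4 - π / 4 = π / 2 by ring, Real.cos_pi_div_two, mul_zero, sub_zero] at h2
  set s := Real.sin (π * bphase ν x - π / 4) with hs
  set c := Real.cos (π * bphase ν x - π / 4) with hc
  have hsc : s ^ 2 + c ^ 2 = 1 := Real.sin_sq_add_cos_sq _
  have ea : bh (π / 4) ν x = bz ν x * c - bw ν x * s := rfl
  have eb : bh (3 * π / 4) ν x = bz ν x * s + bw ν x * c := by
    unfold bh
    rw [show π * bphase ν x - 3 * π / 4 = (π * bphase ν x - π / 4) - π / 2 by ring,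
      Real.cos_sub_pi_div_two, Real.sin_sub_pi_div_two]
    ring
  have e1 : Real.sin (π * (bphase ν x + 1 / 4)) = c := by
    rw [show π * (bphase ν x + 1 / 4) = (π * bphase ν x - π / 4) + π / 2 by ring,
      Real.sin_add_pi_div_two]
  have e2 : Real.cos (π * (bphase ν x + 1 / 4)) = -s := by
    rw [show π * (bphase ν x + 1 / 4) = (π * bphase ν x - π / 4) + π / 2 by ring,
      Real.cos_add_pi_div_two]
  set a := bh (π / 4) ν x with ha
  set b := bh (3 * π / 4) ν x with hb
  have hG : a ^ 2 + b ^ 2 = bG ν x := by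
    rw [ea, eb]; unfold bG
    linear_combination (bz ν x ^ 2 + bw ν x ^ 2) * hsc
  have hGle : √(bG ν x) ≤ |a| + |b| := by
    rw [← hG]
    apply Real.sqrt_le_iff.mpr
    refine ⟨by positivity, ?_⟩
    nlinarith [sq_abs a, sq_abs b, abs_nonneg a, abs_nonneg b, mul_nonneg (abs_nonneg a) (abs_nonneg b)]
  have hq0 := Real.sqrt_nonneg (bG ν x)
  set q := √(bG ν x)
  have hk := besselκ_pos
  have hqR : q * bR ν x ≤ q * (1 / 16) := by gcongr
  have hap : 0 < a := by
    by_contra hn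
    rw [not_lt] at hn
    rw [abs_of_nonpos hn] at hGle
    have := (abs_le.mp h1).1
    linarith
  rw [abs_of_pos hap] at hGle
  refine ⟨a, b, hap, ?_, ?_, ?_⟩
  · have : q ≤ 2 * a := by linarith
    calc |b| ≤ 2 * q * bR ν x := h2
      _ ≤ 2 * (2 * a) * bR ν x := by gcongr
      _ = _ := by ring
  · rw [e1, e2, ea, eb]; linear_combination -bz ν x * hsc
  · rw [e1, e2, ea, eb]; linear_combination -bw ν x * hsc

lemma bR_tendsto (ν : ℝ) : Filter.Tendsto (bR ν) Filter.atTop (nhds 0) := by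
  have hP : Filter.Tendsto (bP ν) Filter.atTop Filter.atTop := by
    apply Filter.tendsto_atTop_mono' _ (f₁ := fun x => x / 2)
    · filter_upwards [Filter.eventually_gt_atTop (2 * |ν|), Filter.eventually_gt_atTop 0] with x hx hx0
      unfold bP
      apply Real.le_sqrt_of_sq_le
      nlinarith [sq_abs ν, abs_nonneg ν]
    · exact Filter.tendsto_id.atTop_div_const (by norm_num)
  have h1 := hP.const_div_atTop (9 / 4)
  have h2 := ((Filter.tendsto_pow_atTop (α := ℝ) (n := 3) (by norm_num)).comp hP).const_div_atTop
    (5 / 12 * ν ^ 2)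
  have h3 := h1.add h2
  rw [add_zero] at h3
  exact h3

lemma bR_eventually (ν : ℝ) {ε : ℝ} (hε : 0 < ε) : ∀ᶠ x in Filter.atTop, bR ν x ≤ ε :=
  (bR_tendsto ν).eventually_le_const hε

lemma bessel_simple {ν c : ℝ} (hν : 0 ≤ ν) (hc : 0 < c) (h : besselJ ν c = 0) :
    besselV ν c ≠ 0 := by
  intro hv
  obtain ⟨x, hx1, hx2, hx3⟩ := ((bR_eventually ν (ε := 1 / 16) (by norm_num)).and
    ((Filter.eventually_ge_atTop c).and (Filter.eventually_gt_atTop ν))).exists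
  have hx0 : 0 < x := hc.trans_le hx2
  have key : ∀ t ∈ Icc c x, HasDerivAt (fun t => (besselJ ν t ^ 2 + besselV ν t ^ 2) *
      Real.exp (-((1 + ν ^ 2) * Real.log t + t ^ 2 / 2)))
      ((2 * besselJ ν t * (besselV ν t / t) + 2 * besselV ν t * (-(t ^ 2 - ν ^ 2) / t * besselJ ν t)) *
        Real.exp (-((1 + ν ^ 2) * Real.log t + t ^ 2 / 2)) +
        (besselJ ν t ^ 2 + besselV ν t ^ 2) * (Real.exp (-((1 + ν ^ 2) * Real.log t + t ^ 2 / 2)) *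
        (-((1 + ν ^ 2) * t⁻¹ + t)))) t := by
    intro t ht
    have ht0 : 0 < t := hc.trans_le ht.1
    have h1 : HasDerivAt (fun t => besselJ ν t ^ 2 + besselV ν t ^ 2)
      (2 * besselJ ν t * (besselV ν t / t) + 2 * besselV ν t * (-(t ^ 2 - ν ^ 2) / t * besselJ ν t)) t :=
      (((besselJ_hasDerivAt ν t ht0).pow 2).add ((besselV_hasDerivAt ν t ht0).pow 2)).congr_deriv
        (by norm_num)
    have h2 : HasDerivAt (fun t => -((1 + ν ^ 2) * Real.log t + t ^ 2 / 2)) (-((1 + ν ^ 2) * t⁻¹ + t)) t :=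
      ((((Real.hasDerivAt_log ht0.ne').const_mul (1 + ν ^ 2)).add
        ((hasDerivAt_pow 2 t).div_const 2)).neg).congr_deriv (by norm_num)
    exact h1.mul h2.exp
  have h1 := le_of_deriv_nonpos hx2 key (by
    intro t ht
    have ht0 : 0 < t := hc.trans_le ht.1
    have he := Real.exp_pos (-((1 + ν ^ 2) * Real.log t + t ^ 2 / 2))
    set e := Real.exp (-((1 + ν ^ 2) * Real.log t + t ^ 2 / 2))
    set y := besselJ ν t
    set v := besselV ν t
    have : (2 * y * (v / t) + 2 * v * (-(t ^ 2 - ν ^ 2) / t * y)) * e + (y ^ 2 + v ^ 2) *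
        (e * (-((1 + ν ^ 2) * t⁻¹ + t))) =
        -(e / t) * ((y - v) ^ 2 + ν ^ 2 * (y - v) ^ 2 + t ^ 2 * (y + v) ^ 2) := by
      field_simp
      ring
    rw [this]
    have : 0 ≤ (e / t) * ((y - v) ^ 2 + ν ^ 2 * (y - v) ^ 2 + t ^ 2 * (y + v) ^ 2) := by positivity
    linarith)
  simp only [h, hv] at h1
  have he := Real.exp_pos (-((1 + ν ^ 2) * Real.log x + x ^ 2 / 2))
  have h2 : besselJ ν x ^ 2 + besselV ν x ^ 2 ≤ 0 := by
    by_contra hn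
    push Not at hn
    have := mul_pos hn he
    rw [zero_pow two_ne_zero, add_zero, zero_mul] at h1
    linarith
  have hy : besselJ ν x = 0 := by nlinarith [sq_nonneg (besselJ ν x), sq_nonneg (besselV ν x)]
  have hv' : besselV ν x = 0 := by nlinarith [sq_nonneg (besselJ ν x), sq_nonneg (besselV ν x)]
  obtain ⟨a, b, ha, -, hz, hw⟩ := bessel_phase hν hx3 hx1
  unfold bz at hz
  unfold bw at hw
  rw [hy] at hz hw
  rw [hv'] at hw
  have := Real.sin_sq_add_cos_sq (π * (bphase ν x + 1 / 4))
  set s := Real.sin (π * (bphase ν x + 1 / 4))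
  set c := Real.cos (π * (bphase ν x + 1 / 4))
  have hz' : a * s - b * c = 0 := by rw [← hz]; ring
  have hw' : a * c + b * s = 0 := by rw [← hw]; ring
  have : a = 0 := by linear_combination s * hz' + c * hw' - a * this
  linarith

lemma bessel_no_zero {ν x₀ : ℝ} (hν : 0 < ν) (h0 : 0 < x₀) (hx : x₀ ≤ ν) : besselJ ν x₀ ≠ 0 := by
  intro hz
  set D : ℝ → ℝ := fun x => 2 * besselJ ν x * besselV ν x with hD
  have hDd : ∀ x, 0 < x → HasDerivAt D (2 / x * (besselV ν x ^ 2 + (ν ^ 2 - x ^ 2) * besselJ ν x ^ 2)) x := by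
    intro x hx
    refine ((((besselJ_hasDerivAt ν x hx).const_mul 2).mul (besselV_hasDerivAt ν x hx))).congr_deriv ?_
    field_simp
    ring
  have hmono : ∀ x1 x2, 0 < x1 → x1 ≤ x2 → x2 ≤ x₀ → D x1 ≤ D x2 := by
    intro x1 x2 h1 h12 h2
    have := le_of_deriv_nonpos (f := fun x => - D x) h12 (fun t ht => (hDd t (h1.trans_le ht.1)).neg) (by
      intro t ht
      have ht0 := h1.trans_le ht.1
      have : t ≤ ν := ht.2.trans (h2.trans hx)
      have h4 : 0 ≤ ν ^ 2 - t ^ 2 := by nlinarith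
      have : 0 ≤ 2 / t * (besselV ν t ^ 2 + (ν ^ 2 - t ^ 2) * besselJ ν t ^ 2) := by positivity
      linarith)
    simpa using this
  have hD0 : D x₀ = 0 := by simp [hD, hz]
  obtain ⟨C, hC, hCb⟩ := besselJ_bounded ν hν.le
  have hge : ∀ x, 0 < x → x ≤ x₀ → D x = 0 := by
    intro x1 h1 h1'
    apply le_antisymm
    · rw [← hD0]; exact hmono _ _ h1 h1' le_rfl
    by_contra hneg
    push Not at hneg
    set δ := -D x1 with hδ
    have hδ0 : 0 < δ := by linarith
    set t := x1 * Real.exp (-((C ^ 2 + 1) / δ)) with ht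
    have ht0 : 0 < t := by positivity
    have htx : t ≤ x1 := by
      rw [ht]
      have : Real.exp (-((C ^ 2 + 1) / δ)) ≤ 1 := Real.exp_le_one_iff.mpr (by
        have : 0 ≤ (C ^ 2 + 1) / δ := by positivity
        linarith)
      nlinarith
    have h := le_of_deriv_nonpos (f := fun s => besselJ ν s ^ 2 + δ * Real.log s) htx
      (fun s hs => ((besselJ_hasDerivAt ν s (ht0.trans_le hs.1)).pow 2).add
        ((Real.hasDerivAt_log (ht0.trans_le hs.1).ne').const_mul δ)) (by
      intro s hs
      have hs0 := ht0.trans_le hs.1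
      have : D s ≤ -δ := by rw [hδ, neg_neg]; exact hmono _ _ hs0 hs.2 h1'
      norm_num
      have e : 2 * besselJ ν s * (besselV ν s / s) + δ * s⁻¹ = (D s + δ) / s := by
        rw [hD]; field_simp
      rw [e]
      apply div_nonpos_of_nonpos_of_nonneg _ hs0.le
      linarith)
    have hl : Real.log t = Real.log x1 - (C ^ 2 + 1) / δ := by
      rw [ht, Real.log_mul h1.ne' (Real.exp_pos _).ne', Real.log_exp]; ring
    simp only [hl] at h
    have e : δ * (Real.log x1 - (C ^ 2 + 1) / δ) = δ * Real.log x1 - (C ^ 2 + 1) := by field_simp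
    rw [e] at h
    have hb := hCb t ht0
    have : besselJ ν t ^ 2 ≤ C ^ 2 := by rw [← sq_abs]; gcongr
    nlinarith [sq_nonneg (besselJ ν x1)]
  have hh : HasDerivAt D 0 (x₀ / 2) := by
    refine (hasDerivAt_const (x₀ / 2) (0:ℝ)).congr_of_eventuallyEq ?_
    filter_upwards [lt_mem_nhds (show 0 < x₀ / 2 by linarith), gt_mem_nhds (show x₀ / 2 < x₀ by linarith)] with t h1 h2
    exact hge t h1 h2.le
  have he := (hDd (x₀ / 2) (by linarith)).unique hh
  have h2 : 0 < ν ^ 2 - (x₀ / 2) ^ 2 := by nlinarith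
  have h3 : besselV ν (x₀ / 2) ^ 2 + (ν ^ 2 - (x₀ / 2) ^ 2) * besselJ ν (x₀ / 2) ^ 2 = 0 := by
    rcases mul_eq_zero.mp he with h | h
    · have : (0:ℝ) < 2 / (x₀ / 2) := by positivity
      linarith
    · exact h
  have h4 : besselV ν (x₀ / 2) ^ 2 = 0 := by
    nlinarith [sq_nonneg (besselV ν (x₀ / 2)), mul_nonneg h2.le (sq_nonneg (besselJ ν (x₀ / 2)))]
  have h5 : besselJ ν (x₀ / 2) = 0 := by
    rw [h4, zero_add] at h3
    rcases mul_eq_zero.mp h3 with h | h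
    · linarith
    · exact pow_eq_zero_iff (two_ne_zero) |>.mp h
  exact bessel_simple hν.le (by linarith) h5 (pow_eq_zero_iff (two_ne_zero) |>.mp h4)

lemma besselJ_zero_pos {x : ℝ} (h0 : 0 < x) (h1 : x ≤ 1) : 0 < besselJ 0 x := by
  unfold besselJ
  simp only [zero_mul, Real.sin_zero, zero_div, sub_zero]
  have hc : Continuous (fun θ : ℝ => Real.cos (x * Real.sin θ)) := by fun_prop
  have : 0 < ∫ θ in (0:ℝ)..π, Real.cos (x * Real.sin θ) := by
    apply intervalIntegral.intervalIntegral_pos_of_pos_on (hc.intervalIntegrable _ _) _ Real.pi_pos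
    intro θ _
    apply Real.cos_pos_of_mem_Ioo
    have h2 : |x * Real.sin θ| ≤ 1 := by
      rw [abs_mul, abs_of_pos h0]
      nlinarith [Real.abs_sin_le_one θ, abs_nonneg (Real.sin θ)]
    have h3 := abs_le.mp h2
    constructor <;> linarith [Real.pi_gt_three]
  positivity

lemma bessel_zeros_finite {ν : ℝ} (hν : 0 ≤ ν) (μ : ℝ) :
    {x : ℝ | 0 < x ∧ x ≤ μ ∧ besselJ ν x = 0}.Finite := by
  obtain ⟨δ, hδ, hδz⟩ : ∃ δ : ℝ, 0 < δ ∧ ∀ x, 0 < x → x ≤ δ → besselJ ν x ≠ 0 := by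
    rcases hν.eq_or_lt with rfl | h
    · exact ⟨1, one_pos, fun x h0 h1 => (besselJ_zero_pos h0 h1).ne'⟩
    · exact ⟨ν, h, fun x h0 h1 => bessel_no_zero h h0 h1⟩
  by_contra hinf
  have hsub : {x : ℝ | 0 < x ∧ x ≤ μ ∧ besselJ ν x = 0} ⊆ Icc δ μ := by
    rintro x ⟨h0, h1, h2⟩
    refine ⟨?_, h1⟩
    by_contra h
    exact hδz x h0 (not_le.mp h).le h2
  obtain ⟨c, hc, hacc⟩ := Set.Infinite.exists_accPt_of_subset_isCompact hinf isCompact_Icc hsub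
  have hc0 : 0 < c := hδ.trans_le hc.1
  have hev : ∀ᶠ t in nhdsWithin c {c}ᶜ, besselJ ν t ≠ 0 := by
    by_cases hz : besselJ ν c = 0
    · exact (besselJ_hasDerivAt ν c hc0).eventually_ne (div_ne_zero (bessel_simple hν hc0 hz) hc0.ne')
    · exact ((besselJ_hasDerivAt ν c hc0).continuousAt.eventually_ne hz).filter_mono nhdsWithin_le_nhds
  rw [accPt_iff_frequently_nhdsNE] at hacc
  obtain ⟨t, ht1, ht2⟩ := (hacc.and_eventually hev).exists
  exact ht2 ht1.2.2

noncomputable def bF (ν x : ℝ) : ℝ := bphase ν x + 1 / 4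

lemma bF_strictMono {ν x x' : ℝ} (hν : 0 ≤ ν) (hx : ν < x) (h : x < x') : bF ν x < bF ν x' := by
  have hm : StrictMonoOn (bF ν) (Icc x x') := by
    apply strictMonoOn_of_hasDerivWithinAt_pos (convex_Icc x x') (f' := fun t => bP ν t / (π * t))
    · exact fun t ht => ((bphase_hasDerivAt hν (hx.trans_le ht.1)).add_const _).continuousAt.continuousWithinAt
    · exact fun t ht => ((bphase_hasDerivAt hν (hx.trans_le (interior_subset ht).1)).add_const _).hasDerivWithinAt
    · intro t ht
      have h1 := hx.trans_le (interior_subset ht).1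
      have := bP_pos hν h1
      have : 0 < t := hν.trans_lt h1
      positivity
  exact hm (left_mem_Icc.mpr h.le) (right_mem_Icc.mpr h.le) h

lemma bF_mono {ν x x' : ℝ} (hν : 0 ≤ ν) (hx : ν < x) (h : x ≤ x') : bF ν x ≤ bF ν x' := by
  rcases h.eq_or_lt with rfl | h
  · exact le_rfl
  · exact (bF_strictMono hν hx h).le

lemma bF_le_iff {ν x x' : ℝ} (hν : 0 ≤ ν) (hx : ν < x) (hx' : ν < x') :
    bF ν x ≤ bF ν x' ↔ x ≤ x' := by
  constructor
  · intro h
    by_contra hn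
    exact absurd (bF_strictMono hν hx' (not_le.mp hn)) (not_lt.mpr h)
  · exact bF_mono hν hx

lemma bF_reach {ν x : ℝ} (hν : 0 ≤ ν) (hx : ν < x) {T : ℝ} (hT : bF ν x ≤ T) :
    ∃ x', x ≤ x' ∧ bF ν x' = T := by
  obtain ⟨Y, hY1, hY2⟩ := ((Filter.eventually_ge_atTop x).and
    ((bphase_atTop ν).eventually_ge_atTop (π * (T - 1 / 4)))).exists
  have hc : ContinuousOn (bF ν) (Icc x Y) := fun t ht =>
    ((bphase_hasDerivAt hν (hx.trans_le ht.1)).add_const _).continuousAt.continuousWithinAt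
  have hY : T ≤ bF ν Y := by
    have := le_of_mul_le_mul_left hY2 Real.pi_pos
    unfold bF; linarith
  obtain ⟨x', hx', h2⟩ := intermediate_value_Icc hY1 hc ⟨hT, hY⟩
  exact ⟨x', hx'.1, h2⟩

lemma bz_sign {ν x : ℝ} (hν : 0 ≤ ν) (hx : ν < x) (hR : bR ν x ≤ 1 / 32) (k : ℤ)
    (h1 : k + 4 * bR ν x < bF ν x) (h2 : bF ν x < k + 1 - 4 * bR ν x) :
    0 < (-1 : ℝ) ^ k * bz ν x := by
  obtain ⟨a, b, ha, hb, hz, -⟩ := bessel_phase hν hx (by linarith)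
  have hRp := bR_pos hν hx
  change bz ν x = a * Real.sin (π * bF ν x) - b * Real.cos (π * bF ν x) at hz
  set δ := bF ν x - k with hδ
  rw [show π * bF ν x = π * δ + k * π by rw [hδ]; ring, Real.sin_add_int_mul_pi,
    Real.cos_add_int_mul_pi] at hz
  have hk : (-1 : ℝ) ^ k * (-1) ^ k = 1 := by
    rw [← mul_zpow]; norm_num
  have e : (-1 : ℝ) ^ k * bz ν x = a * Real.sin (π * δ) - b * Real.cos (π * δ) := by
    rw [hz]
    linear_combination (a * Real.sin (π * δ) - b * Real.cos (π * δ)) * hk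
  rw [e]
  have hs : 8 * bR ν x < Real.sin (π * δ) := by
    have hpi := Real.pi_pos
    rcases le_total δ (1 / 2) with h | h
    · have := Real.mul_le_sin (x := π * δ) (by apply mul_nonneg hpi.le; linarith) (by nlinarith)
      rw [show 2 / π * (π * δ) = 2 * δ by field_simp] at this
      linarith
    · have := Real.mul_le_sin (x := π * (1 - δ)) (by apply mul_nonneg hpi.le; linarith) (by nlinarith)
      rw [show 2 / π * (π * (1 - δ)) = 2 * (1 - δ) by field_simp,
        show π * (1 - δ) = π - π * δ by ring, Real.sin_pi_sub] at this
      linarith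
  have hbc : b * Real.cos (π * δ) ≤ |b| := by
    refine (le_abs_self _).trans ?_
    rw [abs_mul]
    nlinarith [Real.abs_cos_le_one (π * δ), abs_nonneg b]
  have : a * (8 * bR ν x) < a * Real.sin (π * δ) := by gcongr
  nlinarith [mul_pos ha hRp]

lemma bw_sign {ν x : ℝ} (hν : 0 ≤ ν) (hx : ν < x) (hR : bR ν x ≤ 1 / 32) (k : ℤ)
    (h1 : |bF ν x - k| ≤ 1 / 4) : 0 < (-1 : ℝ) ^ k * bw ν x := by
  obtain ⟨a, b, ha, hb, -, hz⟩ := bessel_phase hν hx (by linarith)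
  have hRp := bR_pos hν hx
  change bw ν x = a * Real.cos (π * bF ν x) + b * Real.sin (π * bF ν x) at hz
  set δ := bF ν x - k with hδ
  rw [show π * bF ν x = π * δ + k * π by rw [hδ]; ring, Real.sin_add_int_mul_pi,
    Real.cos_add_int_mul_pi] at hz
  have hk : (-1 : ℝ) ^ k * (-1) ^ k = 1 := by
    rw [← mul_zpow]; norm_num
  have e : (-1 : ℝ) ^ k * bw ν x = a * Real.cos (π * δ) + b * Real.sin (π * δ) := by
    rw [hz]
    linear_combination (a * Real.cos (π * δ) + b * Real.sin (π * δ)) * hk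
  rw [e]
  have hs : 1 / 2 ≤ Real.cos (π * δ) := by
    rw [← Real.cos_abs, abs_mul, abs_of_pos Real.pi_pos, ← Real.cos_pi_div_three]
    apply Real.cos_le_cos_of_nonneg_of_le_pi (by positivity) (by linarith [Real.pi_pos])
    nlinarith [Real.pi_pos]
  have hbc : -|b| ≤ b * Real.sin (π * δ) := by
    refine le_trans ?_ (neg_abs_le _)
    rw [abs_mul]
    nlinarith [Real.abs_sin_le_one (π * δ), abs_nonneg b]
  nlinarith

lemma bz_eq_zero_iff {ν x : ℝ} (hν : 0 ≤ ν) (hx : ν < x) : bz ν x = 0 ↔ besselJ ν x = 0 := by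
  unfold bz
  have := Real.sqrt_pos.mpr (bP_pos hν hx)
  simp [this.ne']

lemma zcount_mono {ν x x' : ℝ} (hν : 0 ≤ ν) (h : x ≤ x') : zcount ν x ≤ zcount ν x' := by
  unfold zcount
  apply Set.ncard_le_ncard _ (bessel_zeros_finite hν x')
  rintro t ⟨h0, h1, h2⟩
  exact ⟨h0, h1.trans h, h2⟩

lemma zcount_add {ν x x' : ℝ} (hν : 0 ≤ ν) (hx : ν < x) (h : x ≤ x') :
    zcount ν x' = zcount ν x + {t | x < t ∧ t ≤ x' ∧ besselJ ν t = 0}.ncard ∧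
    {t | x < t ∧ t ≤ x' ∧ besselJ ν t = 0}.Finite := by
  have hx0 := hν.trans_lt hx
  have hfin : {t | x < t ∧ t ≤ x' ∧ besselJ ν t = 0}.Finite := by
    apply (bessel_zeros_finite hν x').subset
    rintro t ⟨h0, h1, h2⟩
    exact ⟨hx0.trans h0, h1, h2⟩
  refine ⟨?_, hfin⟩
  unfold zcount
  rw [← Set.ncard_union_eq _ (bessel_zeros_finite hν x) hfin]
  · congr 1
    ext t
    constructor
    · rintro ⟨h0, h1, h2⟩
      rcases le_or_gt t x with h3 | h3
      · exact Or.inl ⟨h0, h3, h2⟩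
      · exact Or.inr ⟨h3, h1, h2⟩
    · rintro (⟨h0, h1, h2⟩ | ⟨h0, h1, h2⟩)
      · exact ⟨h0, h1.trans h, h2⟩
      · exact ⟨hx0.trans h0, h1, h2⟩
  · rw [Set.disjoint_left]
    rintro t ⟨_, h1, _⟩ ⟨h2, _, _⟩
    linarith

lemma count_A {ν x x' : ℝ} (hν : 0 ≤ ν) (hx : ν < x) (h : x ≤ x') (hR : bR ν x ≤ 1 / 32) (k : ℤ)
    (h1 : k + 4 * bR ν x < bF ν x) (h2 : bF ν x' < k + 1 - 4 * bR ν x) :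
    zcount ν x' = zcount ν x := by
  rw [(zcount_add hν hx h).1]
  have : {t | x < t ∧ t ≤ x' ∧ besselJ ν t = 0} = ∅ := by
    ext t
    simp only [mem_ofPred_eq, mem_empty_iff_false, iff_false]
    rintro ⟨h3, h4, h5⟩
    have hRt := bR_anti hν hx h3.le
    have := bz_sign hν (hx.trans h3) (hRt.trans hR) k
      (by linarith [bF_mono hν hx h3.le]) (by linarith [bF_mono hν (hx.trans h3) h4])
    rw [(bz_eq_zero_iff hν (hx.trans h3)).mpr h5] at this
    simp at this
  rw [this]; simp

lemma zero_near {ν t : ℝ} (hν : 0 ≤ ν) (hx : ν < t) (hR : bR ν t ≤ 1 / 32) (k : ℤ)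
    (h1 : |bF ν t - k| ≤ 1 / 2) (hz : besselJ ν t = 0) : |bF ν t - k| ≤ 1 / 4 := by
  by_contra hn
  push Not at hn
  have hz' := (bz_eq_zero_iff hν hx).mpr hz
  have hRp := bR_pos hν hx
  rw [abs_le] at h1
  rcases lt_abs.mp hn with h | h
  · have := bz_sign hν hx hR k (by linarith) (by linarith)
    rw [hz'] at this; simp at this
  · have := bz_sign hν hx hR (k - 1) (by push_cast; linarith) (by push_cast; linarith)
    rw [hz'] at this; simp at this

lemma count_B {ν x x' : ℝ} (hν : 0 ≤ ν) (hx : ν < x) (h : x ≤ x') (hR : bR ν x ≤ 1 / 32) (k : ℤ)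
    (h1 : k - 1 / 2 ≤ bF ν x) (h2 : bF ν x' ≤ k + 1 / 2) :
    zcount ν x' ≤ zcount ν x + 1 := by
  obtain ⟨e, hfin⟩ := zcount_add hν hx h
  rw [e]
  gcongr
  rw [Set.ncard_le_one hfin]
  have key : ∀ t1 t2, t1 ∈ {t | x < t ∧ t ≤ x' ∧ besselJ ν t = 0} →
      t2 ∈ {t | x < t ∧ t ≤ x' ∧ besselJ ν t = 0} → t1 < t2 → False := by
    rintro t1 t2 ⟨a1, a2, a3⟩ ⟨b1, b2, b3⟩ hlt
    have near : ∀ t, x < t → t ≤ x' → besselJ ν t = 0 → |bF ν t - k| ≤ 1 / 4 := by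
      intro t q1 q2 q3
      refine zero_near hν (hx.trans q1) ((bR_anti hν hx q1.le).trans hR) k ?_ q3
      rw [abs_le]
      constructor <;> linarith [bF_mono hν hx q1.le, bF_mono hν (hx.trans q1) q2]
    have n1 := abs_le.mp (near t1 a1 a2 a3)
    have n2 := abs_le.mp (near t2 b1 b2 b3)
    have hm : StrictMonoOn (fun t => (-1 : ℝ) ^ k * bz ν t) (Icc t1 t2) := by
      apply strictMonoOn_of_hasDerivWithinAt_pos (convex_Icc t1 t2)
        (f' := fun t => (-1 : ℝ) ^ k * (bP ν t / t * bw ν t))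
      · exact fun t ht => ((bz_hasDerivAt hν (hx.trans (a1.trans_le ht.1))).const_mul _).continuousAt.continuousWithinAt
      · exact fun t ht => ((bz_hasDerivAt hν (hx.trans (a1.trans_le (interior_subset ht).1))).const_mul _).hasDerivWithinAt
      · intro t ht
        have ht' := interior_subset ht
        have q := hx.trans (a1.trans_le ht'.1)
        have := bw_sign hν q ((bR_anti hν hx (a1.trans_le ht'.1).le).trans hR) k (by
          rw [abs_le]
          constructor <;> linarith [bF_mono hν (hx.trans a1) ht'.1, bF_mono hν q ht'.2])
        have hP := bP_pos hν q
        have ht0 : 0 < t := hν.trans_lt q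
        have hh : 0 < bP ν t / t := by positivity
        nlinarith [mul_pos hh this]
    have := hm (left_mem_Icc.mpr hlt.le) (right_mem_Icc.mpr hlt.le) hlt
    simp only [(bz_eq_zero_iff hν (hx.trans a1)).mpr a3, (bz_eq_zero_iff hν (hx.trans b1)).mpr b3] at this
    exact lt_irrefl _ this
  intro t1 ht1 t2 ht2
  by_contra hne
  rcases lt_or_gt_of_ne hne with h | h
  · exact key _ _ ht1 ht2 h
  · exact key _ _ ht2 ht1 h

lemma count_C {ν x x' : ℝ} (hν : 0 ≤ ν) (hx : ν < x) (h : x ≤ x') (hR : bR ν x ≤ 1 / 32) (k : ℤ)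
    (h1 : k - 1 + 4 * bR ν x < bF ν x) (h1' : bF ν x < k - 4 * bR ν x) (h2 : bF ν x' = k + 1 / 2) :
    zcount ν x + 1 ≤ zcount ν x' := by
  obtain ⟨e, hfin⟩ := zcount_add hν hx h
  rw [e]
  gcongr
  rw [Nat.one_le_iff_ne_zero, ← Nat.pos_iff_ne_zero, Set.ncard_pos hfin]
  have hRx' := (bR_anti hν hx h).trans hR
  have s1 := bz_sign hν hx hR (k - 1) (by push_cast; linarith) (by push_cast; linarith)
  have s2 := bz_sign hν (hx.trans_le h) hRx' k (by linarith) (by linarith)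
  have s1' : (-1 : ℝ) ^ k * bz ν x < 0 := by
    have : (-1 : ℝ) ^ k = - (-1 : ℝ) ^ (k - 1) := by
      rw [zpow_sub_one₀ (by norm_num)]; norm_num
    rw [this]; linarith
  have hc : ContinuousOn (fun t => (-1 : ℝ) ^ k * bz ν t) (Icc x x') := fun t ht =>
    ((bz_hasDerivAt hν (hx.trans_le ht.1)).const_mul _).continuousAt.continuousWithinAt
  obtain ⟨t, ht, ht2⟩ := intermediate_value_Ioo h hc ⟨s1', s2⟩
  refine ⟨t, ht.1, ht.2.le, ?_⟩
  rw [← bz_eq_zero_iff hν (hx.trans ht.1)]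
  have hk : (-1 : ℝ) ^ k ≠ 0 := zpow_ne_zero _ (by norm_num)
  exact (mul_eq_zero.mp ht2).resolve_left hk

lemma count_D {ν : ℝ} (hν : 0 ≤ ν) (n : ℕ) : ∀ (k : ℤ) (x x' : ℝ), ν < x → ν < x' → bR ν x ≤ 1 / 32 →
    bF ν x = k + 1 / 2 → bF ν x' = k + n + 1 / 2 → zcount ν x' = zcount ν x + n := by
  induction n with
  | zero =>
    intro k x x' hx hx' hR h1 h2
    have : x = x' := le_antisymm ((bF_le_iff hν hx hx').mp (by rw [h1, h2]; simp))
      ((bF_le_iff hν hx' hx).mp (by rw [h1, h2]; simp))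
    rw [this]; rfl
  | succ n ih =>
    intro k x x' hx hx' hR h1 h2
    obtain ⟨y, hy, hy2⟩ := bF_reach hν hx (T := k + 1 + 1 / 2) (by linarith)
    have hRp := bR_pos hν hx
    have hy' := hx.trans_le hy
    have i := ih (k + 1) y x' hy' hx' ((bR_anti hν hx hy).trans hR) (by push_cast; linarith)
      (by rw [h2]; push_cast; ring)
    have b := count_B hν hx hy hR (k + 1) (by push_cast; linarith) (by push_cast; linarith)
    have c := count_C hν hx hy hR (k + 1) (by push_cast; linarith) (by push_cast; linarith)
      (by push_cast; linarith)
    omega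

def bLaw (ν : ℝ) (M : ℤ) : Prop :=
  ∀ x, ν < x → bR ν x ≤ 1 / 32 → ∀ k : ℤ,
    (k + 4 * bR ν x < bF ν x → bF ν x < k + 1 - 4 * bR ν x → (zcount ν x : ℤ) = k + M) ∧
    (k - 1 / 2 ≤ bF ν x → bF ν x ≤ k + 1 / 2 →
      k - 1 + M ≤ (zcount ν x : ℤ) ∧ (zcount ν x : ℤ) ≤ k + M)

lemma exists_law {ν : ℝ} (hν : 0 ≤ ν) : ∃ M : ℤ, bLaw ν M := by
  obtain ⟨x₀, h1, h2⟩ := ((bR_eventually ν (ε := 1 / 32) (by norm_num)).and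
    (Filter.eventually_gt_atTop ν)).exists
  obtain ⟨xr, hxr, hF⟩ := bF_reach hν h2 (T := (⌈bF ν x₀⌉ : ℤ) + 1 / 2) (by linarith [Int.le_ceil (bF ν x₀)])
  set kr : ℤ := ⌈bF ν x₀⌉
  have hR := (bR_anti hν h2 hxr).trans h1
  have hνr := h2.trans_le hxr
  refine ⟨zcount ν xr - kr, ?_⟩
  have base : ∀ (k : ℤ) (x : ℝ), ν < x → bR ν x ≤ 1 / 32 → bF ν x = k + 1 / 2 →
      (zcount ν x : ℤ) = k + (zcount ν xr - kr) := by
    intro k x hx hRx hk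
    rcases le_total k kr with h | h
    · obtain ⟨n, hn⟩ := Int.le.dest h
      have hn' : (k : ℝ) + n = kr := by exact_mod_cast hn
      have := count_D hν n k x xr hx hνr hRx hk (by rw [hF, ← hn'])
      omega
    · obtain ⟨n, hn⟩ := Int.le.dest h
      have hn' : (kr : ℝ) + n = k := by exact_mod_cast hn
      have := count_D hν n kr xr x hνr hx hR hF (by rw [hk, ← hn'])
      omega
  intro x hx hRx k
  have hRp := bR_pos hν hx
  constructor
  · intro a1 a2
    rcases le_total (bF ν x) (k + 1 / 2) with h | h
    · obtain ⟨y, hy, hy2⟩ := bF_reach hν hx h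
      have := count_A hν hx hy hRx k a1 (by linarith)
      rw [← this]
      exact base k y (hx.trans_le hy) ((bR_anti hν hx hy).trans hRx) hy2
    · obtain ⟨y, hy, hy2⟩ := bF_reach hν hx (T := k + 1 + 1 / 2) (by linarith)
      have b := count_B hν hx hy hRx (k + 1) (by push_cast; linarith) (by push_cast; linarith)
      have c := count_C hν hx hy hRx (k + 1) (by push_cast; linarith) (by push_cast; linarith)
        (by push_cast; linarith)
      have := base (k + 1) y (hx.trans_le hy) ((bR_anti hν hx hy).trans hRx) (by push_cast; linarith)
      omega
  · intro a1 a2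
    obtain ⟨y, hy, hy2⟩ := bF_reach hν hx a2
    have b := count_B hν hx hy hRx k a1 hy2.le
    have c := zcount_mono hν hy
    have := base k y (hx.trans_le hy) ((bR_anti hν hx hy).trans hRx) hy2
    omega

lemma exists_sign_of_ne_zero {S : Set ℝ} (hS : IsPreconnected S) {f : ℝ → ℝ} (hf : ContinuousOn f S)
    (h0 : ∀ t ∈ S, f t ≠ 0) : ∃ s : ℝ, (s = 1 ∨ s = -1) ∧ ∀ t ∈ S, 0 < s * f t := by
  by_cases h : ∀ t ∈ S, 0 < f t
  · exact ⟨1, Or.inl rfl, fun t ht => by rw [one_mul]; exact h t ht⟩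
  · push Not at h
    obtain ⟨a, ha, hfa⟩ := h
    refine ⟨-1, Or.inr rfl, fun t ht => ?_⟩
    by_contra hn
    have : 0 ≤ f t := by linarith
    obtain ⟨c, hc, hc0⟩ := hS.intermediate_value ha ht hf ⟨hfa, this⟩
    exact h0 c hc hc0

lemma deriv_nonneg_of_right {f : ℝ → ℝ} {f' a b : ℝ} (hab : a < b) (h : HasDerivAt f f' a)
    (h0 : f a = 0) (hp : ∀ t ∈ Ioo a b, 0 < f t) : 0 ≤ f' := by
  have h1 := (hasDerivAt_iff_tendsto_slope.mp h).mono_left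
    (nhdsWithin_mono a (show Ioi a ⊆ {a}ᶜ from fun t ht => ne_of_gt ht))
  refine ge_of_tendsto h1 ?_
  filter_upwards [Ioo_mem_nhdsGT hab] with t ht
  rw [slope_def_field, h0, sub_zero]
  exact div_nonneg (hp t ht).le (by linarith [ht.1])

lemma deriv_nonpos_of_left {f : ℝ → ℝ} {f' a b : ℝ} (hab : a < b) (h : HasDerivAt f f' b)
    (h0 : f b = 0) (hp : ∀ t ∈ Ioo a b, 0 < f t) : f' ≤ 0 := by
  have h1 := (hasDerivAt_iff_tendsto_slope.mp h).mono_left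
    (nhdsWithin_mono b (show Iio b ⊆ {b}ᶜ from fun t ht => ne_of_lt ht))
  refine le_of_tendsto h1 ?_
  filter_upwards [Ioo_mem_nhdsLT hab] with t ht
  rw [slope_def_field, h0, sub_zero]
  exact div_nonpos_of_nonneg_of_nonpos (hp t ht).le (by linarith [ht.2])

lemma zcount_eq_card {ν : ℝ} (hν : 0 ≤ ν) (x : ℝ) :
    zcount ν x = (bessel_zeros_finite hν x).toFinset.card := by
  unfold zcount
  exact Set.ncard_eq_toFinset_card _ _

lemma besselJ_continuousOn (ν : ℝ) {S : Set ℝ} (hS : ∀ t ∈ S, 0 < t) : ContinuousOn (besselJ ν) S :=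
  fun t ht => (besselJ_hasDerivAt ν t (hS t ht)).continuousAt.continuousWithinAt

lemma interlace_up {ν : ℝ} (hν : 0 ≤ ν) (x : ℝ) : zcount ν x ≤ zcount (ν + 1) x + 1 := by
  rw [zcount_eq_card hν, zcount_eq_card (by linarith : 0 ≤ ν + 1)]
  apply Finset.card_le_of_interleaved
  intro a ha b hb hab _
  simp only [Finite.mem_toFinset, mem_ofPred_eq] at ha hb ⊢
  have hd : ∀ t, 0 < t → HasDerivAt (fun t => t ^ (-ν) * besselJ ν t) (-(t ^ (-ν) * besselJ (ν + 1) t)) t := by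
    intro t ht
    refine ((Real.hasDerivAt_rpow_const (p := -ν) (Or.inl ht.ne')).mul (besselJ_deriv_up ν t ht)).congr_deriv ?_
    rw [Real.rpow_sub_one ht.ne']
    field_simp
    ring
  obtain ⟨c, hc, hc2⟩ := exists_hasDerivAt_eq_zero hab
    (f := fun t => t ^ (-ν) * besselJ ν t) (fun t ht => (hd t (ha.1.trans_le ht.1)).continuousAt.continuousWithinAt)
    (by simp [ha.2.2, hb.2.2]) (fun t ht => hd t (ha.1.trans ht.1))
  have hc0 := ha.1.trans hc.1
  refine ⟨c, ⟨hc0, hc.2.le.trans hb.2.1, ?_⟩, hc.1, hc.2⟩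
  have := (Real.rpow_pos_of_pos hc0 (-ν)).ne'
  simpa [this] using hc2

lemma interlace_down {ν : ℝ} (hν : 0 ≤ ν) (x : ℝ) : zcount (ν + 1) x ≤ zcount ν x := by
  have hν1 : 0 ≤ ν + 1 := by linarith
  rw [zcount_eq_card hν, zcount_eq_card hν1]
  have h0 : (0:ℝ) ∉ (bessel_zeros_finite hν1 x).toFinset := by simp
  have : (insert 0 (bessel_zeros_finite hν1 x).toFinset).card ≤ (bessel_zeros_finite hν x).toFinset.card + 1 := by
    apply Finset.card_le_of_interleaved
    intro a ha b hb hab _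
    have ha0 : 0 ≤ a := by
      rcases Finset.mem_insert.mp ha with h | h
      · exact h.ge
      · simp at h; exact h.1.le
    have hb' : 0 < b ∧ b ≤ x ∧ besselJ (ν + 1) b = 0 := by
      rcases Finset.mem_insert.mp hb with h | h
      · linarith
      · simpa using h
    have hd : ∀ t, 0 < t → HasDerivAt (fun t => t ^ (ν + 1) * besselJ (ν + 1) t) (t ^ (ν + 1) * besselJ ν t) t := by
      intro t ht
      refine ((Real.hasDerivAt_rpow_const (p := ν + 1) (Or.inl ht.ne')).mul (besselJ_deriv_down (ν + 1) t ht)).congr_deriv ?_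
      rw [Real.rpow_sub_one ht.ne', add_sub_cancel_right]
      field_simp
      ring
    have hc0 : ContinuousWithinAt (fun t => t ^ (ν + 1) * besselJ (ν + 1) t) (Icc a b) 0 := by
      obtain ⟨C, hC, hCb⟩ := besselJ_bounded (ν + 1) hν1
      unfold ContinuousWithinAt
      beta_reduce
      rw [Real.zero_rpow (by linarith), zero_mul]
      have h1 : Filter.Tendsto (fun t : ℝ => t ^ (ν + 1) * C) (nhdsWithin 0 (Icc a b)) (nhds 0) := by
        have := (Real.continuousAt_rpow_const 0 (ν + 1) (Or.inr hν1)).tendsto.mul_const C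
        rw [Real.zero_rpow (by linarith), zero_mul] at this
        exact this.mono_left nhdsWithin_le_nhds
      refine squeeze_zero_norm' ?_ h1
      filter_upwards [self_mem_nhdsWithin] with t ht
      rw [norm_mul, Real.norm_eq_abs, Real.norm_eq_abs, abs_of_nonneg (Real.rpow_nonneg (ha0.trans ht.1) _)]
      rcases (ha0.trans ht.1).eq_or_lt with h | h
      · rw [← h, Real.zero_rpow (by linarith)]; simp
      · gcongr
        exact hCb t h
    have hcont : ContinuousOn (fun t => t ^ (ν + 1) * besselJ (ν + 1) t) (Icc a b) := by
      intro t ht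
      rcases (ha0.trans ht.1).eq_or_lt with h | h
      · rw [← h]; exact hc0
      · exact (hd t h).continuousAt.continuousWithinAt
    have hfa : a ^ (ν + 1) * besselJ (ν + 1) a = 0 := by
      rcases Finset.mem_insert.mp ha with h | h
      · rw [h, Real.zero_rpow (by linarith), zero_mul]
      · simp at h; rw [h.2.2, mul_zero]
    obtain ⟨c, hc, hc2⟩ := exists_hasDerivAt_eq_zero hab hcont
      (by simp only [hfa, hb'.2.2, mul_zero]) (fun t ht => hd t (ha0.trans_lt ht.1))
    have hc0 := ha0.trans_lt hc.1
    refine ⟨c, ?_, hc.1, hc.2⟩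
    simp only [Finite.mem_toFinset, mem_ofPred_eq]
    refine ⟨hc0, hc.2.le.trans hb'.2.1, ?_⟩
    have := (Real.rpow_pos_of_pos hc0 (ν + 1)).ne'
    simpa [this] using hc2
  rw [Finset.card_insert_of_notMem h0] at this
  omega

lemma law_eval {ν : ℝ} {M : ℤ} (hM : bLaw ν M) (c : ℝ) (j : ℤ)
    (h1 : j + 1 / 4 ≤ c - ν / 2 + 1 / 4) (h2 : c - ν / 2 + 1 / 4 ≤ j + 3 / 4) :
    ∀ᶠ K : ℕ in Filter.atTop, (zcount ν (π * (K + c)) : ℤ) = K + j + M := by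
  have ht : Filter.Tendsto (fun K : ℕ => π * ((K : ℝ) + c)) Filter.atTop Filter.atTop :=
    (Filter.tendsto_atTop_add_const_right _ c tendsto_natCast_atTop_atTop).const_mul_atTop Real.pi_pos
  have ha := (Metric.tendsto_nhds.mp (bphase_asymp ν)) (1 / 16) (by norm_num)
  filter_upwards [ht.eventually ha, ht.eventually (bR_eventually ν (ε := 1 / 64) (by norm_num)),
    ht.eventually (Filter.eventually_gt_atTop ν)] with K e1 e2 e3
  set x := π * ((K : ℝ) + c) with hx
  rw [Real.dist_eq, sub_zero] at e1
  have e4 : |bF ν x - (K + (c - ν / 2 + 1 / 4))| ≤ 1 / 16 := by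
    have : bF ν x - (K + (c - ν / 2 + 1 / 4)) = (π * bphase ν x - (x - ν * π / 2)) / π := by
      unfold bF; rw [eq_div_iff Real.pi_pos.ne', hx]; ring
    rw [this, abs_div, abs_of_pos Real.pi_pos, div_le_iff₀ Real.pi_pos]
    nlinarith [Real.pi_gt_three]
  rw [abs_le] at e4
  have := (hM x e3 (by linarith) (K + j)).1 (by push_cast; linarith) (by push_cast; linarith)
  exact this

lemma law_succ {ν : ℝ} (hν : 0 ≤ ν) {M M' : ℤ} (hM : bLaw ν M) (hM' : bLaw (ν + 1) M') : M' = M := by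
  obtain ⟨K, ⟨h1, h2⟩, h3, h4⟩ := (((law_eval hM (ν / 2) 0 (by push_cast; linarith) (by push_cast; linarith)).and
    (law_eval hM' (ν / 2) (-1) (by push_cast; linarith) (by push_cast; linarith))).and
    ((law_eval hM (ν / 2 + 1 / 2) 0 (by push_cast; linarith) (by push_cast; linarith)).and
    (law_eval hM' (ν / 2 + 1 / 2) 0 (by push_cast; linarith) (by push_cast; linarith)))).exists
  have i1 := interlace_up hν (π * (K + ν / 2))
  have i3 := interlace_down hν (π * (K + (ν / 2 + 1 / 2)))
  omega

noncomputable def bW (ν t : ℝ) : ℝ :=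
  ((besselJ ν t / 2 + besselV ν t) * Real.sin t - t * besselJ ν t * Real.cos t) / √t

lemma bW_hasDerivAt {ν t : ℝ} (ht : 0 < t) :
    HasDerivAt (bW ν) ((ν ^ 2 - 1 / 4) / t ^ 2 * √t * (besselJ ν t * Real.sin t)) t := by
  have hS : 0 < √t := Real.sqrt_pos.mpr ht
  have hJ := besselJ_hasDerivAt ν t ht
  have hV := besselV_hasDerivAt ν t ht
  have hq := (hasDerivAt_id t).sqrt ht.ne'
  have h : HasDerivAt (bW ν) _ t := ((((hJ.div_const 2).add hV).mul (Real.hasDerivAt_sin t)).sub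
    (((hasDerivAt_id t).mul hJ).mul (Real.hasDerivAt_cos t))).div hq hS.ne'
  refine h.congr_deriv ?_
  simp only [id, Pi.add_apply, Pi.mul_apply, Pi.sub_apply]
  have e : t = √t ^ 2 := (Real.sq_sqrt ht.le).symm
  have e4 : √t ^ 4 = t ^ 2 := by rw [show 4 = 2 * 2 by norm_num, pow_mul, ← e]
  field_simp
  rw [show √t ^ 2 = t from e.symm]
  ring_nf
  try rw [e4]
  try ring

lemma bW_tendsto_zero {ν : ℝ} (hν : 0 ≤ ν) : Filter.Tendsto (bW ν) (nhdsWithin 0 (Ioi 0)) (nhds 0) := by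
  obtain ⟨C, hC, hCb⟩ := besselJ_bounded ν hν
  obtain ⟨D, hD, hDb⟩ := besselJ_bounded (ν + 1) (by linarith)
  have h1 : Filter.Tendsto (fun t : ℝ => (C / 2 + (ν * C + D) + C) * √t) (nhdsWithin 0 (Ioi 0)) (nhds 0) := by
    have := (Real.continuous_sqrt.tendsto 0).const_mul (C / 2 + (ν * C + D) + C)
    rw [Real.sqrt_zero, mul_zero] at this
    exact this.mono_left nhdsWithin_le_nhds
  refine squeeze_zero_norm' ?_ h1
  filter_upwards [Ioo_mem_nhdsGT (show (0:ℝ) < 1 by norm_num)] with t ht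
  have ht0 := ht.1
  have hS : 0 < √t := Real.sqrt_pos.mpr ht0
  have hv : |besselV ν t| ≤ ν * C + D := by
    unfold besselV
    refine (abs_sub _ _).trans ?_
    rw [abs_mul, abs_mul, abs_of_nonneg hν, abs_of_pos ht0]
    have := hCb t ht0
    have := hDb t ht0
    gcongr
    nlinarith [abs_nonneg (besselJ (ν + 1) t), ht.2]
  have hs : |Real.sin t| ≤ t := by
    rw [abs_of_nonneg (Real.sin_nonneg_of_nonneg_of_le_pi ht0.le (by linarith [ht.2, Real.pi_gt_three]))]
    exact Real.sin_le ht0.le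
  have hy := hCb t ht0
  unfold bW
  rw [norm_div, Real.norm_eq_abs, Real.norm_eq_abs, abs_of_pos hS, div_le_iff₀ hS, mul_assoc _ (√t),
    Real.mul_self_sqrt ht0.le]
  refine (abs_sub _ _).trans ?_
  rw [abs_mul, abs_mul, abs_mul, abs_of_pos ht0, add_mul]
  have h2 : |besselJ ν t / 2 + besselV ν t| ≤ C / 2 + (ν * C + D) := by
    refine (abs_add_le _ _).trans ?_
    rw [abs_div, abs_of_pos (show (0:ℝ) < 2 by norm_num)]
    gcongr
  have h3 := Real.abs_cos_le_one t
  have h4 : t * |besselJ ν t| * |Real.cos t| ≤ t * C * 1 := by gcongr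
  have h5 : |besselJ ν t / 2 + besselV ν t| * |Real.sin t| ≤ (C / 2 + (ν * C + D)) * t := by gcongr
  linarith

lemma sign_sin_nonneg (j : ℕ) {t : ℝ} (h1 : j * π ≤ t) (h2 : t ≤ (j + 1) * π) :
    0 ≤ (-1 : ℝ) ^ j * Real.sin t := by
  have : Real.sin t = (-1) ^ j * Real.sin (t - j * π) := by
    rw [← Real.sin_add_nat_mul_pi]; congr 1; ring
  rw [this, ← mul_assoc, ← mul_pow]
  norm_num
  exact Real.sin_nonneg_of_nonneg_of_le_pi (by linarith) (by linarith)

lemma sign_sin_pos (j : ℕ) {t : ℝ} (h1 : j * π < t) (h2 : t < (j + 1) * π) :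
    0 < (-1 : ℝ) ^ j * Real.sin t := by
  have : Real.sin t = (-1) ^ j * Real.sin (t - j * π) := by
    rw [← Real.sin_add_nat_mul_pi]; congr 1; ring
  rw [this, ← mul_assoc, ← mul_pow]
  norm_num
  exact Real.sin_pos_of_pos_of_lt_pi (by linarith) (by linarith)

lemma sturm_A {ν : ℝ} (hν : 0 ≤ ν) (hν2 : ν ≤ 1 / 2) (j : ℕ) :
    ∃ t, j * π < t ∧ t ≤ (j + 1) * π ∧ besselJ ν t = 0 := by
  by_contra hn
  push Not at hn
  have hpi := Real.pi_pos
  set a : ℝ := j * π with ha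
  set b : ℝ := (j + 1) * π with hb
  have hab : a < b := by rw [ha, hb]; linarith
  have ha0 : 0 ≤ a := by positivity
  obtain ⟨s, hs, hsp⟩ := exists_sign_of_ne_zero (S := Ioc a b) isPreconnected_Ioc (f := besselJ ν)
    (besselJ_continuousOn ν fun t ht => ha0.trans_lt ht.1) (fun t ht => hn t ht.1 ht.2)
  set H : ℝ → ℝ := fun t => s * (-1) ^ j * bW ν t with hH
  have hb0 : 0 < b := ha0.trans_lt hab
  have hσ : ((-1 : ℝ) ^ j) * (-1) ^ j = 1 := by rw [← mul_pow]; norm_num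
  have hcosb : Real.cos b = -(-1) ^ j := by
    rw [show b = π + j * π by rw [hb]; ring, Real.cos_add_nat_mul_pi]; simp
  have hsinb : Real.sin b = 0 := by
    rw [show b = ((j + 1 : ℕ) : ℝ) * π by rw [hb]; push_cast; ring]; exact Real.sin_nat_mul_pi _
  have hHb : 0 < H b := by
    have h1 := hsp b ⟨hab, le_rfl⟩
    have : H b = (s * besselJ ν b) * (b / √b) := by
      simp only [hH, bW]
      rw [hcosb, hsinb]
      linear_combination (s * besselJ ν b) * (b / √b) * hσ
    rw [this]
    have := Real.sqrt_pos.mpr hb0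
    positivity
  have hanti : ∀ t ∈ Ioo a b, H b ≤ H t := by
    intro t ht
    refine le_of_deriv_nonpos ht.2.le (fun r hr => (bW_hasDerivAt (ha0.trans_lt (ht.1.trans_le hr.1))).const_mul _) ?_
    intro r hr
    have hr0 := ha0.trans_lt (ht.1.trans_le hr.1)
    have e1 := hsp r ⟨ht.1.trans_le hr.1, hr.2⟩
    have e2 := sign_sin_nonneg j (t := r) (ht.1.trans_le hr.1).le hr.2
    have e3 : 0 ≤ (1 / 4 - ν ^ 2) / r ^ 2 * √r := by
      apply mul_nonneg _ (Real.sqrt_nonneg _)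
      apply div_nonneg _ (by positivity)
      nlinarith
    have := mul_nonneg e3 (mul_nonneg e1.le e2)
    have e : s * (-1) ^ j * ((ν ^ 2 - 1 / 4) / r ^ 2 * √r * (besselJ ν r * Real.sin r)) =
      -((1 / 4 - ν ^ 2) / r ^ 2 * √r * (s * besselJ ν r * ((-1) ^ j * Real.sin r))) := by ring
    rw [e]; linarith
  have hlim : ∃ L ≤ 0, Filter.Tendsto H (nhdsWithin a (Ioi a)) (nhds L) := by
    rcases Nat.eq_zero_or_pos j with h | h
    · refine ⟨0, le_rfl, ?_⟩
      have : a = 0 := by rw [ha, h]; simp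
      rw [this]
      simpa using (bW_tendsto_zero hν).const_mul (s * (-1) ^ j)
    · have ha1 : 0 < a := by rw [ha]; positivity
      refine ⟨H a, ?_, ((bW_hasDerivAt ha1).const_mul _).continuousAt.tendsto.mono_left nhdsWithin_le_nhds⟩
      have hcosa : Real.cos a = (-1) ^ j := Real.cos_nat_mul_pi j
      have hsina : Real.sin a = 0 := Real.sin_nat_mul_pi j
      have hya : 0 ≤ s * besselJ ν a := by
        have ht : Filter.Tendsto (fun t => s * besselJ ν t) (nhdsWithin a (Ioi a)) (nhds (s * besselJ ν a)) :=
          ((besselJ_hasDerivAt ν a ha1).const_mul s).continuousAt.tendsto.mono_left nhdsWithin_le_nhds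
        refine ge_of_tendsto ht ?_
        filter_upwards [Ioo_mem_nhdsGT hab] with t ht
        exact (hsp t ⟨ht.1, ht.2.le⟩).le
      have : H a = -((s * besselJ ν a) * (a / √a)) := by
        simp only [hH, bW]
        rw [hcosa, hsina]
        linear_combination -((s * besselJ ν a) * (a / √a)) * hσ
      rw [this]
      have := Real.sqrt_pos.mpr ha1
      have : 0 ≤ (s * besselJ ν a) * (a / √a) := by positivity
      linarith
  obtain ⟨L, hL, hLt⟩ := hlim
  have : H b ≤ L := by
    refine ge_of_tendsto hLt ?_
    filter_upwards [Ioo_mem_nhdsGT hab] with t ht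
    exact hanti t ht
  linarith

lemma sturm_B_core {ν : ℝ} (hν : 1 / 2 ≤ ν) (j : ℕ) {a b : ℝ} (haj : j * π ≤ a) (hab : a < b)
    (hbj : b < (j + 1) * π) (ha : a = 0 ∨ besselJ ν a = 0) (hb : besselJ ν b = 0)
    (hne : ∀ t ∈ Ioo a b, besselJ ν t ≠ 0) : False := by
  have hpi := Real.pi_pos
  have hν0 : 0 ≤ ν := by linarith
  have ha0 : 0 ≤ a := le_trans (by positivity) haj
  have hb0 : 0 < b := ha0.trans_lt hab
  obtain ⟨s, hs, hsp⟩ := exists_sign_of_ne_zero (S := Ioo a b) isPreconnected_Ioo (f := besselJ ν)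
    (besselJ_continuousOn ν fun t ht => ha0.trans_lt ht.1) hne
  set H : ℝ → ℝ := fun t => s * (-1) ^ j * bW ν t with hH
  have hs0 : s ≠ 0 := by rcases hs with h | h <;> rw [h] <;> norm_num
  have hHz : ∀ t, 0 < t → besselJ ν t = 0 → H t = (s * (besselV ν t / t)) * ((-1) ^ j * Real.sin t) * (t / √t) := by
    intro t ht hz
    have := Real.sqrt_pos.mpr ht
    simp only [hH, bW, hz]
    field_simp
    ring
  have hHb : H b < 0 := by
    rw [hHz b hb0 hb]
    have h1 : s * (besselV ν b / b) ≤ 0 := deriv_nonpos_of_left hab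
      ((besselJ_hasDerivAt ν b hb0).const_mul s) (by simp [hb]) hsp
    have h2 : s * (besselV ν b / b) ≠ 0 :=
      mul_ne_zero hs0 (div_ne_zero (bessel_simple hν0 hb0 hb) hb0.ne')
    have h3 := sign_sin_pos j (haj.trans_lt hab) hbj
    have h4 : 0 < b / √b := by have := Real.sqrt_pos.mpr hb0; positivity
    have h5 := mul_pos (mul_pos (neg_pos.mpr (lt_of_le_of_ne h1 h2)) h3) h4
    linarith
  have hmono : ∀ t ∈ Ioo a b, H t ≤ H b := by
    intro t ht
    have := le_of_deriv_nonpos (f := fun t => -H t) ht.2.le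
      (fun r hr => ((bW_hasDerivAt (ha0.trans_lt (ht.1.trans_le hr.1))).const_mul _).neg) (by
      intro r hr
      have hr0 := ha0.trans_lt (ht.1.trans_le hr.1)
      have e1 : 0 ≤ s * besselJ ν r := by
        rcases hr.2.eq_or_lt with h | h
        · rw [h, hb, mul_zero]
        · exact (hsp r ⟨ht.1.trans_le hr.1, h⟩).le
      have e2 := sign_sin_nonneg j (t := r) (haj.trans (ht.1.trans_le hr.1).le) (hr.2.trans hbj.le)
      have e3 : 0 ≤ (ν ^ 2 - 1 / 4) / r ^ 2 * √r := by
        apply mul_nonneg _ (Real.sqrt_nonneg _)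
        apply div_nonneg _ (by positivity)
        nlinarith
      have := mul_nonneg e3 (mul_nonneg e1 e2)
      have e : s * (-1) ^ j * ((ν ^ 2 - 1 / 4) / r ^ 2 * √r * (besselJ ν r * Real.sin r)) =
        ((ν ^ 2 - 1 / 4) / r ^ 2 * √r * (s * besselJ ν r * ((-1) ^ j * Real.sin r))) := by ring
      rw [e]; linarith)
    linarith
  have hlim : ∃ L ≥ 0, Filter.Tendsto H (nhdsWithin a (Ioi a)) (nhds L) := by
    rcases ha0.eq_or_lt with h | h
    · refine ⟨0, le_rfl, ?_⟩
      rw [← h]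
      simpa using (bW_tendsto_zero hν0).const_mul (s * (-1) ^ j)
    · refine ⟨H a, ?_, ((bW_hasDerivAt h).const_mul _).continuousAt.tendsto.mono_left nhdsWithin_le_nhds⟩
      have hz : besselJ ν a = 0 := ha.resolve_left h.ne'
      rw [hHz a h hz]
      have h1 : 0 ≤ s * (besselV ν a / a) := deriv_nonneg_of_right hab
        ((besselJ_hasDerivAt ν a h).const_mul s) (by simp [hz]) hsp
      have h3 := sign_sin_nonneg j haj (hab.trans hbj).le
      positivity
  obtain ⟨L, hL, hLt⟩ := hlim
  have : L ≤ H b := by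
    refine le_of_tendsto hLt ?_
    filter_upwards [Ioo_mem_nhdsGT hab] with t ht
    exact hmono t ht
  linarith

lemma sturm_B {ν : ℝ} (hν : 1 / 2 ≤ ν) (j : ℕ) {a b : ℝ} (haj : j * π ≤ a) (hab : a < b)
    (hbj : b < (j + 1) * π) (ha : a = 0 ∨ besselJ ν a = 0) (hb : besselJ ν b = 0) : False := by
  have hν0 : 0 ≤ ν := by linarith
  have hpi := Real.pi_pos
  have ha0 : 0 ≤ a := le_trans (by positivity) haj
  set T := (bessel_zeros_finite hν0 b).toFinset.filter (fun t => a < t) with hT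
  have hmem : ∀ t, t ∈ T ↔ (0 < t ∧ t ≤ b ∧ besselJ ν t = 0) ∧ a < t := by
    intro t; simp [hT]
  have hne : T.Nonempty := ⟨b, (hmem b).mpr ⟨⟨ha0.trans_lt hab, le_rfl, hb⟩, hab⟩⟩
  have hm := (hmem _).mp (T.min'_mem hne)
  refine sturm_B_core hν j haj hm.2 (hm.1.2.1.trans_lt hbj) ha hm.1.2.2 ?_
  intro t ht hz
  have := T.min'_le t ((hmem t).mpr ⟨⟨ha0.trans_lt ht.1, ht.2.le.trans hm.1.2.1, hz⟩, ht.1⟩)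
  linarith [ht.2]

lemma zcount_ge {ν : ℝ} (hν : 0 ≤ ν) (hν2 : ν ≤ 1 / 2) (K : ℕ) : K ≤ zcount ν (π * (K + 1 / 2)) := by
  choose z hz1 hz2 hz3 using sturm_A hν hν2
  have hpi := Real.pi_pos
  rw [zcount_eq_card hν]
  have h : (Finset.range K).card ≤ (bessel_zeros_finite hν (π * (K + 1 / 2))).toFinset.card := by
    apply Finset.card_le_card_of_injOn z
    · intro j hj
      simp only [Finset.coe_range, mem_Iio] at hj
      simp only [Finite.coe_toFinset, mem_ofPred_eq]
      refine ⟨lt_of_le_of_lt (by positivity) (hz1 j), (hz2 j).trans ?_, hz3 j⟩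
      have : (j : ℝ) + 1 ≤ K := by exact_mod_cast hj
      nlinarith
    · intro i _ j _ hij
      have key : ∀ i j : ℕ, i < j → z i < z j := by
        intro i j h
        have : (i : ℝ) + 1 ≤ j := by exact_mod_cast h
        calc z i ≤ (i + 1) * π := hz2 i
          _ ≤ j * π := by gcongr
          _ < z j := hz1 j
      rcases lt_trichotomy i j with h | h | h
      · exact absurd hij (key i j h).ne
      · exact h
      · exact absurd hij (key j i h).ne'
  simpa using h

lemma zcount_le {ν : ℝ} (hν : 1 / 2 ≤ ν) (K : ℕ) : zcount ν (π * (K + 1 / 2)) ≤ K := by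
  have hpi := Real.pi_pos
  have hν0 : 0 ≤ ν := by linarith
  rw [zcount_eq_card hν0]
  have h : (bessel_zeros_finite hν0 (π * (K + 1 / 2))).toFinset.card ≤ (Finset.Icc 1 K).card := by
    apply Finset.card_le_card_of_injOn (fun t => ⌊t / π⌋₊)
    · intro t ht
      simp only [Finite.coe_toFinset, mem_ofPred_eq] at ht
      simp only [Finset.coe_Icc, mem_Icc]
      constructor
      · rw [Nat.one_le_floor_iff]
        by_contra hn
        push Not at hn
        rw [div_lt_one hpi] at hn
        exact sturm_B hν 0 (a := 0) (b := t) (by simp) ht.1 (by simpa using hn) (Or.inl rfl) ht.2.2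
      · rw [← Nat.lt_succ_iff, Nat.floor_lt (by have := ht.1; positivity), div_lt_iff₀ hpi]
        push_cast
        nlinarith [ht.2.1]
    · intro a ha b hb hab
      simp only [Finite.coe_toFinset, mem_ofPred_eq] at ha hb hab
      have key : ∀ a b : ℝ, 0 < a → besselJ ν a = 0 → besselJ ν b = 0 → a < b → ⌊a / π⌋₊ = ⌊b / π⌋₊ → False := by
        intro a b ha hza hzb hlt he
        refine sturm_B hν ⌊a / π⌋₊ (a := a) (b := b) ?_ hlt ?_ (Or.inr hza) hzb
        · rw [← le_div_iff₀ hpi]; exact Nat.floor_le (by positivity)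
        · rw [he, ← div_lt_iff₀ hpi]; exact Nat.lt_floor_add_one _
      rcases lt_trichotomy a b with h | h | h
      · exact (key a b ha.1 ha.2.2 hb.2.2 h hab).elim
      · exact h
      · exact (key b a hb.1 hb.2.2 ha.2.2 h hab.symm).elim
  simpa using h

lemma law_half : bLaw (1 / 2) 0 := by
  obtain ⟨M, hM⟩ := exists_law (ν := 1 / 2) (by norm_num)
  obtain ⟨K, hK⟩ := (law_eval hM (1 / 2) 0 (by norm_num) (by norm_num)).exists
  have h1 := zcount_ge (ν := 1 / 2) (by norm_num) le_rfl K
  have h2 := zcount_le (ν := 1 / 2) le_rfl K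
  have : M = 0 := by omega
  rwa [← this]

lemma law_zero : bLaw 0 0 := by
  obtain ⟨M, hM⟩ := exists_law (ν := 0) le_rfl
  obtain ⟨M', hM'⟩ := exists_law (ν := 0 + 1) (by norm_num)
  have he := law_succ le_rfl hM hM'
  obtain ⟨K, hK⟩ := (law_eval hM (1 / 2) 0 (by norm_num) (by norm_num)).exists
  obtain ⟨K', hK'⟩ := (law_eval hM' (1 / 2) 0 (by norm_num) (by norm_num)).exists
  have h1 := zcount_ge (ν := 0) le_rfl (by norm_num) K
  have h2 := zcount_le (ν := 0 + 1) (by norm_num) K'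
  have : M = 0 := by omega
  rwa [← this]

lemma law_add_nat {ν : ℝ} (hν : 0 ≤ ν) (h : bLaw ν 0) (n : ℕ) : bLaw (ν + n) 0 := by
  induction n with
  | zero => simpa using h
  | succ n ih =>
    obtain ⟨M, hM⟩ := exists_law (ν := ν + n + 1) (by positivity)
    have := law_succ (by positivity) ih hM
    rw [this] at hM
    rw [show ν + ((n + 1 : ℕ) : ℝ) = ν + n + 1 by push_cast; ring]
    exact hM

/-- the counting law for all orders occurring in the ball problem -/
lemma law_ball (d n : ℕ) (hd : 3 ≤ d) : bLaw ((n : ℝ) + (d : ℝ) / 2 - 1) 0 := by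
  rcases Nat.even_or_odd' d with ⟨m, hm | hm⟩
  · have := law_add_nat le_rfl law_zero (n + (m - 1))
    rw [hm]
    convert this using 1
    rw [Nat.cast_add n, Nat.cast_sub (show 1 ≤ m by omega)]
    push_cast; ring
  · have := law_add_nat (by norm_num) law_half (n + (m - 1))
    rw [hm]
    convert this using 1
    rw [Nat.cast_add n, Nat.cast_sub (show 1 ≤ m by omega)]
    push_cast; ring

lemma sin_sub_lower {θ : ℝ} (h0 : 0 ≤ θ) (h1 : θ ≤ π / 2) :
    2 / (3 * π) * θ ^ 3 ≤ Real.sin θ - θ * Real.cos θ := by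
  have hpi := Real.pi_pos
  have h := le_of_deriv_nonpos (f := fun t => 2 / (3 * π) * t ^ 3 - (Real.sin t - t * Real.cos t)) h0
    (fun t ht => ((hasDerivAt_pow 3 t).const_mul _).sub
      ((Real.hasDerivAt_sin t).sub ((hasDerivAt_id t).mul (Real.hasDerivAt_cos t)))) (by
    intro t ht
    have := Real.mul_le_sin (x := t) ht.1 (ht.2.trans h1)
    have h2 := mul_le_mul_of_nonneg_left this ht.1
    have e : 2 / (3 * π) * ((3 : ℕ) * t ^ (3 - 1)) = t * (2 / π * t) := by
      norm_num; field_simp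
    simp only [id]
    rw [e]; linarith)
  norm_num at h
  linarith

lemma bphase_theta {ν x : ℝ} (hν : 0 ≤ ν) (hx : ν ≤ x) (hx0 : 0 < x) :
    π * bphase ν x = x * (Real.sin (Real.arccos (ν / x)) -
      Real.arccos (ν / x) * Real.cos (Real.arccos (ν / x))) := by
  have h1 : 0 ≤ ν / x := by positivity
  have h2 : ν / x ≤ 1 := (div_le_one hx0).mpr hx
  rw [Real.sin_arccos, Real.cos_arccos (by linarith) h2]
  unfold bphase gfun
  field_simp

lemma arccos_bounds {ν x : ℝ} (hν : 0 ≤ ν) (hx : ν < x) :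
    0 < Real.arccos (ν / x) ∧ Real.arccos (ν / x) ≤ π / 2 := by
  have hx0 := hν.trans_lt hx
  constructor
  · exact Real.arccos_pos.mpr ((div_lt_one hx0).mpr hx)
  · exact Real.arccos_le_pi_div_two.mpr (by positivity)

lemma bphase_lower {ν x : ℝ} (hν : 0 ≤ ν) (hx : ν < x) :
    x * (2 / (3 * π) * Real.arccos (ν / x) ^ 3) ≤ π * bphase ν x := by
  have hx0 := hν.trans_lt hx
  obtain ⟨h1, h2⟩ := arccos_bounds hν hx
  rw [bphase_theta hν hx.le hx0]
  gcongr
  exact sin_sub_lower h1.le h2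

lemma bphase_pos {ν x : ℝ} (hν : 0 ≤ ν) (hx : ν < x) : 0 < bphase ν x := by
  have hx0 := hν.trans_lt hx
  obtain ⟨h1, h2⟩ := arccos_bounds hν hx
  have h := bphase_lower hν hx
  have hpi := Real.pi_pos
  have : 0 < x * (2 / (3 * π) * Real.arccos (ν / x) ^ 3) := by positivity
  exact pos_of_mul_pos_right (this.trans_le h) hpi.le

lemma bphase_self {ν : ℝ} (hν : 0 < ν) : bphase ν ν = 0 := by
  unfold bphase gfun; rw [div_self hν.ne']; simp

/-- `f θ ≥ (1/4) (x-ν)²/x` -/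
lemma bphase_mul_theta {ν x : ℝ} (hν : 0 ≤ ν) (hx : ν < x) :
    1 / 4 * ((x - ν) ^ 2 / x) ≤ bphase ν x * Real.arccos (ν / x) := by
  have hx0 := hν.trans_lt hx
  obtain ⟨h1, h2⟩ := arccos_bounds hν hx
  have h := bphase_lower hν hx
  have hpi := Real.pi_pos
  have hpi2 : π < 3.15 := Real.pi_lt_d2
  set θ := Real.arccos (ν / x) with hθ
  have hc : Real.cos θ = ν / x := by
    rw [hθ]; exact Real.cos_arccos (by have : 0 ≤ ν / x := by positivity
                                       linarith) ((div_le_one hx0).mpr hx.le)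
  have h3 := Real.one_sub_sq_div_two_le_cos (x := θ)
  rw [hc] at h3
  have h4 : 2 * ((x - ν) / x) ≤ θ ^ 2 := by
    rw [show (x - ν) / x = 1 - ν / x by field_simp]; linarith
  have hq : 0 < (x - ν) / x := div_pos (by linarith) hx0
  have h5 : 4 * ((x - ν) / x) ^ 2 ≤ θ ^ 4 := by nlinarith
  have h6 : x * (2 / (3 * π) * θ ^ 4) ≤ π * (bphase ν x * θ) := by
    have := mul_le_mul_of_nonneg_right h h1.le
    calc _ = x * (2 / (3 * π) * θ ^ 3) * θ := by ring
      _ ≤ _ := this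
      _ = _ := by ring
  have h7 : x * (2 / (3 * π) * (4 * ((x - ν) / x) ^ 2)) ≤ π * (bphase ν x * θ) := by
    refine le_trans ?_ h6
    gcongr
  have e : x * (2 / (3 * π) * (4 * ((x - ν) / x) ^ 2)) = 8 / (3 * π) * ((x - ν) ^ 2 / x) := by
    field_simp; ring
  rw [e] at h7
  have hY : 0 < (x - ν) ^ 2 / x := by
    have : 0 < x - ν := by linarith
    positivity
  have h8 : π * (1 / 4) ≤ 8 / (3 * π) := by
    rw [le_div_iff₀ (by positivity)]; nlinarith
  have h9 : π * (1 / 4 * ((x - ν) ^ 2 / x)) ≤ π * (bphase ν x * θ) := by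
    refine le_trans ?_ h7
    rw [← mul_assoc]; gcongr
  exact le_of_mul_le_mul_left h9 hpi

lemma pif_le_P {ν x : ℝ} (hν : 0 ≤ ν) (hx0 : 0 < x) : π * bphase ν x ≤ bP ν x := by
  rw [bphase_eq hx0]
  have := mul_nonneg hν (Real.arccos_nonneg (ν / x))
  linarith

lemma pif_le_cube {ν x : ℝ} (hν : 0 < ν) (hx : ν < x) : π * bphase ν x * (3 * ν ^ 2) ≤ bP ν x ^ 3 := by
  have hanti : AntitoneOn (fun t => (bP ν t - ν * Real.arccos (ν / t)) * (3 * ν ^ 2) - bP ν t ^ 3) (Icc ν x) := by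
    apply antitoneOn_of_hasDerivWithinAt_nonpos (convex_Icc ν x)
      (f' := fun t => bP ν t / t * (3 * ν ^ 2) - 3 * bP ν t ^ 2 * (t / bP ν t))
    · have h0 : ∀ t ∈ Icc ν x, t ≠ 0 := fun t ht => (hν.trans_le ht.1).ne'
      have h1 : Continuous (bP ν) := by unfold bP; fun_prop
      have h2 : ContinuousOn (fun t => Real.arccos (ν / t)) (Icc ν x) :=
        Real.continuous_arccos.comp_continuousOn (continuousOn_const.div continuousOn_id h0)
      fun_prop
    · intro t ht
      rw [interior_Icc] at ht
      have hp := (bphase_hasDerivAt hν.le ht.1).const_mul π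
      have hp' : HasDerivAt (fun t => bP ν t - ν * Real.arccos (ν / t)) (bP ν t / t) t := by
        have ht0 := hν.trans ht.1
        refine (hp.congr_of_eventuallyEq ?_).congr_deriv (by field_simp)
        filter_upwards [lt_mem_nhds ht0] with s hs
        rw [bphase_eq hs]
      exact ((hp'.mul_const _).sub ((bP_hasDerivAt hν.le ht.1).pow 3)).congr_deriv (by norm_num) |>.hasDerivWithinAt
    · intro t ht
      rw [interior_Icc] at ht
      have ht0 := hν.trans ht.1
      have hP := bP_pos hν.le ht.1
      have e : bP ν t / t * (3 * ν ^ 2) - 3 * bP ν t ^ 2 * (t / bP ν t) = -(3 * bP ν t / t * (t ^ 2 - ν ^ 2)) := by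
        field_simp
        ring
      rw [e]
      have : 0 ≤ 3 * bP ν t / t * (t ^ 2 - ν ^ 2) := by
        apply mul_nonneg (by positivity)
        nlinarith [ht.1]
      linarith
  have := hanti (left_mem_Icc.mpr hx.le) (right_mem_Icc.mpr hx.le) hx.le
  beta_reduce at this
  rw [← bphase_eq (hν.trans hx), ← bphase_eq hν, bphase_self hν] at this
  have hP : bP ν ν = 0 := by unfold bP; simp
  rw [hP] at this
  norm_num at this
  exact this

lemma bR_lt {ν x : ℝ} (hν : 0 < ν) (hx : ν < x) : bR ν x < 1 / bphase ν x := by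
  have hP := bP_pos hν.le hx
  have hf := bphase_pos hν.le hx
  have h1 := pif_le_P hν.le (hν.trans hx)
  have h2 := pif_le_cube hν hx
  have hpi := Real.pi_gt_three
  have a1 : 9 / 4 / bP ν x ≤ 9 / 4 / (π * bphase ν x) := by gcongr
  have a2 : 5 / 12 * ν ^ 2 / bP ν x ^ 3 ≤ 5 / 36 / (π * bphase ν x) := by
    rw [div_le_div_iff₀ (by positivity) (by positivity)]
    nlinarith
  unfold bR
  have a3 : 9 / 4 / (π * bphase ν x) + 5 / 36 / (π * bphase ν x) < 1 / bphase ν x := by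
    rw [← add_div, div_lt_div_iff₀ (by positivity) hf]
    nlinarith
  linarith

lemma bP_cube_ge {ν x : ℝ} (hν : 0 < ν) (hx : ν < x) : x ^ 2 * bphase ν x ≤ bP ν x ^ 3 := by
  have hP := bP_pos hν.le hx
  have hf := bphase_pos hν.le hx
  have hx0 := hν.trans hx
  have hpi := Real.pi_gt_three
  have hsq := bP_sq hν.le hx.le
  rcases le_total (x / 2) ν with h | h
  · have h2 := pif_le_cube hν hx
    have h3 : x ^ 2 ≤ 4 * ν ^ 2 := by nlinarith
    have h4 : x ^ 2 * bphase ν x ≤ 4 * ν ^ 2 * bphase ν x := by gcongr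
    have h5 : 0 < ν ^ 2 * bphase ν x := by positivity
    nlinarith
  · have h1 := pif_le_P hν.le hx0
    have h2 : 3 / 4 * x ^ 2 ≤ bP ν x ^ 2 := by nlinarith
    have h3 : bphase ν x ≤ bP ν x / 3 := by nlinarith
    calc x ^ 2 * bphase ν x ≤ x ^ 2 * (bP ν x / 3) := by gcongr
      _ ≤ bP ν x ^ 2 * bP ν x := by nlinarith
      _ = _ := by ring

/-- main zero count estimate -/
lemma count_main {ν x : ℝ} (hν : 0 < ν) (hlaw : bLaw ν 0) (hx : ν < x) (hf : 32 ≤ bphase ν x) :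
    (zcount ν x : ℝ) ≤ bF ν x + 4 / bphase ν x ∧ bF ν x - 4 / bphase ν x < zcount ν x + 1 := by
  have hR := bR_lt hν hx
  have hf0 : 0 < bphase ν x := by linarith
  have hR2 : 1 / bphase ν x ≤ 1 / 32 := by gcongr
  have e4 : 4 / bphase ν x = 4 * (1 / bphase ν x) := by ring
  rw [e4]
  set r := 1 / bphase ν x
  have h := hlaw x hx (by linarith)
  set k := round (bF ν x) with hk
  have hr := abs_le.mp (abs_sub_round (bF ν x))
  rw [← hk] at hr
  have h2 := (h k).2 (by linarith) (by linarith)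
  have hRp := bR_pos hν.le hx
  have cast1 : (k : ℝ) - 1 ≤ zcount ν x := by
    have := h2.1
    have : ((k - 1 + 0 : ℤ) : ℝ) ≤ ((zcount ν x : ℤ) : ℝ) := by exact_mod_cast this
    push_cast at this; linarith
  have cast2 : (zcount ν x : ℝ) ≤ k := by
    have := h2.2
    have : ((zcount ν x : ℤ) : ℝ) ≤ ((k + 0 : ℤ) : ℝ) := by exact_mod_cast this
    push_cast at this; linarith
  constructor
  · by_cases hc : bF ν x < k - 4 * r
    · have h3 := (h (k - 1)).1 (by push_cast; linarith) (by push_cast; linarith)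
      have : ((zcount ν x : ℤ) : ℝ) = ((k - 1 + 0 : ℤ) : ℝ) := by exact_mod_cast h3
      push_cast at this; linarith
    · linarith
  · by_cases hc : bF ν x < k + 4 * r
    · linarith
    · have h3 := (h k).1 (by linarith) (by linarith)
      have : ((zcount ν x : ℤ) : ℝ) = ((k + 0 : ℤ) : ℝ) := by exact_mod_cast h3
      push_cast at this; linarith

lemma bF_incr {ν x x' : ℝ} (hν : 0 ≤ ν) (hx : ν < x) (h : x ≤ x') :
    (x' - x) * (bP ν x / (π * x')) ≤ bF ν x' - bF ν x := by
  have hx0 := hν.trans_lt hx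
  have := le_of_deriv_nonpos (f := fun t => t * (bP ν x / (π * x')) - bF ν t) h
    (fun t ht => ((hasDerivAt_id t).mul_const _).sub
      ((bphase_hasDerivAt hν (hx.trans_le ht.1)).add_const (1 / 4))) (by
    intro t ht
    have h1 := bP_mono hν hx ht.1
    have ht0 := hx0.trans_le ht.1
    have hP := bP_pos hν hx
    have hPt := bP_pos hν (hx.trans_le ht.1)
    have : bP ν x / (π * x') ≤ bP ν t / (π * t) := by
      have := ht.2
      gcongr
    linarith)
  beta_reduce at this
  linarith

lemma bF_decr_nu {ν ν' x : ℝ} (hν : 0 ≤ ν) (h : ν ≤ ν') (hx : ν' < x) :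
    (ν' - ν) * (Real.arccos (ν' / x) / π) ≤ bphase ν x - bphase ν' x := by
  have hx0 := (hν.trans h).trans_lt hx
  have hpi := Real.pi_pos
  have := le_of_deriv_nonpos (f := fun t => t * (Real.arccos (ν' / x) / π) + bphase t x) h
    (fun t ht => ((hasDerivAt_id t).mul_const _).add
      (bphase_hasDerivAt_nu (hν.trans ht.1) (ht.2.trans_lt hx))) (by
    intro t ht
    have h1 : Real.arccos (ν' / x) ≤ Real.arccos (t / x) := by
      apply Real.antitone_arccos
      gcongr
      exact ht.2
    have : Real.arccos (ν' / x) / π ≤ Real.arccos (t / x) / π := by gcongr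
    rw [neg_div]
    linarith)
  beta_reduce at this
  linarith

/-- the fibre count of the lattice points -/
noncomputable def latw (ν μ : ℝ) : ℕ := if ν < μ then ⌊bF ν μ⌋₊ else 0

lemma latw_mono {ν x x' : ℝ} (hν : 0 ≤ ν) (h : x ≤ x') : latw ν x ≤ latw ν x' := by
  unfold latw
  split_ifs with h1 h2
  · exact Nat.floor_le_floor (bF_mono hν h1 h)
  · exact absurd (h1.trans_le h) h2
  · exact Nat.zero_le _
  · exact le_rfl

lemma bF_pos {ν x : ℝ} (hν : 0 ≤ ν) (hx : ν < x) : 0 < bF ν x := by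
  have := bphase_pos hν hx
  unfold bF; linarith

lemma latw_bounds {ν x : ℝ} (hν : 0 ≤ ν) (hx : ν < x) : (latw ν x : ℝ) ≤ bF ν x ∧ bF ν x < latw ν x + 1 := by
  unfold latw
  rw [if_pos hx]
  exact ⟨Nat.floor_le (bF_pos hν hx).le, Nat.lt_floor_add_one _⟩

lemma le_latw {ν x : ℝ} (hν : 0 ≤ ν) (hx : ν < x) {k : ℕ} (h : (k : ℝ) ≤ bF ν x) : k ≤ latw ν x := by
  unfold latw
  rw [if_pos hx]
  exact Nat.le_floor h

/-- region I: the shift absorbs the error -/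
lemma region_one {ν μ p : ℝ} (hν : 0 < ν) (hlaw : bLaw ν 0) (hx : ν < μ) (hp : 3 ≤ p)
    (hμ : μ = p ^ 7) (hf : p ^ 4 ≤ bphase ν μ) :
    |(zcount ν μ : ℝ) - latw ν μ| ≤ latw ν (μ + 26 / p ^ 3) - latw ν (μ - 26 / p ^ 3) := by
  have hp0 : 0 < p := by linarith
  have hμ0 : 0 < μ := hν.trans hx
  have hp4 : (81 : ℝ) ≤ p ^ 4 := by
    calc (81 : ℝ) = 3 ^ 4 := by norm_num
      _ ≤ p ^ 4 := by gcongr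
  have hpi := Real.pi_pos
  have hpi2 : π < 3.15 := Real.pi_lt_d2
  set f := bphase ν μ with hfdef
  have hf0 : 0 < f := by linarith
  set P := bP ν μ with hPdef
  have hP0 : 0 < P := bP_pos hν.le hx
  have hP6 : p ^ 6 ≤ P := by
    have h1 := bP_cube_ge hν hx
    have h2 : (p ^ 6) ^ 3 ≤ P ^ 3 := by
      refine le_trans ?_ h1
      calc (p ^ 6) ^ 3 = (p ^ 7) ^ 2 * p ^ 4 := by ring
        _ ≤ μ ^ 2 * f := by rw [hμ]; gcongr
    exact le_of_pow_le_pow_left₀ (by norm_num) hP0.le h2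
  set η := 26 / p ^ 3 with hη
  have hη0 : 0 < η := by positivity
  have hημ : μ * η = 26 * p ^ 4 := by rw [hμ, hη]; field_simp
  have hPsq : P ^ 2 = μ ^ 2 - ν ^ 2 := bP_sq hν.le hx.le
  have hP12 : 81 * 81 * p ^ 4 ≤ P ^ 2 := by
    calc 81 * 81 * p ^ 4 ≤ p ^ 4 * p ^ 4 * p ^ 4 := by gcongr
      _ = (p ^ 6) ^ 2 := by ring
      _ ≤ P ^ 2 := by gcongr
  have hημ' : η < μ := by
    have h27 : (27 : ℝ) ≤ p ^ 3 := by
      calc (27 : ℝ) = 3 ^ 3 := by norm_num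
        _ ≤ p ^ 3 := by gcongr
    have h1 : η < 1 := by rw [hη, div_lt_one (by positivity)]; linarith
    have h2 : (1 : ℝ) ≤ p ^ 7 := one_le_pow₀ (by linarith)
    linarith
  have hlow : ν ^ 2 + P ^ 2 / 4 ≤ (μ - η) ^ 2 := by nlinarith [sq_nonneg η]
  have hνη : ν < μ - η := by
    refine lt_of_pow_lt_pow_left₀ 2 (by linarith) ?_
    nlinarith [sq_pos_of_pos hP0]
  have hP' : P / 2 ≤ bP ν (μ - η) := by
    have h1 := bP_sq hν.le hνη.le
    have h2 := bP_pos hν.le hνη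
    refine le_of_sq_le_sq ?_ h2.le
    rw [h1]; nlinarith
  have key : 4 / f ≤ η * (P / (2 * π * μ)) := by
    rw [div_le_iff₀ hf0]
    have : η * (P / (2 * π * μ)) * f = η * P * f / (2 * π * μ) := by ring
    rw [this, le_div_iff₀ (by positivity)]
    have h1 : 26 * μ ≤ η * P * f := by
      calc 26 * μ = η * p ^ 6 * p ^ 4 := by rw [hμ, hη]; field_simp
        _ ≤ η * P * f := by gcongr
    nlinarith
  have hup := bF_incr hν.le hx (show μ ≤ μ + η by linarith)
  have hdn := bF_incr hν.le hνη (show μ - η ≤ μ by linarith)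
  have hup2 : 4 / f ≤ bF ν (μ + η) - bF ν μ := by
    refine le_trans key (le_trans ?_ hup)
    rw [add_sub_cancel_left]
    have : π * (μ + η) ≤ 2 * π * μ := by nlinarith
    gcongr
  have hdn2 : 4 / f ≤ bF ν μ - bF ν (μ - η) := by
    refine le_trans key (le_trans ?_ hdn)
    rw [sub_sub_cancel]
    have : P / (2 * π * μ) = (P / 2) / (π * μ) := by field_simp
    rw [this]
    gcongr
  obtain ⟨c1, c2⟩ := count_main hν hlaw hx (by linarith)
  have hνp : ν < μ + η := by linarith
  have a1 : zcount ν μ ≤ latw ν (μ + η) := le_latw hν.le hνp (by linarith)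
  have a2 : latw ν (μ - η) ≤ zcount ν μ := by
    have := (latw_bounds hν.le hνη).1
    have h : (latw ν (μ - η) : ℝ) < zcount ν μ + 1 := by linarith
    exact Nat.lt_succ_iff.mp (by exact_mod_cast h)
  have a3 : latw ν μ ≤ latw ν (μ + η) := latw_mono hν.le (by linarith)
  have a4 : latw ν (μ - η) ≤ latw ν μ := latw_mono hν.le (by linarith)
  have b1 : (zcount ν μ : ℝ) ≤ latw ν (μ + η) := by exact_mod_cast a1
  have b2 : (latw ν (μ - η) : ℝ) ≤ zcount ν μ := by exact_mod_cast a2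
  have b3 : (latw ν μ : ℝ) ≤ latw ν (μ + η) := by exact_mod_cast a3
  have b4 : (latw ν (μ - η) : ℝ) ≤ latw ν μ := by exact_mod_cast a4
  rw [abs_le]
  constructor <;> linarith

/-- a uniform bound for the discrepancy of one order -/
lemma diff_le_forty {ν μ : ℝ} (hν : 0 < ν) (hlaw : bLaw ν 0) (hx : ν < μ) :
    |(zcount ν μ : ℝ) - latw ν μ| ≤ 40 := by
  obtain ⟨w1, w2⟩ := latw_bounds hν.le hx
  have n0 : (0 : ℝ) ≤ zcount ν μ := Nat.cast_nonneg _
  have w0 : (0 : ℝ) ≤ latw ν μ := Nat.cast_nonneg _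
  rw [abs_le]
  by_cases hf : 32 ≤ bphase ν μ
  · obtain ⟨c1, c2⟩ := count_main hν hlaw hx hf
    have : 4 / bphase ν μ ≤ 1 := by rw [div_le_one (by linarith)]; linarith
    constructor <;> linarith
  · push Not at hf
    obtain ⟨x', h1, h2⟩ := bF_reach hν.le hx (T := 32 + 1 / 4) (by unfold bF; linarith)
    have hfx : bphase ν x' = 32 := by unfold bF at h2; linarith
    obtain ⟨c1, c2⟩ := count_main hν hlaw (hx.trans_le h1) hfx.ge
    rw [hfx, h2] at c1
    have hz : (zcount ν μ : ℝ) ≤ zcount ν x' := by exact_mod_cast zcount_mono hν.le h1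
    have hF : bF ν μ ≤ 32 + 1 / 4 := by unfold bF; linarith
    constructor <;> linarith

/-- if the two counts differ, the phase is close to an integer -/
lemma diff_near_int {ν μ : ℝ} (hν : 0 < ν) (hlaw : bLaw ν 0) (hx : ν < μ) (hf : 32 ≤ bphase ν μ)
    (hne : zcount ν μ ≠ latw ν μ) :
    bF ν μ - 4 / bphase ν μ < (⌊bF ν μ + 4 / bphase ν μ⌋₊ : ℝ) ∧
      (⌊bF ν μ + 4 / bphase ν μ⌋₊ : ℝ) ≤ bF ν μ + 4 / bphase ν μ := by
  have hF := bF_pos hν.le hx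
  have h4 : 0 < 4 / bphase ν μ := by have : 0 < bphase ν μ := by linarith
                                     positivity
  refine ⟨?_, Nat.floor_le (by linarith)⟩
  by_contra hc
  push Not at hc
  obtain ⟨c1, c2⟩ := count_main hν hlaw hx hf
  obtain ⟨w1, w2⟩ := latw_bounds hν.le hx
  set k := ⌊bF ν μ + 4 / bphase ν μ⌋₊ with hk
  apply hne
  have e1 : zcount ν μ ≤ k := Nat.le_floor c1
  have e2 : k ≤ zcount ν μ := by
    have : (k : ℝ) < zcount ν μ + 1 := by linarith
    exact Nat.lt_succ_iff.mp (by exact_mod_cast this)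
  have e3 : k ≤ latw ν μ := le_latw hν.le hx (by linarith)
  have e4 : latw ν μ ≤ k := Nat.le_floor (by linarith)
  omega

lemma card_le_of_diam (s : Finset ℕ) (Y : ℕ) (h : ∀ a ∈ s, ∀ b ∈ s, a ≤ b → b ≤ a + Y) :
    s.card ≤ Y + 1 := by
  rcases s.eq_empty_or_nonempty with rfl | hs
  · simp
  · have : s ⊆ Finset.Icc (s.min' hs) (s.min' hs + Y) := by
      intro b hb
      rw [Finset.mem_Icc]
      exact ⟨s.min'_le b hb, h _ (s.min'_mem hs) b hb (s.min'_le b hb)⟩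
    refine (Finset.card_le_card this).trans ?_
    rw [Nat.card_Icc]; omega

/-- the orders of the Bessel functions of the ball -/
noncomputable def ordB (d n : ℕ) : ℝ := (n : ℝ) + (d : ℝ) / 2 - 1

lemma ordB_pos {d : ℕ} (hd : 3 ≤ d) (n : ℕ) : 0 < ordB d n := by
  unfold ordB
  have : (3 : ℝ) ≤ d := by exact_mod_cast hd
  have : (0 : ℝ) ≤ n := Nat.cast_nonneg n
  linarith

lemma ordB_ge {d : ℕ} (hd : 3 ≤ d) (n : ℕ) : (n : ℝ) + 1 / 2 ≤ ordB d n := by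
  unfold ordB
  have : (3 : ℝ) ≤ d := by exact_mod_cast hd
  linarith

lemma ordB_sub (d a b : ℕ) : ordB d b - ordB d a = (b : ℝ) - a := by
  unfold ordB; ring

lemma law_ordB {d : ℕ} (hd : 3 ≤ d) (n : ℕ) : bLaw (ordB d n) 0 := law_ball d n hd

/-- region II facts -/
lemma region_two {ν μ p : ℝ} (hν : 0 < ν) (hp : 210 ≤ p) (hμ : μ = p ^ 7) (h : ν ≤ μ - p ^ 4) :
    ν < μ ∧ 32 ≤ bphase ν μ ∧ 4 / bphase ν μ ≤ 16 * Real.arccos (ν / μ) := by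
  have hp0 : 0 < p := by linarith
  have hp4 : 0 < p ^ 4 := by positivity
  have hx : ν < μ := by linarith
  have hμ0 : 0 < μ := hν.trans hx
  have h1 := bphase_mul_theta hν.le hx
  obtain ⟨t0, t1⟩ := arccos_bounds hν.le hx
  have hf0 := bphase_pos hν.le hx
  have hpi2 : π < 3.15 := Real.pi_lt_d2
  set θ := Real.arccos (ν / μ) with hθ
  have h2 : p ≤ (μ - ν) ^ 2 / μ := by
    rw [le_div_iff₀ hμ0]
    calc p * μ = (p ^ 4) ^ 2 := by rw [hμ]; ring
      _ ≤ (μ - ν) ^ 2 := by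
        have : p ^ 4 ≤ μ - ν := by linarith
        gcongr
  have h3 : 1 / 4 * p ≤ bphase ν μ * θ := by linarith
  refine ⟨hx, ?_, ?_⟩
  · by_contra hc
    push Not at hc
    have : bphase ν μ * θ ≤ 32 * (π / 2) := by gcongr
    linarith
  · rw [div_le_iff₀ hf0]
    nlinarith

lemma bad_three (d : ℕ) (μ Y : ℝ) (s : Finset ℕ)
    (hs : ∀ n ∈ s, ordB d n < μ ∧ μ - Y < ordB d n) : s.card ≤ ⌊Y⌋₊ + 1 := by
  apply card_le_of_diam
  intro a ha b hb hab
  have h1 := hs a ha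
  have h2 := hs b hb
  have h3 := ordB_sub d a b
  have h4 : ((b - a : ℕ) : ℝ) ≤ Y := by
    rw [Nat.cast_sub hab]; linarith
  have := Nat.le_floor h4
  omega

lemma bad_two {d : ℕ} (hd : 3 ≤ d) {μ p : ℝ} (hp : 210 ≤ p) (hμ : μ = p ^ 7) (s : Finset ℕ)
    (hs : ∀ n ∈ s, ordB d n ≤ μ - p ^ 4 ∧ bphase (ordB d n) μ < p ^ 4 ∧
      zcount (ordB d n) μ ≠ latw (ordB d n) μ) : s.card ≤ 102 * (⌊p ^ 4⌋₊ + 2) := by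
  have hp0 : 0 < p := by linarith
  have hpi := Real.pi_pos
  have hpi2 : π < 3.15 := Real.pi_lt_d2
  set K : ℕ → ℕ := fun n => ⌊bF (ordB d n) μ + 4 / bphase (ordB d n) μ⌋₊ with hK
  have hmaps : ∀ n ∈ s, K n ∈ Finset.range (⌊p ^ 4⌋₊ + 2) := by
    intro n hn
    obtain ⟨h1, h2, h3⟩ := hs n hn
    obtain ⟨g1, g2, g3⟩ := region_two (ordB_pos hd n) hp hμ h1
    have h4 : 4 / bphase (ordB d n) μ ≤ 1 / 8 := by
      rw [div_le_iff₀ (by linarith)]; linarith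
    have h5 : bF (ordB d n) μ + 4 / bphase (ordB d n) μ ≤ p ^ 4 + 1 := by
      unfold bF; linarith
    have h6 := Nat.floor_le_floor h5
    rw [Nat.floor_add_one (by positivity)] at h6
    rw [Finset.mem_range]
    simp only [hK]
    omega
  have hfib : ∀ k ∈ Finset.range (⌊p ^ 4⌋₊ + 2), (s.filter (fun n => K n = k)).card ≤ 102 := by
    intro k _
    refine card_le_of_diam _ 101 ?_
    intro a ha b hb hab
    rw [Finset.mem_filter] at ha hb
    obtain ⟨a1, a2, a3⟩ := hs a ha.1
    obtain ⟨b1, b2, b3⟩ := hs b hb.1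
    obtain ⟨ga1, ga2, ga3⟩ := region_two (ordB_pos hd a) hp hμ a1
    obtain ⟨gb1, gb2, gb3⟩ := region_two (ordB_pos hd b) hp hμ b1
    have na := diff_near_int (ordB_pos hd a) (law_ordB hd a) ga1 ga2 a3
    have nb := diff_near_int (ordB_pos hd b) (law_ordB hd b) gb1 gb2 b3
    have ka := ha.2
    have kb := hb.2
    simp only [hK] at ka kb
    rw [ka] at na
    rw [kb] at nb
    have hsub := ordB_sub d a b
    have hab' : (a : ℝ) ≤ b := by exact_mod_cast hab
    have hle : ordB d a ≤ ordB d b := by linarith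
    have hdec := bF_decr_nu (ordB_pos hd a).le hle gb1
    rw [hsub] at hdec
    obtain ⟨t0, t1⟩ := arccos_bounds (ordB_pos hd b).le gb1
    set θ := Real.arccos (ordB d b / μ) with hθ
    have hbpos : 0 < bphase (ordB d b) μ := by linarith
    have hmono : bphase (ordB d b) μ ≤ bphase (ordB d a) μ := by
      have : 0 ≤ ((b : ℝ) - a) * (θ / π) := by
        have : 0 ≤ (b : ℝ) - a := by linarith
        positivity
      linarith
    have h4 : 4 / bphase (ordB d a) μ ≤ 4 / bphase (ordB d b) μ := by gcongr
    have h5 : bphase (ordB d a) μ - bphase (ordB d b) μ ≤ 32 * θ := by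
      have e1 := na.1
      have e2 := nb.2
      unfold bF at e1 e2
      linarith
    have h6 : ((b : ℝ) - a) * (θ / π) ≤ 32 * θ := by linarith
    have h7 : ((b : ℝ) - a) / π ≤ 32 := by
      refine le_of_mul_le_mul_right (a := θ) ?_ t0
      calc _ = ((b : ℝ) - a) * (θ / π) := by ring
        _ ≤ _ := h6
    rw [div_le_iff₀ hpi] at h7
    have h8 : (b : ℝ) < a + 101 + 1 := by linarith
    have : b < a + 101 + 1 := by exact_mod_cast h8
    omega
  have := Finset.card_le_mul_card_image_of_maps_to hmaps 102 hfib
  rwa [Finset.card_range] at this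

lemma bad_card {d : ℕ} (hd : 3 ≤ d) {μ p : ℝ} (hp : 210 ≤ p) (hμ : μ = p ^ 7) (s : Finset ℕ)
    (hs : ∀ n ∈ s, ordB d n < μ ∧ bphase (ordB d n) μ < p ^ 4 ∧
      zcount (ordB d n) μ ≠ latw (ordB d n) μ) : (s.card : ℝ) ≤ 500 * p ^ 4 := by
  have h1 := bad_two hd hp hμ (s.filter (fun n => ordB d n ≤ μ - p ^ 4)) (by
    intro n hn
    rw [Finset.mem_filter] at hn
    exact ⟨hn.2, (hs n hn.1).2⟩)
  have h2 := bad_three d μ (p ^ 4) (s.filter (fun n => ¬ ordB d n ≤ μ - p ^ 4)) (by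
    intro n hn
    rw [Finset.mem_filter] at hn
    exact ⟨(hs n hn.1).1, not_le.mp hn.2⟩)
  have h3 := Finset.card_filter_add_card_filter_not (s := s) (fun n => ordB d n ≤ μ - p ^ 4)
  have h4 : s.card ≤ 103 * ⌊p ^ 4⌋₊ + 205 := by omega
  have h5 : (s.card : ℝ) ≤ 103 * (⌊p ^ 4⌋₊ : ℝ) + 205 := by exact_mod_cast h4
  have h6 : (⌊p ^ 4⌋₊ : ℝ) ≤ p ^ 4 := Nat.floor_le (by positivity)
  have h7 : (1 : ℝ) ≤ p ^ 4 := one_le_pow₀ (by linarith)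
  linarith

lemma mem_fibre {d : ℕ} (hd : 3 ≤ d) (n k : ℕ) (x : ℝ) :
    (1 ≤ k ∧ (n : ℝ) + (d : ℝ) / 2 - 1 ≤ x ∧
      (k : ℝ) - 1 / 4 ≤ x * gfun (((n : ℝ) + (d : ℝ) / 2 - 1) / x)) ↔
      1 ≤ k ∧ k ≤ latw (ordB d n) x := by
  have hν := ordB_pos hd n
  change (1 ≤ k ∧ ordB d n ≤ x ∧ (k : ℝ) - 1 / 4 ≤ bphase (ordB d n) x) ↔ _
  constructor
  · rintro ⟨h1, h2, h3⟩
    refine ⟨h1, ?_⟩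
    rcases h2.eq_or_lt with h | h
    · rw [← h, bphase_self hν] at h3
      have : (1 : ℝ) ≤ k := by exact_mod_cast h1
      linarith
    · exact le_latw hν.le h (by unfold bF; linarith)
  · rintro ⟨h1, h2⟩
    have hx : ordB d n < x := by
      by_contra hc
      unfold latw at h2
      rw [if_neg hc] at h2
      omega
    have h3 := (latw_bounds hν.le hx).1
    have h4 : (k : ℝ) ≤ latw (ordB d n) x := by exact_mod_cast h2
    unfold bF at h3
    exact ⟨h1, hx.le, by linarith⟩

lemma latticeW_eq {d : ℕ} (hd : 3 ≤ d) (l L : ℕ) {x : ℝ} (hx : x ≤ L) :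
    latticeW d l x = ∑ n ∈ Finset.Ico l L, latw (ordB d n) x := by
  classical
  set T : Finset (Σ _ : ℕ, ℕ) := (Finset.Ico l L).sigma (fun n => Finset.Icc 1 (latw (ordB d n) x))
    with hT
  have hS : {p : ℤ × ℤ | (l : ℤ) ≤ p.1 ∧ 1 ≤ p.2 ∧ (p.1 : ℝ) + (d : ℝ) / 2 - 1 ≤ x ∧
      (p.2 : ℝ) - 1 / 4 ≤ x * gfun (((p.1 : ℝ) + (d : ℝ) / 2 - 1) / x)} =
      ((T.image (fun q => ((q.1 : ℤ), (q.2 : ℤ))) : Finset (ℤ × ℤ)) : Set (ℤ × ℤ)) := by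
    ext ⟨a, b⟩
    simp only [mem_ofPred_eq, Finset.coe_image, Set.mem_image, SetLike.mem_coe, hT, Finset.mem_sigma,
      Finset.mem_Ico, Finset.mem_Icc, Prod.mk.injEq]
    constructor
    · rintro ⟨h1, h2, h3, h4⟩
      lift a to ℕ using by omega
      lift b to ℕ using by omega
      rw [Int.cast_natCast] at h3 h4
      rw [Int.cast_natCast] at h4
      have h5 := (mem_fibre hd a b x).mp ⟨by omega, h3, h4⟩
      refine ⟨⟨a, b⟩, ⟨⟨by exact_mod_cast h1, ?_⟩, h5⟩, rfl, rfl⟩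
      have h6 := ordB_ge hd a
      have h7 : ordB d a ≤ x := h3
      have h8 : (a : ℝ) < L := by linarith
      exact_mod_cast h8
    · rintro ⟨⟨n, k⟩, ⟨⟨h1, h2⟩, h3⟩, rfl, rfl⟩
      obtain ⟨g1, g2, g3⟩ := (mem_fibre hd n k x).mpr h3
      refine ⟨by exact_mod_cast h1, by exact_mod_cast g1, ?_, ?_⟩
      · rw [Int.cast_natCast]; exact g2
      · rw [Int.cast_natCast, Int.cast_natCast]; exact g3
  unfold latticeW
  rw [hS, Set.ncard_coe_finset, Finset.card_image_of_injective, hT, Finset.card_sigma]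
  · simp
  · rintro ⟨a, b⟩ ⟨a', b'⟩ h
    simp only [Prod.mk.injEq, Nat.cast_inj] at h
    obtain ⟨rfl, rfl⟩ := h
    rfl

lemma sum_multBdiff (d n : ℕ) : ∑ l ∈ Finset.range (n + 1), multBdiff d l = (multB d n : ℤ) := by
  induction n with
  | zero => simp [multBdiff]
  | succ n ih => rw [Finset.sum_range_succ, ih]; simp [multBdiff]

lemma latticeWtot_eq {d : ℕ} (hd : 3 ≤ d) (L : ℕ) {x : ℝ} (hx : x ≤ L) :
    latticeWtot d x = ∑ n ∈ Finset.range L, (multB d n : ℝ) * (latw (ordB d n) x : ℝ) := by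
  unfold latticeWtot
  rw [tsum_eq_sum (s := Finset.range L)]
  · have h1 : ∀ l, (latticeW d l x : ℝ) = ∑ n ∈ Finset.Ico l L, (latw (ordB d n) x : ℝ) := by
      intro l; rw [latticeW_eq hd l L hx]; push_cast; rfl
    simp_rw [h1, Finset.mul_sum]
    rw [Finset.range_eq_Ico, Finset.sum_Ico_Ico_comm]
    refine Finset.sum_congr rfl fun n _ => ?_
    rw [← Finset.sum_mul, ← Finset.range_eq_Ico]
    congr 1
    have := sum_multBdiff d n
    exact_mod_cast this
  · intro l hl
    rw [Finset.mem_range, not_lt] at hl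
    rw [latticeW_eq hd l L hx, Finset.Ico_eq_empty (by omega)]
    simp

lemma zcount_zero {ν x : ℝ} (hν : 0 < ν) (h : x ≤ ν) : zcount ν x = 0 := by
  unfold zcount
  rw [Set.ncard_eq_zero (bessel_zeros_finite hν.le x)]
  ext t
  simp only [mem_ofPred_eq, mem_empty_iff_false, iff_false]
  rintro ⟨h0, h1, h2⟩
  exact bessel_no_zero hν h0 (h1.trans h) h2

lemma nB_eq {d : ℕ} (hd : 3 ≤ d) (L : ℕ) {x : ℝ} (hx : x ≤ L) :
    (∑' n : ℕ, (multB d n : ℝ) * (zcount ((n : ℝ) + (d : ℝ) / 2 - 1) x : ℝ)) =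
      ∑ n ∈ Finset.range L, (multB d n : ℝ) * (zcount (ordB d n) x : ℝ) := by
  rw [tsum_eq_sum (s := Finset.range L)]
  · rfl
  · intro n hn
    rw [Finset.mem_range, not_lt] at hn
    have h1 := ordB_ge hd n
    have h2 : (L : ℝ) ≤ n := by exact_mod_cast hn
    have h3 : zcount ((n : ℝ) + (d : ℝ) / 2 - 1) x = 0 := by
      change zcount (ordB d n) x = 0
      exact zcount_zero (ordB_pos hd n) (by linarith)
    rw [h3]; simp

lemma latw_zero {ν x : ℝ} (h : x ≤ ν) : latw ν x = 0 := by
  unfold latw; rw [if_neg (not_lt.mpr h)]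

lemma multB_le {d : ℕ} (hd : 3 ≤ d) (n : ℕ) : multB d n ≤ 2 * (n + d) ^ (d - 2) := by
  obtain ⟨e, rfl⟩ := Nat.exists_eq_add_of_le hd
  have h1 : n + (3 + e) - 1 = n + e + 1 + 1 := by omega
  have h2 : 3 + e - 1 = e + 1 + 1 := by omega
  have h3 : n + (3 + e) - 3 = n + e := by omega
  have h4 : 3 + e - 2 = e + 1 := by omega
  unfold multB
  rw [h1, h2, h3, h4, Nat.choose_succ_succ (n + e + 1) (e + 1), Nat.choose_succ_succ (n + e) (e + 1)]
  have a1 : (n + e + 1).choose (e + 1) ≤ (n + (3 + e)) ^ (e + 1) :=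
    (Nat.choose_le_pow _ _).trans (Nat.pow_le_pow_left (by omega) _)
  have a2 : (n + e).choose (e + 1) ≤ (n + (3 + e)) ^ (e + 1) :=
    (Nat.choose_le_pow _ _).trans (Nat.pow_le_pow_left (by omega) _)
  simp only [Nat.succ_eq_add_one]
  omega

lemma latticeWtot_mono {d : ℕ} (hd : 3 ≤ d) {x x' : ℝ} (h : x ≤ x') :
    latticeWtot d x ≤ latticeWtot d x' := by
  obtain ⟨L, hL⟩ := exists_nat_ge x'
  rw [latticeWtot_eq hd L (h.trans hL), latticeWtot_eq hd L hL]
  refine Finset.sum_le_sum fun n _ => ?_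
  have : (latw (ordB d n) x : ℝ) ≤ latw (ordB d n) x' := by
    exact_mod_cast latw_mono (ordB_pos hd n).le h
  gcongr

lemma large_mu {d : ℕ} (hd : 3 ≤ d) {μ p : ℝ} (hp : 210 ≤ p) (hμ : μ = p ^ 7) :
    |(∑' n : ℕ, (multB d n : ℝ) * (zcount ((n : ℝ) + (d : ℝ) / 2 - 1) μ : ℝ)) - latticeWtot d μ| ≤
      latticeWtot d (μ + 26 / p ^ 3) - latticeWtot d (μ - 26 / p ^ 3) +
        40000 * (1 + (d : ℝ)) ^ (d - 2) * (μ ^ (d - 2) * p ^ 4) := by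
  classical
  have hp0 : 0 < p := by linarith
  have hμ1 : 1 ≤ μ := by rw [hμ]; exact one_le_pow₀ (by linarith)
  have hη : 0 < 26 / p ^ 3 := by positivity
  obtain ⟨L, hL⟩ := exists_nat_ge (μ + 26 / p ^ 3)
  rw [nB_eq hd L (by linarith), latticeWtot_eq hd L (x := μ) (by linarith), latticeWtot_eq hd L hL,
    latticeWtot_eq hd L (x := μ - 26 / p ^ 3) (by linarith), ← Finset.sum_sub_distrib,
    ← Finset.sum_sub_distrib]
  set Bad := (Finset.range L).filter (fun n => ordB d n < μ ∧ bphase (ordB d n) μ < p ^ 4 ∧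
      zcount (ordB d n) μ ≠ latw (ordB d n) μ) with hBad
  have hcard := bad_card hd hp hμ Bad (fun n hn => by
    rw [hBad, Finset.mem_filter] at hn; exact hn.2)
  set M : ℝ := 2 * ((1 + (d : ℝ)) * μ) ^ (d - 2) with hM
  have hM0 : 0 ≤ M := by positivity
  have hterm : ∀ n ∈ Finset.range L,
      |(multB d n : ℝ) * (zcount (ordB d n) μ : ℝ) - (multB d n : ℝ) * (latw (ordB d n) μ : ℝ)| ≤
      ((multB d n : ℝ) * (latw (ordB d n) (μ + 26 / p ^ 3) : ℝ) -
        (multB d n : ℝ) * (latw (ordB d n) (μ - 26 / p ^ 3) : ℝ)) +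
        if n ∈ Bad then 40 * M else 0 := by
    intro n hn
    have hν := ordB_pos hd n
    have hm0 : (0 : ℝ) ≤ multB d n := Nat.cast_nonneg _
    have hw : (latw (ordB d n) (μ - 26 / p ^ 3) : ℝ) ≤ latw (ordB d n) (μ + 26 / p ^ 3) := by
      exact_mod_cast latw_mono hν.le (by linarith)
    rw [← mul_sub, ← mul_sub, abs_mul, abs_of_nonneg hm0]
    have hw' : 0 ≤ (multB d n : ℝ) * ((latw (ordB d n) (μ + 26 / p ^ 3) : ℝ) -
        latw (ordB d n) (μ - 26 / p ^ 3)) := mul_nonneg hm0 (by linarith)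
    by_cases hb : n ∈ Bad
    · rw [if_pos hb]
      rw [hBad, Finset.mem_filter] at hb
      have h40 := diff_le_forty hν (law_ordB hd n) hb.2.1
      have hnμ : (n : ℝ) ≤ μ := by linarith [ordB_ge hd n, hb.2.1]
      have hmM : (multB d n : ℝ) ≤ M := by
        have h1 : (multB d n : ℝ) ≤ 2 * ((n : ℝ) + d) ^ (d - 2) := by
          exact_mod_cast multB_le hd n
        refine h1.trans ?_
        rw [hM]
        have hd0 : (0 : ℝ) ≤ d := Nat.cast_nonneg d
        have : (n : ℝ) + d ≤ (1 + (d : ℝ)) * μ := by nlinarith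
        gcongr
      have : (multB d n : ℝ) * |(zcount (ordB d n) μ : ℝ) - latw (ordB d n) μ| ≤ M * 40 := by
        gcongr
      linarith
    · rw [if_neg hb, add_zero]
      by_cases h1 : ordB d n < μ
      · by_cases h2 : bphase (ordB d n) μ < p ^ 4
        · have h3 : zcount (ordB d n) μ = latw (ordB d n) μ := by
            by_contra h3
            exact hb (by rw [hBad, Finset.mem_filter]; exact ⟨hn, h1, h2, h3⟩)
          rw [h3, sub_self, abs_zero, mul_zero]; exact hw'
        · push Not at h2
          have := region_one hν (law_ordB hd n) h1 (by linarith) hμ h2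
          gcongr
      · push Not at h1
        rw [zcount_zero hν h1, latw_zero h1, sub_self, abs_zero, mul_zero]; exact hw'
  refine (Finset.abs_sum_le_sum_abs _ _).trans ((Finset.sum_le_sum hterm).trans ?_)
  rw [Finset.sum_add_distrib]
  refine add_le_add le_rfl ?_
  rw [Finset.sum_ite_mem, Finset.sum_const, nsmul_eq_mul]
  have hInt0 : Finset.range L ∩ Bad = Bad :=
    Finset.inter_eq_right.mpr (Finset.filter_subset _ _)
  rw [hInt0]
  calc (Bad.card : ℝ) * (40 * M) ≤ 500 * p ^ 4 * (40 * M) := by gcongr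
    _ = _ := by rw [hM, mul_pow]; ring

lemma small_mu {d : ℕ} (hd : 3 ≤ d) (L : ℕ) {μ : ℝ} (hμ : μ ≤ L) :
    |(∑' n : ℕ, (multB d n : ℝ) * (zcount ((n : ℝ) + (d : ℝ) / 2 - 1) μ : ℝ)) - latticeWtot d μ| ≤
      ∑ n ∈ Finset.range L, (multB d n : ℝ) * ((zcount (ordB d n) L : ℝ) + latw (ordB d n) L) := by
  rw [nB_eq hd L hμ, latticeWtot_eq hd L hμ, ← Finset.sum_sub_distrib]
  refine (Finset.abs_sum_le_sum_abs _ _).trans (Finset.sum_le_sum fun n _ => ?_)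
  have hν := ordB_pos hd n
  have hm0 : (0 : ℝ) ≤ multB d n := Nat.cast_nonneg _
  rw [← mul_sub, abs_mul, abs_of_nonneg hm0]
  have h1 : (zcount (ordB d n) μ : ℝ) ≤ zcount (ordB d n) L := by
    exact_mod_cast zcount_mono hν.le hμ
  have h2 : (latw (ordB d n) μ : ℝ) ≤ latw (ordB d n) L := by
    exact_mod_cast latw_mono hν.le hμ
  have h3 : (0 : ℝ) ≤ zcount (ordB d n) μ := Nat.cast_nonneg _
  have h4 : (0 : ℝ) ≤ latw (ordB d n) μ := Nat.cast_nonneg _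
  have : |(zcount (ordB d n) μ : ℝ) - latw (ordB d n) μ| ≤
      (zcount (ordB d n) L : ℝ) + latw (ordB d n) L := by
    rw [abs_le]; constructor <;> linarith
  gcongr

/-- comparison of the eigenvalue counting function `𝒩_B(μ)` with the weighted
lattice count `𝒲(μ)`. -/
theorem eigenvalue_count_vs_weighted_lattice_count (d : ℕ) (hd : 3 ≤ d) :
    ∃ C C' : ℝ, 0 < C ∧ 0 < C' ∧ ∀ μ : ℝ, 2 ≤ μ →
      |(∑' n : ℕ, (multB d n : ℝ) * (zcount ((n : ℝ) + (d : ℝ) / 2 - 1) μ : ℝ)) -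
          latticeWtot d μ| ≤
        latticeWtot d (μ + C * μ ^ (-(3 : ℝ) / 7)) -
          latticeWtot d (μ - C * μ ^ (-(3 : ℝ) / 7)) + C' * μ ^ ((d : ℝ) - 2 + 4 / 7) := by
  obtain ⟨L, hL⟩ := exists_nat_ge ((210 : ℝ) ^ 7)
  set B : ℝ := ∑ n ∈ Finset.range L,
    (multB d n : ℝ) * ((zcount (ordB d n) L : ℝ) + latw (ordB d n) L) with hB
  have hB0 : 0 ≤ B := Finset.sum_nonneg fun n _ => by positivity
  set K : ℝ := 40000 * (1 + (d : ℝ)) ^ (d - 2) with hK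
  have hK0 : 0 < K := by positivity
  refine ⟨26, B + K, by norm_num, by linarith, fun μ hμ => ?_⟩
  have hμ0 : 0 < μ := by linarith
  set p : ℝ := μ ^ ((1 : ℝ) / 7) with hp
  have hp0 : 0 < p := Real.rpow_pos_of_pos hμ0 _
  have e7 : μ = p ^ 7 := by
    rw [hp, ← Real.rpow_natCast, ← Real.rpow_mul hμ0.le]; norm_num
  have e4 : μ ^ ((4 : ℝ) / 7) = p ^ 4 := by
    rw [hp, ← Real.rpow_natCast, ← Real.rpow_mul hμ0.le]; norm_num
  have e3 : 26 * μ ^ (-(3 : ℝ) / 7) = 26 / p ^ 3 := by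
    rw [hp, ← Real.rpow_natCast, ← Real.rpow_mul hμ0.le, div_eq_mul_inv (26 : ℝ), ← Real.rpow_neg hμ0.le]
    norm_num
  have ed : μ ^ ((d : ℝ) - 2 + 4 / 7) = μ ^ (d - 2) * p ^ 4 := by
    rw [Real.rpow_add hμ0, e4, ← Real.rpow_natCast μ, Nat.cast_sub (show 2 ≤ d by omega)]
    norm_num
  rw [e3, ed]
  have hX1 : 1 ≤ μ ^ (d - 2) * p ^ 4 := by
    rw [← ed]
    apply Real.one_le_rpow (by linarith)
    have : (3 : ℝ) ≤ d := by exact_mod_cast hd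
    linarith
  set X := μ ^ (d - 2) * p ^ 4 with hX
  by_cases hbig : 210 ≤ p
  · have := large_mu hd hbig e7
    rw [← hX, ← hK] at this
    nlinarith
  · push Not at hbig
    have hμL : μ ≤ L := by
      refine le_trans ?_ hL
      rw [e7]
      gcongr
    have h1 := small_mu hd L hμL
    rw [← hB] at h1
    have h2 : latticeWtot d (μ - 26 / p ^ 3) ≤ latticeWtot d (μ + 26 / p ^ 3) := by
      apply latticeWtot_mono hd
      have : 0 < 26 / p ^ 3 := by positivity
      linarith
    nlinarith
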